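/- Let β>0, f ∈ C¹([0,1]), and for each integer n≥2 let u_n ∈ PC_{1/n}(0,1) be a minimizer of DPMF_n(β,f,(0,1),·). Let x_n = k_n/n with k_n ∈ {0,…,n−1} and x_n → x_∞ ∈ (0,1), and define v_n(y) = (u_n(x_n + ω(n)y) − u_n(x_n))/ω(n). Set H = (1/(β|f′(x_∞)|²))^{1/3} and V = f′(x_∞)H (with the canonical (H,V)-staircase identically 0 when f′(x_∞)=0). Then the sequence {v_n} is relatively compact with respect to locally strict convergence in BV_loc(ℝ), and every limit point is a graph translation of horizontal type of the canonical (H,V)-staircase: for every sequence n_k → +∞ there exist a subsequence n_{k_h} and v_∞ ∈ Orz(H,V) such that v_{n_{k_h}} → v_∞ locally strictly in BV_loc(ℝ). -/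

import Mathlib

/-!
After the blow-up at scale `ω(n)`, a minimizer is a function `W` on a grid of mesh `δ(n)` that is a
local minimizer (`LocMin`) of the discrete energy
`∑ log (1 + (jump / δ) ^ 2) / log n + β δ ∑ (W - m) ^ 2`, where the forcing term `m` is, on bounded
windows, close to a line of slope `M = f' x_∞` (`dpmf_blow`, `locMin_blow`, `near_blow`). The
properties that matter for the limit are collected in the structure `BlowUp`, and they hold by
`blowUp_minimizers`.

*A priori estimates.* A jump of order one costs asymptotically `4 / 3`, independently of its height
(`BlowUp.jcost_upper`, `BlowUp.jcost_lower`). Comparison with a staircase bounds the energy on every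
window (`BlowUp.energy_bound`), truncation then bounds `W` (`BlowUp.sup_bound`), and jumps larger
than `√δ` are separated and bounded away from zero (`BlowUp.separation`). All the other jumps
together carry a vanishing variation (`BlowUp.small_var`), so that `W` is asymptotically constant
between big jumps.

*Rigidity, `M ≠ 0`.* A plateau of length `x` costs at least `4 / 3 + β M ^ 2 x ^ 3 / 12`, plus a
penalty if its height is not the value of the line at the midpoint (`BlowUp.plateau_energy`). The
cost per unit length has a unique minimum at `x = ℓ` with `β M ^ 2 ℓ ^ 3 = 8`, that is `ℓ = 2 H`. On
an interval of length `L` between big jumps, these lower bounds add up to `β M ^ 2 ℓ ^ 2 L / 4`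
(`BlowUp.chain_lower`), while comparison with a staircase of `⌈L / ℓ⌉` equal steps exceeds that
value by `O(1 / L)` only (`BlowUp.chain_upper`). Since any plateau belongs to intervals with `L`
arbitrarily large, every plateau is asymptotically optimal (`BlowUp.rigid_energy`,
`BlowUp.rigidity`): big jumps are at distance `ℓ`, and the plateaus are centred on the line.

*Convergence, `M ≠ 0`.* The only free parameter is the position of the first jump, which converges
along a subsequence (`BlowUp.exists_firstJump`). Then `W` converges at every point that is not a
jump of the limit staircase, and since all big jumps have the sign of `M`, the total variations
converge too (`BlowUp.var_bound`, `locStrict_of`).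

*The case `M = 0`.* The energy is bounded uniformly on arbitrarily long windows, hence `W` is small
at some cell on either side of a given one, and truncation makes it small in between
(`BlowUp.flat_sup`). The number of big jumps is bounded, so the variation vanishes in the limit
(`BlowUp.flat_var`).
-/

open MeasureTheory Filter Set

namespace PeronaMalik

/-- `a_{δ,*} = δ⌊a/δ⌋`, the lower `δ`-approximation of `a`. -/
noncomputable def lowGrid (δ a : ℝ) : ℝ := δ * (⌊a / δ⌋ : ℤ)

/-- `b_δ^* = δ⌈b/δ⌉`, the upper `δ`-approximation of `b`. -/
noncomputable def highGrid (δ b : ℝ) : ℝ := δ * (⌈b / δ⌉ : ℤ)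

/-- `u` is piecewise constant at scale `δ`: constant on every interval `[zδ, (z+1)δ)`. -/
def IsPC (δ : ℝ) (u : ℝ → ℝ) : Prop :=
  ∀ z : ℤ, ∀ x ∈ Set.Ico ((z : ℝ) * δ) (((z : ℝ) + 1) * δ), u x = u ((z : ℝ) * δ)

/-- Discrete derivative `D^δ u (x) = (u(x+δ) - u(x))/δ`. -/
noncomputable def Dd (δ : ℝ) (u : ℝ → ℝ) (x : ℝ) : ℝ := (u (x + δ) - u x) / δ

/-- The discrete Perona–Malik functional with fidelity term on `(a,b)`. -/
noncomputable def DPMF (n : ℕ) (β : ℝ) (f : ℝ → ℝ) (a b : ℝ) (u : ℝ → ℝ) : ℝ :=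
  (∫ x in lowGrid (1 / (n : ℝ)) a..(highGrid (1 / (n : ℝ)) b - 1 / (n : ℝ)),
      Real.log (1 + (Dd (1 / (n : ℝ)) u x) ^ 2)) +
    β * ∫ x in a..b, (u x - f x) ^ 2

/-- `u` is a minimizer of `DPMF n β f (0,1)` over `PC_{1/n}(0,1)`. -/
def IsMinimizer (n : ℕ) (β : ℝ) (f : ℝ → ℝ) (u : ℝ → ℝ) : Prop :=
  IsPC (1 / (n : ℝ)) u ∧
    ∀ v : ℝ → ℝ, IsPC (1 / (n : ℝ)) v → DPMF n β f 0 1 u ≤ DPMF n β f 0 1 v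

/-- `m(n,β,f)`, the minimum value of the discrete Perona–Malik functional. -/
noncomputable def mval (n : ℕ) (β : ℝ) (f : ℝ → ℝ) : ℝ :=
  sInf ((fun u => DPMF n β f 0 1 u) '' {u | IsPC (1 / (n : ℝ)) u})

/-- `ω(n) = (log n / n)^{1/3}`. -/
noncomputable def omg (n : ℕ) : ℝ := (Real.log n / n) ^ ((1 : ℝ) / 3)

/-- `δ(n) = 1/(n ω(n))`. -/
noncomputable def dlt (n : ℕ) : ℝ := 1 / ((n : ℝ) * omg n)

/-- The rescaled discrete Perona–Malik functional. -/
noncomputable def RDPM (n : ℕ) (a b : ℝ) (u : ℝ → ℝ) : ℝ :=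
  (1 / omg n ^ 2) *
    ∫ x in lowGrid (dlt n) a..(highGrid (dlt n) b - dlt n),
      Real.log (1 + (Dd (dlt n) u x) ^ 2)

/-- The rescaled discrete Perona–Malik functional with fidelity term. -/
noncomputable def RDPMF (n : ℕ) (β : ℝ) (f : ℝ → ℝ) (a b : ℝ) (u : ℝ → ℝ) : ℝ :=
  RDPM n a b u + β * ∫ x in Set.Ioo a b, (u x - f x) ^ 2

/-- `u` is a step function with finitely many jumps on `(a,b)`. -/
def IsStep (a b : ℝ) (u : ℝ → ℝ) : Prop :=
  ∃ (s : Finset ℝ) (c : ℝ) (J : ℝ → ℝ),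
    (∀ p ∈ s, p ∈ Set.Ioo a b ∧ J p ≠ 0) ∧
    ∀ x ∈ Set.Ioo a b, u x = c + ∑ p ∈ s, (if p ≤ x then J p else 0)

/-- The set of jump (discontinuity) points of `u` inside `(a,b)`. -/
def jumpSet (a b : ℝ) (u : ℝ → ℝ) : Set ℝ :=
  {x ∈ Set.Ioo a b | ¬ ContinuousAt u x}

/-- The limit functional `JF(α,β,f,(a,b),u) = α·#jumps + β∫(u-f)²`. -/
noncomputable def JF (α β : ℝ) (f : ℝ → ℝ) (a b : ℝ) (u : ℝ → ℝ) : ℝ :=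
  α * ((jumpSet a b u).ncard : ℝ) + β * ∫ x in Set.Ioo a b, (u x - f x) ^ 2

/-- Strict convergence in `BV((a,b))`: `L¹` convergence plus convergence of
total variations. -/
def StrictBV (useq : ℕ → ℝ → ℝ) (u : ℝ → ℝ) (a b : ℝ) : Prop :=
  Tendsto (fun k => ∫ x in Set.Ioo a b, |useq k x - u x|) atTop (nhds 0) ∧
  Tendsto (fun k => eVariationOn (useq k) (Set.Ioo a b)) atTop
    (nhds (eVariationOn u (Set.Ioo a b)))

/-- Locally strict convergence in `BV_loc(ℝ)`: strict convergence on every bounded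
interval whose endpoints are not jump points of the limit. -/
def LocStrictBV (useq : ℕ → ℝ → ℝ) (u : ℝ → ℝ) : Prop :=
  ∀ a b : ℝ, a < b → ContinuousAt u a → ContinuousAt u b → StrictBV useq u a b

/-- `S(x) = 2⌊(x+1)/2⌋`. -/
noncomputable def stairS (x : ℝ) : ℝ := 2 * (⌊(x + 1) / 2⌋ : ℤ)

/-- The canonical `(H,V)`-staircase `S_{H,V}(x) = V·S(x/H)`. -/
noncomputable def canStair (H V : ℝ) (x : ℝ) : ℝ := V * stairS (x / H)

/-- Oblique translations of the canonical `(H,V)`-staircase. -/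
def Obl (H V : ℝ) (v : ℝ → ℝ) : Prop :=
  ∃ τ ∈ Set.Icc (-1 : ℝ) 1, ∀ x, v x = canStair H V (x - H * τ) + V * τ

/-- Graph translations of horizontal type of the canonical `(H,V)`-staircase. -/
def Orz (H V : ℝ) (v : ℝ → ℝ) : Prop :=
  ∃ τ ∈ Set.Icc (-1 : ℝ) 1, ∀ x, v x = canStair H V (x - H * τ)

/-- `μ_n(β,L,M)`: minimum of the rescaled functional with affine forcing term. -/
noncomputable def muDisc (n : ℕ) (β L M : ℝ) : ℝ :=
  sInf ((fun u => RDPMF n β (fun x => M * x) 0 L u) '' {u | IsPC (dlt n) u})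

/-- `μ*_n(β,L,M)`: same as `μ_n` but with boundary conditions `u(0)=0`, `u(L^*)=ML`. -/
noncomputable def muDiscStar (n : ℕ) (β L M : ℝ) : ℝ :=
  sInf ((fun u => RDPMF n β (fun x => M * x) 0 L u) ''
    {u | IsPC (dlt n) u ∧ u 0 = 0 ∧ u (highGrid (dlt n) L - dlt n) = M * L})

/-- `μ(α,β,L,M)`: minimum of the limit functional with affine forcing term. -/
noncomputable def muLim (α β L M : ℝ) : ℝ :=
  sInf ((fun u => JF α β (fun x => M * x) 0 L u) '' {u | IsStep 0 L u})

/-- `μ*(α,β,L,M)`: same as `μ` but with boundary values `u(0⁺)=0`, `u(L⁻)=ML`. -/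
noncomputable def muLimStar (α β L M : ℝ) : ℝ :=
  sInf ((fun u => JF α β (fun x => M * x) 0 L u) ''
    {u | IsStep 0 L u ∧ Tendsto u (nhdsWithin 0 (Set.Ioi 0)) (nhds 0) ∧
         Tendsto u (nhdsWithin L (Set.Iio L)) (nhds (M * L))})

/-- `u` and `v` have the same boundary values `u(a⁺)=v(a⁺)`, `u(b⁻)=v(b⁻)`. -/
def SameBdry (a b : ℝ) (u v : ℝ → ℝ) : Prop :=
  (∀ c : ℝ, Tendsto v (nhdsWithin a (Set.Ioi a)) (nhds c) →
     Tendsto u (nhdsWithin a (Set.Ioi a)) (nhds c)) ∧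
  (∀ c : ℝ, Tendsto v (nhdsWithin b (Set.Iio b)) (nhds c) →
     Tendsto u (nhdsWithin b (Set.Iio b)) (nhds c))

/-- `v` is a local minimizer for `JF(α,β,f,(a,b),·)` among step functions with the
same boundary values. -/
def IsLocalMinJF (α β : ℝ) (f : ℝ → ℝ) (a b : ℝ) (v : ℝ → ℝ) : Prop :=
  IsStep a b v ∧
  ∀ u : ℝ → ℝ, IsStep a b u → SameBdry a b u v → JF α β f a b v ≤ JF α β f a b u

/-- `v` is an entire local minimizer for `JF(α,β,f,·,·)`. -/
def IsEntireLocalMinJF (α β : ℝ) (f : ℝ → ℝ) (v : ℝ → ℝ) : Prop :=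
  ∀ a b : ℝ, a < b → IsLocalMinJF α β f a b v

/-- `v` is a local minimizer for `RDPMF_n(β,f,(a,b),·)` among piecewise constant
functions with the same boundary values. -/
def IsLocalMinRDPMF (n : ℕ) (β : ℝ) (f : ℝ → ℝ) (a b : ℝ) (v : ℝ → ℝ) : Prop :=
  IsPC (dlt n) v ∧
  ∀ u : ℝ → ℝ, IsPC (dlt n) u →
    u (lowGrid (dlt n) a) = v (lowGrid (dlt n) a) →
    u (highGrid (dlt n) b - dlt n) = v (highGrid (dlt n) b - dlt n) →
    RDPMF n β f a b v ≤ RDPMF n β f a b u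

/-! ### Discrete energies and explicit competitors -/

/-- Cost of a jump of height `t` between two neighbouring cells of the rescaled grid of mesh `δ`,
with `Λ` in the role of `log n`. -/
noncomputable def jcost (δ Λ t : ℝ) : ℝ := Real.log (1 + (t / δ) ^ 2) / Λ

/-- Contribution of the cell `l` to the rescaled energy of the grid function `Z`: the jump that
enters the cell plus the fidelity to the cell average `m l` of the forcing term. -/
noncomputable def cellEn (δ Λ β : ℝ) (m Z : ℤ → ℝ) (l : ℤ) : ℝ :=
  jcost δ Λ (Z l - Z (l - 1)) + β * δ * (Z l - m l) ^ 2

/-- Rescaled energy of the grid function `Z` on the cells `p, …, q - 1`. -/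
noncomputable def locEn (δ Λ β : ℝ) (m Z : ℤ → ℝ) (p q : ℤ) : ℝ :=
  ∑ l ∈ Finset.Ico p q, cellEn δ Λ β m Z l

/-- `W` is minimal with respect to modifications in cells `p, …, q - 1` of the window `[-R, R]`.
The last jump, from cell `q - 1` to cell `q`, is counted as well. -/
def LocMin (δ Λ β : ℝ) (m W : ℤ → ℝ) (R : ℝ) : Prop :=
  ∀ p q : ℤ, p < q → |(p : ℝ) * δ| ≤ R → |(q : ℝ) * δ| ≤ R → ∀ Z : ℤ → ℝ,
    (∀ l, l < p ∨ q ≤ l → Z l = W l) →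
    locEn δ Λ β m W p q + jcost δ Λ (W q - W (q - 1)) ≤
      locEn δ Λ β m Z p q + jcost δ Λ (W q - Z (q - 1))

lemma jcost_nonneg {δ Λ : ℝ} (hΛ : 0 ≤ Λ) (t : ℝ) : 0 ≤ jcost δ Λ t :=
  div_nonneg (Real.log_nonneg (by nlinarith [sq_nonneg (t / δ)])) hΛ

lemma jcost_zero (δ Λ : ℝ) : jcost δ Λ 0 = 0 := by simp [jcost]

lemma jcost_mono {δ Λ : ℝ} (hΛ : 0 ≤ Λ) {s t : ℝ} (h : |s| ≤ |t|) :
    jcost δ Λ s ≤ jcost δ Λ t := by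
  unfold jcost
  have h1 : (s / δ) ^ 2 ≤ (t / δ) ^ 2 := by
    rw [div_pow, div_pow]
    exact div_le_div_of_nonneg_right (sq_le_sq.mpr h) (sq_nonneg _)
  have h2 : (0 : ℝ) < 1 + (s / δ) ^ 2 := by positivity
  exact div_le_div_of_nonneg_right (Real.log_le_log h2 (by linarith)) hΛ

lemma jcost_two {δ Λ : ℝ} (hΛ : 0 ≤ Λ) {s t : ℝ} (h : |s| ≤ 2 * |t|) :
    jcost δ Λ s ≤ jcost δ Λ t + Real.log 4 / Λ := by
  have h0 : |s| ≤ |2 * t| := by rwa [abs_mul, abs_two]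
  refine (jcost_mono hΛ h0).trans ?_
  unfold jcost
  rw [← add_div, ← Real.log_mul (by positivity) (by norm_num)]
  refine div_le_div_of_nonneg_right (Real.log_le_log (by positivity) ?_) hΛ
  have : (2 * t / δ) ^ 2 = 4 * (t / δ) ^ 2 := by ring
  rw [this]; linarith

lemma sum_Ico_split (F : ℤ → ℝ) {p q r : ℤ} (h1 : p ≤ q) (h2 : q ≤ r) :
    ∑ l ∈ Finset.Ico p r, F l = ∑ l ∈ Finset.Ico p q, F l + ∑ l ∈ Finset.Ico q r, F l := by
  rw [← Finset.Ico_union_Ico_eq_Ico h1 h2, Finset.sum_union]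
  rw [Finset.disjoint_left]
  intro a ha hb
  simp only [Finset.mem_Ico] at ha hb
  omega

lemma locEn_add {δ Λ β : ℝ} {m Z : ℤ → ℝ} {p q r : ℤ} (h1 : p ≤ q) (h2 : q ≤ r) :
    locEn δ Λ β m Z p r = locEn δ Λ β m Z p q + locEn δ Λ β m Z q r :=
  sum_Ico_split _ h1 h2

lemma cellEn_nonneg {δ Λ β : ℝ} (hδ : 0 ≤ δ) (hΛ : 0 ≤ Λ) (hβ : 0 ≤ β) (m Z : ℤ → ℝ) (l : ℤ) :
    0 ≤ cellEn δ Λ β m Z l := by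
  have := jcost_nonneg (δ := δ) hΛ (Z l - Z (l - 1))
  unfold cellEn; positivity

lemma locEn_nonneg {δ Λ β : ℝ} (hδ : 0 ≤ δ) (hΛ : 0 ≤ Λ) (hβ : 0 ≤ β) (m Z : ℤ → ℝ) (p q : ℤ) :
    0 ≤ locEn δ Λ β m Z p q :=
  Finset.sum_nonneg fun l _ => cellEn_nonneg hδ hΛ hβ m Z l

lemma sum_Ico_succ (F : ℤ → ℝ) {p q : ℤ} (h : p ≤ q) :
    ∑ l ∈ Finset.Ico p (q + 1), F l = ∑ l ∈ Finset.Ico p q, F l + F q := by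
  rw [sum_Ico_split F h (by omega : q ≤ q + 1)]
  congr 1
  have : Finset.Ico q (q + 1) = {q} := by ext x; simp only [Finset.mem_Ico, Finset.mem_singleton]; omega
  rw [this, Finset.sum_singleton]

/-- Fidelity of a constant plateau `c` to the line of slope `M`: the variance of the line on the
plateau plus the squared distance of `c` from the value of the line at the midpoint. -/
lemma plateau_sum (c M δ : ℝ) {p q : ℤ} (h : p ≤ q) :
    ∑ l ∈ Finset.Ico p q, (c - M * (((l : ℝ) + 1 / 2) * δ)) ^ 2 =
      ((q : ℝ) - p) * (c - M * (((p : ℝ) + q) / 2 * δ)) ^ 2 +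
        M ^ 2 * δ ^ 2 * (((q : ℝ) - p) ^ 3 - ((q : ℝ) - p)) / 12 := by
  induction q, h using Int.leInduction with
  | base => simp
  | succ q hq ih =>
    rw [sum_Ico_succ _ hq, ih]
    push_cast
    ring

lemma card_Ico_cast {p q : ℤ} (h : p ≤ q) : ((Finset.Ico p q).card : ℝ) = (q : ℝ) - p := by
  rw [Int.card_Ico]
  have : (((q - p).toNat : ℤ) : ℝ) = ((q - p : ℤ) : ℝ) := by rw [Int.toNat_of_nonneg (by omega)]
  push_cast at this
  exact_mod_cast this

/-- The staircase with plateaus of `h` cells starting at cell `p` that follows the line of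
slope `M`. -/
noncomputable def gridStair (M δ : ℝ) (p h l : ℤ) : ℝ :=
  M * (((p : ℝ) + h * (((l - p) / h : ℤ) : ℝ) + h / 2) * δ)

lemma gridStair_eq {M δ : ℝ} {p h l j : ℤ} (hh : 0 < h) (h1 : p + j * h ≤ l)
    (h2 : l < p + (j + 1) * h) :
    gridStair M δ p h l = M * (((p : ℝ) + h * j + h / 2) * δ) := by
  have : (l - p) / h = j := by
    apply le_antisymm
    · have := (Int.ediv_lt_iff_lt_mul (a := l - p) (b := j + 1) hh).mpr (by linarith)
      omega
    · exact (Int.le_ediv_iff_mul_le hh).mpr (by linarith)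
  rw [gridStair, this]

/-- Energy of a grid staircase, per plateau. -/
lemma gridStair_energy {δ Λ β : ℝ} (hδ : 0 ≤ δ) (hβ : 0 ≤ β) (M : ℝ) (p h : ℤ)
    (hh : 0 < h) (N : ℕ) :
    locEn δ Λ β (fun l => M * (((l : ℝ) + 1 / 2) * δ)) (gridStair M δ p h) p (p + N * h) ≤
      N * (jcost δ Λ (M * (h * δ)) + β * M ^ 2 / 12 * (h * δ) ^ 3) := by
  induction N with
  | zero => simp [locEn]
  | succ N ih =>
    have hN : (0 : ℤ) ≤ N * h := by positivity
    have e1 : p + ((N + 1 : ℕ) : ℤ) * h = p + N * h + h := by push_cast; ring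
    rw [e1, locEn_add (q := p + N * h) (by omega) (by omega)]
    set a := p + (N : ℤ) * h with ha
    have hc : ∀ l, a ≤ l → l < a + h →
        gridStair M δ p h l = M * (((a : ℝ) + (a + h : ℤ)) / 2 * δ) := by
      intro l h1 h2
      rw [gridStair_eq (j := (N : ℤ)) hh (by omega) (by linarith)]
      rw [ha]; push_cast; ring
    have hb : locEn δ Λ β (fun l => M * (((l : ℝ) + 1 / 2) * δ)) (gridStair M δ p h) a (a + h) ≤
        jcost δ Λ (M * (h * δ)) + β * M ^ 2 / 12 * (h * δ) ^ 3 := by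
      have key : ∀ l ∈ Finset.Ico a (a + h),
          cellEn δ Λ β (fun l => M * (((l : ℝ) + 1 / 2) * δ)) (gridStair M δ p h) l =
          (if a = l then jcost δ Λ (M * (h * δ)) else 0) + β * δ *
            (M * (((a : ℝ) + (a + h : ℤ)) / 2 * δ) - M * (((l : ℝ) + 1 / 2) * δ)) ^ 2 := by
        intro l hl
        rw [Finset.mem_Ico] at hl
        unfold cellEn
        rw [hc l hl.1 hl.2]
        congr 1
        split_ifs with hal
        · subst hal
          rw [gridStair_eq (j := (N : ℤ) - 1) hh (by rw [ha]; nlinarith) (by rw [ha]; nlinarith)]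
          congr 1
          rw [ha]; push_cast; ring
        · rw [hc (l - 1) (by omega) (by omega), sub_self, jcost_zero]
      unfold locEn
      rw [Finset.sum_congr rfl key, Finset.sum_add_distrib, Finset.sum_ite_eq, if_pos (by
        rw [Finset.mem_Ico]; omega), ← Finset.mul_sum, plateau_sum _ _ _ (by omega)]
      push_cast
      have hh' : (0 : ℝ) < h := by exact_mod_cast hh
      have : 0 ≤ β * δ * (M ^ 2 * δ ^ 2 * h / 12) := by positivity
      nlinarith
    push_cast
    linarith

/-- Comparison of a local minimizer with a grid staircase. -/
lemma stair_compare {δ Λ β R M ε : ℝ} {m W : ℤ → ℝ} (hδ : 0 ≤ δ) (hΛ : 0 ≤ Λ) (hβ : 0 ≤ β)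
    (hmin : LocMin δ Λ β m W R) {p q h : ℤ} {N : ℕ} (hpq : p < q) (hp : |(p : ℝ) * δ| ≤ R)
    (hq : |(q : ℝ) * δ| ≤ R) (hh : 0 < h) (hN : q - p ≤ N * h)
    (hm : ∀ l, p ≤ l → l < q → |m l - M * (((l : ℝ) + 1 / 2) * δ)| ≤ ε) :
    ∃ zp zq : ℝ, |zp| ≤ |M| * (R + h * δ) ∧ |zq| ≤ |M| * (R + h * δ) ∧
      locEn δ Λ β m W p q + jcost δ Λ (W q - W (q - 1)) ≤
        jcost δ Λ (zp - W (p - 1)) + jcost δ Λ (W q - zq) +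
        (N - 1) * jcost δ Λ (M * (h * δ)) + N * (β * M ^ 2 / 12 * (h * δ) ^ 3) +
        β * ((q - p) * δ) * (2 * (|M| * (h * δ)) * ε + ε ^ 2) := by
  have hε : 0 ≤ ε := (abs_nonneg _).trans (hm p le_rfl hpq)
  have hh' : (0 : ℝ) < h := by exact_mod_cast hh
  have hbd : ∀ l, p ≤ l → l < q → |gridStair M δ p h l| ≤ |M| * (R + h * δ) := by
    intro l h1 h2
    unfold gridStair
    rw [abs_mul]
    refine mul_le_mul_of_nonneg_left ?_ (abs_nonneg _)
    have e := Int.mul_ediv_add_emod (l - p) h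
    have e0 := Int.emod_nonneg (l - p) hh.ne'
    have h3 : 0 ≤ h * ((l - p) / h) := mul_nonneg hh.le (Int.ediv_nonneg (by omega) hh.le)
    have h3' : (0 : ℝ) ≤ h * (((l - p) / h : ℤ) : ℝ) := by exact_mod_cast h3
    have h4 : h * ((l - p) / h) ≤ q - p := by omega
    have h4' : (h : ℝ) * (((l - p) / h : ℤ) : ℝ) ≤ q - p := by exact_mod_cast h4
    rw [abs_le] at hp hq ⊢
    constructor
    · nlinarith [mul_nonneg h3' hδ, mul_nonneg hh'.le hδ]
    · nlinarith [mul_le_mul_of_nonneg_right h4' hδ, mul_nonneg hh'.le hδ]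
  have hdist : ∀ l : ℤ, |gridStair M δ p h l - M * (((l : ℝ) + 1 / 2) * δ)| ≤ |M| * (h * δ) := by
    intro l
    unfold gridStair
    rw [← mul_sub, abs_mul]
    refine mul_le_mul_of_nonneg_left ?_ (abs_nonneg _)
    have e := Int.mul_ediv_add_emod (l - p) h
    have e0 := Int.emod_nonneg (l - p) hh.ne'
    have e1 := Int.emod_lt_of_pos (l - p) hh
    have e' : (h : ℝ) * (((l - p) / h : ℤ) : ℝ) + ((l - p) % h : ℤ) = l - p := by exact_mod_cast e
    have e0' : (0 : ℝ) ≤ ((l - p) % h : ℤ) := by exact_mod_cast e0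
    have e1' : (((l - p) % h : ℤ) : ℝ) + 1 ≤ h := by exact_mod_cast e1
    rw [← sub_mul, abs_mul, abs_of_nonneg hδ]
    refine mul_le_mul_of_nonneg_right ?_ hδ
    rw [abs_le]; constructor <;> linarith
  refine ⟨gridStair M δ p h p, gridStair M δ p h (q - 1), hbd p le_rfl hpq,
    hbd (q - 1) (by omega) (by omega), ?_⟩
  have hm1 := hmin p q hpq hp hq (fun l => if p ≤ l ∧ l < q then gridStair M δ p h l else W l)
    (by intro l hl; rw [if_neg (by omega)])
  simp only [if_pos (show p ≤ q - 1 ∧ q - 1 < q by omega)] at hm1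
  refine hm1.trans ?_
  have hX : locEn δ Λ β m (fun l => if p ≤ l ∧ l < q then gridStair M δ p h l else W l) p q ≤
      locEn δ Λ β (fun l => M * (((l : ℝ) + 1 / 2) * δ)) (gridStair M δ p h) p q +
      β * ((q - p) * δ) * (2 * (|M| * (h * δ)) * ε + ε ^ 2) +
      (jcost δ Λ (gridStair M δ p h p - W (p - 1)) - jcost δ Λ (M * (h * δ))) := by
    have key : ∀ l ∈ Finset.Ico p q,
        cellEn δ Λ β m (fun l => if p ≤ l ∧ l < q then gridStair M δ p h l else W l) l ≤
        cellEn δ Λ β (fun l => M * (((l : ℝ) + 1 / 2) * δ)) (gridStair M δ p h) l +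
        β * δ * (2 * (|M| * (h * δ)) * ε + ε ^ 2) +
        (if p = l then jcost δ Λ (gridStair M δ p h p - W (p - 1)) - jcost δ Λ (M * (h * δ))
          else 0) := by
      intro l hl
      rw [Finset.mem_Ico] at hl
      unfold cellEn
      simp only [if_pos hl]
      have hf : β * δ * (gridStair M δ p h l - m l) ^ 2 ≤
          β * δ * (gridStair M δ p h l - M * (((l : ℝ) + 1 / 2) * δ)) ^ 2 +
          β * δ * (2 * (|M| * (h * δ)) * ε + ε ^ 2) := by
        rw [← mul_add]
        refine mul_le_mul_of_nonneg_left ?_ (by positivity)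
        have a1 := hdist l
        have a2 := hm l hl.1 hl.2
        set x := gridStair M δ p h l - M * (((l : ℝ) + 1 / 2) * δ)
        set y := m l - M * (((l : ℝ) + 1 / 2) * δ)
        have : gridStair M δ p h l - m l = x - y := by simp only [x, y]; ring
        rw [this]
        have b1 : -(x * y) ≤ |M| * (h * δ) * ε := by
          refine (neg_le_abs _).trans ?_
          rw [abs_mul]
          exact mul_le_mul a1 a2 (abs_nonneg _) (by positivity)
        have b2 : y ^ 2 ≤ ε ^ 2 := sq_le_sq' (by linarith [(abs_le.mp a2).1]) (abs_le.mp a2).2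
        nlinarith
      split_ifs with h1 h2 h2
      · omega
      · linarith
      · subst h2
        have : gridStair M δ p h p - gridStair M δ p h (p - 1) = M * (h * δ) := by
          rw [gridStair_eq (j := 0) hh (by omega) (by omega),
            gridStair_eq (j := -1) hh (by omega) (by omega)]
          push_cast; ring
        rw [this]; linarith
      · omega
    unfold locEn
    refine (Finset.sum_le_sum key).trans ?_
    rw [Finset.sum_add_distrib, Finset.sum_add_distrib, Finset.sum_ite_eq,
      if_pos (by rw [Finset.mem_Ico]; omega), Finset.sum_const, nsmul_eq_mul,
      card_Ico_cast hpq.le]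
    apply le_of_eq; ring
  have hY := gridStair_energy (Λ := Λ) hδ hβ M p h hh N
  have hZ : locEn δ Λ β (fun l => M * (((l : ℝ) + 1 / 2) * δ)) (gridStair M δ p h) p q ≤
      locEn δ Λ β (fun l => M * (((l : ℝ) + 1 / 2) * δ)) (gridStair M δ p h) p (p + N * h) := by
    rw [locEn_add (r := p + N * h) hpq.le (by omega)]
    have := locEn_nonneg hδ hΛ hβ (fun l => M * (((l : ℝ) + 1 / 2) * δ)) (gridStair M δ p h) q
      (p + N * h)
    linarith
  linarith

/-- Removing the lower of two jumps by shifting all the values in between. -/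
lemma shift_compare {δ Λ β R C s : ℝ} {m W : ℤ → ℝ} (hδ : 0 ≤ δ) (hΛ : 0 ≤ Λ) (hβ : 0 ≤ β)
    (hmin : LocMin δ Λ β m W R) {i j : ℤ} (hij : i < j) (hi : |(i : ℝ) * δ| ≤ R)
    (hj : |(j : ℝ) * δ| ≤ R) (hC : ∀ l, i ≤ l → l < j → |W l - m l| ≤ C)
    (hs : s = min |W i - W (i - 1)| |W j - W (j - 1)|) :
    jcost δ Λ s ≤ Real.log 4 / Λ + β * ((j - i) * δ) * (2 * C * s + s ^ 2) := by
  -- A shift by `t` of the cells `i, …, j - 1`; both cases below are instances.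
  have key : ∀ t : ℝ, |t| = s →
      jcost δ Λ (W i - W (i - 1)) + jcost δ Λ (W j - W (j - 1)) ≤
      jcost δ Λ (W i + t - W (i - 1)) + jcost δ Λ (W j - (W (j - 1) + t)) +
      β * ((j - i) * δ) * (2 * C * s + s ^ 2) := by
    intro t ht
    have hm1 := hmin i j hij hi hj (fun l => if i ≤ l ∧ l < j then W l + t else W l)
      (by intro l hl; rw [if_neg (by omega)])
    simp only [if_pos (show i ≤ j - 1 ∧ j - 1 < j by omega)] at hm1
    have hX : locEn δ Λ β m (fun l => if i ≤ l ∧ l < j then W l + t else W l) i j ≤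
        locEn δ Λ β m W i j + β * ((j - i) * δ) * (2 * C * s + s ^ 2) +
        (jcost δ Λ (W i + t - W (i - 1)) - jcost δ Λ (W i - W (i - 1))) := by
      have hcell : ∀ l ∈ Finset.Ico i j,
          cellEn δ Λ β m (fun l => if i ≤ l ∧ l < j then W l + t else W l) l ≤
          cellEn δ Λ β m W l + β * δ * (2 * C * s + s ^ 2) +
          (if i = l then jcost δ Λ (W i + t - W (i - 1)) - jcost δ Λ (W i - W (i - 1)) else 0) := by
        intro l hl
        rw [Finset.mem_Ico] at hl
        unfold cellEn
        simp only [if_pos hl]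
        have hf : β * δ * (W l + t - m l) ^ 2 ≤ β * δ * (W l - m l) ^ 2 +
            β * δ * (2 * C * s + s ^ 2) := by
          rw [← mul_add]
          refine mul_le_mul_of_nonneg_left ?_ (by positivity)
          have a1 := hC l hl.1 hl.2
          have b1 : (W l - m l) * t ≤ C * s := by
            refine (le_abs_self _).trans ?_
            rw [abs_mul, ht]
            exact mul_le_mul_of_nonneg_right a1 (ht ▸ abs_nonneg t)
          have b2 : t ^ 2 = s ^ 2 := by rw [← ht, sq_abs]
          nlinarith
        split_ifs with h1 h2 h2
        · omega
        · have : W l + t - (W (l - 1) + t) = W l - W (l - 1) := by ring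
          rw [this]; linarith
        · subst h2; linarith
        · omega
      unfold locEn
      refine (Finset.sum_le_sum hcell).trans ?_
      rw [Finset.sum_add_distrib, Finset.sum_add_distrib, Finset.sum_ite_eq,
        if_pos (by rw [Finset.mem_Ico]; omega), Finset.sum_const, nsmul_eq_mul,
        card_Ico_cast hij.le]
      apply le_of_eq; ring
    linarith
  rcases le_total |W i - W (i - 1)| |W j - W (j - 1)| with h | h
  · rw [min_eq_left h] at hs
    have h1 := key (-(W i - W (i - 1))) (by rw [abs_neg, hs])
    have e1 : W i + -(W i - W (i - 1)) - W (i - 1) = 0 := by ring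
    rw [e1, jcost_zero] at h1
    have h2 : jcost δ Λ (W j - (W (j - 1) + -(W i - W (i - 1)))) ≤
        jcost δ Λ (W j - W (j - 1)) + Real.log 4 / Λ := by
      apply jcost_two hΛ
      have : W j - (W (j - 1) + -(W i - W (i - 1))) = (W j - W (j - 1)) + (W i - W (i - 1)) := by
        ring
      rw [this]
      linarith [abs_add_le (W j - W (j - 1)) (W i - W (i - 1))]
    have h3 : jcost δ Λ s ≤ jcost δ Λ (W i - W (i - 1)) :=
      jcost_mono hΛ (by rw [hs, abs_abs])
    linarith
  · rw [min_eq_right h] at hs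
    have h1 := key (W j - W (j - 1)) hs.symm
    have e1 : W j - (W (j - 1) + (W j - W (j - 1))) = 0 := by ring
    rw [e1, jcost_zero] at h1
    have h2 : jcost δ Λ (W i + (W j - W (j - 1)) - W (i - 1)) ≤
        jcost δ Λ (W i - W (i - 1)) + Real.log 4 / Λ := by
      apply jcost_two hΛ
      have : W i + (W j - W (j - 1)) - W (i - 1) = (W i - W (i - 1)) + (W j - W (j - 1)) := by
        ring
      rw [this]
      linarith [abs_add_le (W i - W (i - 1)) (W j - W (j - 1))]
    have h3 : jcost δ Λ s ≤ jcost δ Λ (W j - W (j - 1)) :=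
      jcost_mono hΛ (by rw [hs, abs_abs])
    linarith

/-! ### A priori estimates for blow-ups -/

/-- The properties of the blow-ups used in the analysis of their limits. `δ n` is the rescaled
mesh, `Λ n` stands for `log n`, `W n` are the rescaled values of the minimizer, and `m n` are the
rescaled cell averages of the forcing term, which is asymptotically a line of slope `M`. -/
structure BlowUp (β M : ℝ) (δ Λ : ℕ → ℝ) (m W : ℕ → ℤ → ℝ) : Prop where
  β_pos : 0 < β
  δ_pos : ∀ᶠ n in atTop, 0 < δ n
  δ_lim : Tendsto δ atTop (nhds 0)
  Λ_lim : Tendsto Λ atTop atTop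
  ratio : Tendsto (fun n => Real.log (1 / δ n) / Λ n) atTop (nhds (2 / 3))
  sqrt_lim : Tendsto (fun n => √(δ n) * Λ n) atTop (nhds 0)
  near : ∀ R ε : ℝ, 0 < ε → ∀ᶠ n in atTop, ∀ l : ℤ, |(l : ℝ) * δ n| ≤ R →
    |m n l - M * (((l : ℝ) + 1 / 2) * δ n)| ≤ ε
  poly : ∀ R T : ℝ, ∀ᶠ n in atTop, ∀ l : ℤ, |(l : ℝ) * δ n| ≤ R → ∀ t : ℝ, |t| ≤ T →
    jcost (δ n) (Λ n) (t - W n l) ≤ 4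
  locmin : ∀ R : ℝ, ∀ᶠ n in atTop, LocMin (δ n) (Λ n) β (m n) (W n) R

/-- A jump is big when it exceeds the square root of the mesh. -/
def Big (δ : ℝ) (W : ℤ → ℝ) (l : ℤ) : Prop := √δ < |W l - W (l - 1)|

lemma window_mem {δ R : ℝ} (hδ : 0 ≤ δ) {p l q : ℤ} (hp : |(p : ℝ) * δ| ≤ R)
    (hq : |(q : ℝ) * δ| ≤ R) (h1 : p ≤ l) (h2 : l ≤ q) : |(l : ℝ) * δ| ≤ R := by
  have h1' : (p : ℝ) ≤ l := by exact_mod_cast h1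
  have h2' : (l : ℝ) ≤ q := by exact_mod_cast h2
  rw [abs_le] at *
  constructor
  · nlinarith [mul_le_mul_of_nonneg_right h1' hδ]
  · nlinarith [mul_le_mul_of_nonneg_right h2' hδ]

namespace BlowUp

variable {β M : ℝ} {δ Λ : ℕ → ℝ} {m W : ℕ → ℤ → ℝ}

lemma basic (h : BlowUp β M δ Λ m W) {d : ℝ} (hd : 0 < d) (L : ℝ) :
    ∀ᶠ n in atTop, 0 < δ n ∧ δ n ≤ d ∧ L ≤ Λ n := by
  filter_upwards [h.δ_pos, h.δ_lim.eventually (ge_mem_nhds hd), h.Λ_lim.eventually_ge_atTop L]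
    with n h1 h2 h3 using ⟨h1, h2, h3⟩

/-- With `jcost_lower`: a jump of order one costs asymptotically `4 / 3`, whatever its height, since
`log (1 / δ ^ 2) / Λ` tends to `4 / 3`. -/
lemma jcost_upper (h : BlowUp β M δ Λ m W) (C : ℝ) {ε : ℝ} (hε : 0 < ε) :
    ∀ᶠ n in atTop, ∀ t : ℝ, |t| ≤ C → jcost (δ n) (Λ n) t ≤ 4 / 3 + ε := by
  set C' := |C| + 1
  have hC' : 1 ≤ C' := by simp [C']
  have hlim : Tendsto (fun n => Real.log (2 * C' ^ 2) / Λ n + 2 * (Real.log (1 / δ n) / Λ n))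
      atTop (nhds (0 + 2 * (2 / 3))) :=
    (h.Λ_lim.const_div_atTop _).add (h.ratio.const_mul 2)
  have hev := hlim.eventually (ge_mem_nhds (show (0 : ℝ) + 2 * (2 / 3) < 4 / 3 + ε by linarith))
  filter_upwards [hev, h.basic one_pos 1] with n h1 ⟨h2, h3, h4⟩ t ht
  have hΛ : 0 < Λ n := by linarith
  have h5 : jcost (δ n) (Λ n) t ≤ jcost (δ n) (Λ n) C' :=
    jcost_mono hΛ.le (ht.trans (by
      rw [abs_of_nonneg (by linarith : (0 : ℝ) ≤ C')]; simp only [C']; linarith [le_abs_self C]))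
  refine h5.trans (le_trans ?_ h1)
  unfold jcost
  have e : Real.log (2 * C' ^ 2) / Λ n + 2 * (Real.log (1 / δ n) / Λ n) =
      Real.log (2 * C' ^ 2 * (1 / δ n) ^ 2) / Λ n := by
    rw [Real.log_mul (x := 2 * C' ^ 2) (y := (1 / δ n) ^ 2) (by positivity) (by positivity),
      Real.log_pow (1 / δ n) 2]
    push_cast; ring
  rw [e]
  refine div_le_div_of_nonneg_right (Real.log_le_log (by positivity) ?_) hΛ.le
  have : 1 ≤ 1 / δ n := by rw [le_div_iff₀ h2]; linarith
  have h6 : 1 ≤ C' * (1 / δ n) := by nlinarith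
  have e2 : C' / δ n = C' * (1 / δ n) := by ring
  rw [e2]
  nlinarith

lemma jcost_lower (h : BlowUp β M δ Λ m W) {c : ℝ} (hc : 0 < c) {ε : ℝ} (hε : 0 < ε) :
    ∀ᶠ n in atTop, ∀ t : ℝ, c ≤ |t| → 4 / 3 - ε ≤ jcost (δ n) (Λ n) t := by
  have hlim : Tendsto (fun n => Real.log (c ^ 2) / Λ n + 2 * (Real.log (1 / δ n) / Λ n))
      atTop (nhds (0 + 2 * (2 / 3))) :=
    (h.Λ_lim.const_div_atTop _).add (h.ratio.const_mul 2)
  have hev := hlim.eventually (le_mem_nhds (show 4 / 3 - ε < (0 : ℝ) + 2 * (2 / 3) by linarith))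
  filter_upwards [hev, h.basic one_pos 1] with n h1 ⟨h2, h3, h4⟩ t ht
  have hΛ : 0 < Λ n := by linarith
  refine h1.trans (le_trans ?_ (jcost_mono hΛ.le (s := c) (by rwa [abs_of_pos hc])))
  unfold jcost
  have e : Real.log (c ^ 2) / Λ n + 2 * (Real.log (1 / δ n) / Λ n) =
      Real.log (c ^ 2 * (1 / δ n) ^ 2) / Λ n := by
    rw [Real.log_mul (by positivity) (by positivity), Real.log_pow (1 / δ n)]; push_cast; ring
  rw [e]
  refine div_le_div_of_nonneg_right (Real.log_le_log (by positivity) ?_) hΛ.le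
  have : c ^ 2 * (1 / δ n) ^ 2 = (c / δ n) ^ 2 := by ring
  linarith

/-- Big jumps have a cost bounded away from zero, so that the energy controls their number. -/
lemma jcost_big (h : BlowUp β M δ Λ m W) :
    ∀ᶠ n in atTop, ∀ t : ℝ, √(δ n) < |t| → 1 / 2 ≤ jcost (δ n) (Λ n) t := by
  have hev := h.ratio.eventually (le_mem_nhds (show (1 / 2 : ℝ) < 2 / 3 by norm_num))
  filter_upwards [hev, h.basic one_pos 1] with n h1 ⟨h2, h3, h4⟩ t ht
  have hΛ : 0 < Λ n := by linarith
  refine h1.trans (le_trans ?_ (jcost_mono hΛ.le (s := √(δ n))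
    (by rw [abs_of_nonneg (Real.sqrt_nonneg _)]; exact ht.le)))
  unfold jcost
  refine div_le_div_of_nonneg_right (Real.log_le_log (by positivity) ?_) hΛ.le
  have : (√(δ n) / δ n) ^ 2 = 1 / δ n := by
    rw [div_pow, Real.sq_sqrt h2.le]; field_simp
  rw [this]; linarith

/-- A priori bound for the local energy. It does not depend on the window, grows at most linearly
with the length of the interval, and is uniform in the length when `M = 0`. -/
lemma energy_bound (h : BlowUp β M δ Λ m W) :
    ∃ D : ℝ, 0 ≤ D ∧ (M = 0 → D = 0) ∧ ∀ R : ℝ, ∀ᶠ n in atTop, ∀ p q : ℤ, p < q →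
      |(p : ℝ) * δ n| ≤ R → |(q : ℝ) * δ n| ≤ R →
      locEn (δ n) (Λ n) β (m n) (W n) p q ≤ 9 + D * (1 + (q - p) * δ n) := by
  have hβ := h.β_pos
  refine ⟨if M = 0 then 0 else 2 + β * M ^ 2, by split_ifs <;> positivity,
    fun hM => if_pos hM, fun R => ?_⟩
  -- `ε` makes the total fidelity error on the window at most `1`.
  set ε : ℝ := 1 / (β * (2 * (|R| + 1)) * (4 * |M| + 1) + 1) with hεdef
  have hε : 0 < ε := by positivity
  have hε1 : ε ≤ 1 := by
    rw [hεdef, div_le_one (by positivity)]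
    have : 0 ≤ β * (2 * (|R| + 1)) * (4 * |M| + 1) := by positivity
    linarith
  filter_upwards [h.basic one_pos 1, h.near R ε hε, h.locmin R,
    h.poly (R + 1) (|M| * (R + 2)), h.jcost_upper (2 * |M|) (show (0 : ℝ) < 2 / 3 by norm_num)]
    with n ⟨h1, h2, h3⟩ hnear hmin hpoly hup p q hpq hp hq
  have hΛ : 0 ≤ Λ n := by linarith
  have hR : 0 ≤ R := (abs_nonneg _).trans hp
  set d : ℤ := ⌈1 / δ n⌉ with hd
  have hd1 : 1 ≤ d * δ n := by
    have := Int.le_ceil (1 / δ n)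
    rwa [div_le_iff₀ h1] at this
  have hd2 : d * δ n ≤ 2 := by
    have := (Int.ceil_lt_add_one (1 / δ n)).le
    have := mul_le_mul_of_nonneg_right this h1.le
    rw [add_mul, div_mul_cancel₀ _ h1.ne'] at this
    linarith
  have hdpos : 0 < d := Int.ceil_pos.mpr (by positivity)
  set N : ℕ := ((q - p) / d).toNat + 1 with hN
  have hq0 : 0 ≤ (q - p) / d := Int.ediv_nonneg (by omega) hdpos.le
  have hNz : (N : ℤ) = (q - p) / d + 1 := by
    rw [hN]; push_cast; rw [Int.toNat_of_nonneg hq0]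
  have hNle : q - p ≤ N * d := by
    rw [hNz]
    have e := Int.mul_ediv_add_emod (q - p) d
    have e1 := Int.emod_lt_of_pos (q - p) hdpos
    nlinarith
  have hpq' : (p : ℝ) < q := by exact_mod_cast hpq
  have hNL : (N : ℝ) ≤ 1 + (q - p) * δ n := by
    have e : (q - p) / d * d ≤ q - p := Int.ediv_mul_le _ hdpos.ne'
    have e' : (((q - p) / d : ℤ) : ℝ) * d ≤ q - p := by exact_mod_cast e
    have e0 : (0 : ℝ) ≤ (((q - p) / d : ℤ) : ℝ) := by exact_mod_cast hq0
    have : (N : ℝ) = (((q - p) / d : ℤ) : ℝ) + 1 := by exact_mod_cast hNz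
    rw [this]
    nlinarith [mul_le_mul_of_nonneg_right e' h1.le, mul_nonneg e0 (by linarith : 0 ≤ d * δ n - 1)]
  obtain ⟨zp, zq, hzp, hzq, hcomp⟩ := stair_compare (M := M) (ε := ε) h1.le hΛ hβ.le hmin hpq hp hq
    hdpos hNle (fun l a b => hnear l (window_mem h1.le hp hq a b.le))
  have hT : |M| * (R + d * δ n) ≤ |M| * (R + 2) :=
    mul_le_mul_of_nonneg_left (by linarith) (abs_nonneg _)
  have c1 : jcost (δ n) (Λ n) (zp - W n (p - 1)) ≤ 4 := by
    refine hpoly (p - 1) ?_ zp (hzp.trans hT)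
    rw [abs_le] at hp ⊢
    push_cast
    constructor <;> nlinarith
  have c2 : jcost (δ n) (Λ n) (W n q - zq) ≤ 4 := by
    refine (jcost_mono hΛ (by rw [abs_sub_comm])).trans
      (hpoly q (by linarith) zq (hzq.trans hT))
  have c3 : jcost (δ n) (Λ n) (M * (d * δ n)) ≤ 2 := by
    refine (hup _ ?_).trans (by norm_num)
    rw [abs_mul, abs_of_nonneg (by linarith : 0 ≤ d * δ n)]
    nlinarith [abs_nonneg M]
  have c4 : β * ((q - p) * δ n) * (2 * (|M| * (d * δ n)) * ε + ε ^ 2) ≤ 1 := by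
    have a1 : (q - p) * δ n ≤ 2 * (|R| + 1) := by
      rw [abs_le] at hp hq; nlinarith [le_abs_self R]
    have a0 : 0 ≤ (q - p) * δ n := mul_nonneg (by linarith) h1.le
    have a2 : 2 * (|M| * (d * δ n)) * ε + ε ^ 2 ≤ (4 * |M| + 1) * ε := by
      have : |M| * (d * δ n) * ε ≤ |M| * 2 * ε :=
        mul_le_mul_of_nonneg_right (mul_le_mul_of_nonneg_left hd2 (abs_nonneg _)) hε.le
      nlinarith
    calc β * ((q - p) * δ n) * (2 * (|M| * (d * δ n)) * ε + ε ^ 2)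
        ≤ β * ((q - p) * δ n) * ((4 * |M| + 1) * ε) :=
          mul_le_mul_of_nonneg_left a2 (by positivity)
      _ ≤ β * (2 * (|R| + 1)) * ((4 * |M| + 1) * ε) :=
          mul_le_mul_of_nonneg_right (mul_le_mul_of_nonneg_left a1 hβ.le) (by positivity)
      _ = β * (2 * (|R| + 1)) * (4 * |M| + 1) * ε := by ring
      _ ≤ 1 := by
          rw [hεdef, mul_one_div, div_le_one (by positivity)]; linarith
  have c5 : jcost (δ n) (Λ n) (W n q - W n (q - 1)) ≥ 0 := jcost_nonneg hΛ _
  have hN1 : (0 : ℝ) ≤ N - 1 := by rw [hN]; push_cast; simp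
  have hN0 : (0 : ℝ) ≤ N := by positivity
  split_ifs with hM
  · subst hM
    simp only [zero_mul, jcost_zero, mul_zero] at hcomp c4
    norm_num at hcomp c4
    linarith
  · have c6 : (N - 1) * jcost (δ n) (Λ n) (M * (d * δ n)) ≤ (N - 1) * 2 :=
      mul_le_mul_of_nonneg_left c3 hN1
    have c7 : (d * δ n) ^ 3 ≤ 8 := by
      have := pow_le_pow_left₀ (by linarith : (0 : ℝ) ≤ d * δ n) hd2 3
      norm_num at this; exact this
    have c8 : β * M ^ 2 / 12 * (d * δ n) ^ 3 ≤ β * M ^ 2 := by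
      have : 0 ≤ β * M ^ 2 := by positivity
      nlinarith
    have c9 : N * (β * M ^ 2 / 12 * (d * δ n) ^ 3) ≤ N * (β * M ^ 2) :=
      mul_le_mul_of_nonneg_left c8 hN0
    have c10 : N * (2 + β * M ^ 2) ≤ (1 + (q - p) * δ n) * (2 + β * M ^ 2) :=
      mul_le_mul_of_nonneg_right hNL (by positivity)
    linarith

end BlowUp

/-- A low-energy interval of length at least `L` contains a cell where `W` is close to `m`. -/
lemma exists_close {δ Λ β C D L : ℝ} {m W : ℤ → ℝ} (hδ : 0 < δ) (hΛ : 0 ≤ Λ) (hβ : 0 < β)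
    {p q : ℤ} (hpq : p ≤ q) (hlen : L ≤ ((q : ℝ) - p) * δ) (hE : locEn δ Λ β m W p q ≤ C)
    (hD0 : 0 ≤ D) (hD : C < β * D ^ 2 * L) : ∃ a, p ≤ a ∧ a < q ∧ |W a - m a| ≤ D := by
  by_contra! hcon
  have h1 : ∀ l ∈ Finset.Ico p q, β * δ * D ^ 2 ≤ cellEn δ Λ β m W l := by
    intro l hl
    rw [Finset.mem_Ico] at hl
    have h2 := hcon l hl.1 hl.2
    have h3 : D ^ 2 ≤ (W l - m l) ^ 2 := by rw [← sq_abs (W l - m l)]; gcongr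
    have h4 := jcost_nonneg (δ := δ) hΛ (W l - W (l - 1))
    unfold cellEn
    linarith [mul_le_mul_of_nonneg_left h3 (by positivity : 0 ≤ β * δ)]
  have h2 := Finset.sum_le_sum h1
  rw [Finset.sum_const, nsmul_eq_mul, card_Ico_cast hpq] at h2
  unfold locEn at hE
  have h3 := mul_le_mul_of_nonneg_left hlen (by positivity : 0 ≤ β * D ^ 2)
  have e : ((q : ℝ) - p) * (β * δ * D ^ 2) = β * D ^ 2 * (((q : ℝ) - p) * δ) := by ring
  rw [e] at h2
  linarith

lemma clamp_lip (T x y : ℝ) :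
    |max (-T) (min T x) - max (-T) (min T y)| ≤ |x - y| := by
  refine (abs_max_sub_max_le_max _ _ _ _).trans ?_
  simp only [sub_self, abs_zero]
  refine max_le (abs_nonneg _) ((abs_min_sub_min_le_max _ _ _ _).trans ?_)
  simp

/-- Truncation between two cells where `W` is already within `[-T, T]`. -/
lemma clamp_bound {δ Λ β R T : ℝ} {m W : ℤ → ℝ} (hδ : 0 < δ) (hΛ : 0 ≤ Λ) (hβ : 0 < β)
    (hmin : LocMin δ Λ β m W R) {a b l : ℤ} (hal : a < l) (hlb : l < b)
    (ha : |((a + 1 : ℤ) : ℝ) * δ| ≤ R) (hb : |(b : ℝ) * δ| ≤ R)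
    (hm : ∀ l, a ≤ l → l ≤ b → |m l| ≤ T) (hWa : |W a| ≤ T) (hWb : |W b| ≤ T) : |W l| ≤ T := by
  by_contra! hcon
  have hT : 0 ≤ T := (abs_nonneg _).trans hWa
  have hcl : ∀ x : ℝ, |x| ≤ T → max (-T) (min T x) = x := by
    intro x hx
    rw [abs_le] at hx
    rw [min_eq_right hx.2, max_eq_right hx.1]
  set Z : ℤ → ℝ := fun l => if a + 1 ≤ l ∧ l < b then max (-T) (min T (W l)) else W l with hZ
  have hZc : ∀ l, a ≤ l → l ≤ b → Z l = max (-T) (min T (W l)) := by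
    intro l h1 h2
    simp only [hZ]
    split_ifs with h3
    · rfl
    · rcases (by omega : l = a ∨ l = b) with rfl | rfl
      · exact (hcl _ hWa).symm
      · exact (hcl _ hWb).symm
  have hm1 := hmin (a + 1) b (by omega) ha hb Z (by
    intro l hl; simp only [hZ]; rw [if_neg (by omega)])
  have hlast : jcost δ Λ (W b - Z (b - 1)) ≤ jcost δ Λ (W b - W (b - 1)) := by
    apply jcost_mono hΛ
    rw [hZc (b - 1) (by omega) (by omega)]
    conv_lhs => rw [← hcl _ hWb]
    exact clamp_lip _ _ _
  have hsq : ∀ l, a ≤ l → l ≤ b → (Z l - m l) ^ 2 ≤ (W l - m l) ^ 2 := by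
    intro l h1 h2
    rw [hZc l h1 h2]
    have h3 := hm l h1 h2
    apply sq_le_sq.mpr
    conv_lhs => rw [← hcl _ h3]
    exact clamp_lip _ _ _
  have hlt : locEn δ Λ β m Z (a + 1) b < locEn δ Λ β m W (a + 1) b := by
    unfold locEn
    have hj : ∀ j, a + 1 ≤ j → j < b → jcost δ Λ (Z j - Z (j - 1)) ≤
        jcost δ Λ (W j - W (j - 1)) := by
      intro j h1 h2
      apply jcost_mono hΛ
      rw [hZc j (by omega) (by omega), hZc (j - 1) (by omega) (by omega)]
      exact clamp_lip _ _ _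
    apply Finset.sum_lt_sum
    · intro j hj'
      rw [Finset.mem_Ico] at hj'
      unfold cellEn
      have := mul_le_mul_of_nonneg_left (hsq j (by omega) (by omega))
        (by positivity : 0 ≤ β * δ)
      linarith [hj j hj'.1 hj'.2]
    · refine ⟨l, by rw [Finset.mem_Ico]; omega, ?_⟩
      unfold cellEn
      have h4 : (Z l - m l) ^ 2 < (W l - m l) ^ 2 := by
        rw [hZc l (by omega) (by omega)]
        have h3 := abs_le.mp (hm l (by omega) (by omega))
        rcases lt_abs.mp hcon with h5 | h5
        · rw [min_eq_left h5.le, max_eq_right (by linarith)]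
          nlinarith
        · rw [min_eq_right (by linarith), max_eq_left (by linarith)]
          nlinarith
      have := mul_lt_mul_of_pos_left h4 (by positivity : 0 < β * δ)
      linarith [hj l (by omega) hlb]
  linarith

/-- Small jumps are controlled by their cost up to an arbitrarily small slope `κ`. -/
lemma small_jump_le {δ Λ κ t : ℝ} (hδ : 0 < δ) (hΛ : 0 < Λ) (hκ : 0 < κ)
    (ht : |t| ≤ √δ) : |t| ≤ δ * κ + (δ / κ + 2 * √δ) * Λ * jcost δ Λ t := by
  have hs : 0 < √δ := Real.sqrt_pos.mpr hδ
  set x := |t| / δ with hx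
  have hx0 : 0 ≤ x := by positivity
  have hxt : |t| = δ * x := by rw [hx]; field_simp
  have hj : Λ * jcost δ Λ t = Real.log (1 + x ^ 2) := by
    unfold jcost
    rw [mul_div_cancel₀ _ hΛ.ne', hx, div_pow, div_pow, sq_abs]
  rw [mul_assoc, hj]
  have hl0 : 0 ≤ Real.log (1 + x ^ 2) := Real.log_nonneg (by nlinarith)
  rcases le_total x 1 with h1 | h1
  · have hl : x ^ 2 / 2 ≤ Real.log (1 + x ^ 2) := by
      have := Real.one_sub_inv_le_log_of_pos (by positivity : 0 < 1 + x ^ 2)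
      refine le_trans ?_ this
      have : 1 - (1 + x ^ 2)⁻¹ = x ^ 2 / (1 + x ^ 2) := by field_simp; ring
      rw [this]
      exact div_le_div_of_nonneg_left (by positivity) (by positivity) (by nlinarith)
    have h2 : x ≤ κ + x ^ 2 / 2 / κ := by
      have : κ * x ≤ κ * (κ + x ^ 2 / 2 / κ) := by
        have e : κ * (κ + x ^ 2 / 2 / κ) = κ ^ 2 + x ^ 2 / 2 := by field_simp
        rw [e]; nlinarith [sq_nonneg (κ - x)]
      exact le_of_mul_le_mul_left this hκ
    have h3 : x ^ 2 / 2 / κ ≤ Real.log (1 + x ^ 2) / κ := div_le_div_of_nonneg_right hl hκ.le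
    rw [hxt]
    have h4 : δ / κ * Real.log (1 + x ^ 2) = δ * (Real.log (1 + x ^ 2) / κ) := by ring
    have h5 : 0 ≤ 2 * √δ * Real.log (1 + x ^ 2) := by positivity
    rw [add_mul, h4]
    nlinarith [mul_le_mul_of_nonneg_left (h2.trans (by linarith : κ + x ^ 2 / 2 / κ ≤ κ + Real.log (1 + x ^ 2) / κ)) hδ.le]
  · have hl : 1 / 2 ≤ Real.log (1 + x ^ 2) := by
      have h2 : Real.log 2 ≤ Real.log (1 + x ^ 2) := Real.log_le_log (by norm_num) (by nlinarith)
      linarith [Real.log_two_gt_d9]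
    have h4 : 0 ≤ δ / κ * Real.log (1 + x ^ 2) := by positivity
    have h5 : 0 ≤ δ * κ := by positivity
    rw [add_mul]
    nlinarith

namespace BlowUp

variable {β M : ℝ} {δ Λ : ℕ → ℝ} {m W : ℕ → ℤ → ℝ}

/-- Local uniform bound, by truncation between two cells where the energy bound keeps `W` close
to `m`. -/
lemma sup_bound (h : BlowUp β M δ Λ m W) (R : ℝ) :
    ∃ C : ℝ, 0 < C ∧ ∀ᶠ n in atTop, ∀ l : ℤ, |(l : ℝ) * δ n| ≤ R →
      |W n l| ≤ C ∧ |W n l - m n l| ≤ 2 * C := by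
  have hβ := h.β_pos
  obtain ⟨D, hD0, -, hD⟩ := h.energy_bound
  set R2 := |R| + 3 with hR2
  have hRR : R ≤ |R| := le_abs_self R
  have hR0 : 0 ≤ |R| := abs_nonneg R
  set C' := 9 + D * (1 + 2 * R2) with hC'
  set B := (C' + 1) / β + 1 with hB
  have hC'0 : 0 ≤ C' := by positivity
  have hB1 : 1 ≤ B := by rw [hB]; have : 0 ≤ (C' + 1) / β := by positivity
                         linarith
  have hBC : C' < β * B ^ 2 := by
    have h1 : β * B = C' + 1 + β := by rw [hB]; field_simp
    nlinarith
  set T := B + |M| * (R2 + 1) + 1 with hT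
  have hT0 : 0 < T := by positivity
  refine ⟨T, hT0, ?_⟩
  filter_upwards [h.basic one_pos 1, h.near R2 1 one_pos, h.locmin R2, hD R2]
    with n ⟨h1, h2, h3⟩ hnear hmin hE l hl
  have hΛ : 0 ≤ Λ n := by linarith
  set d : ℤ := ⌈1 / δ n⌉ with hd
  have hd1 : 1 ≤ d * δ n := by
    have := Int.le_ceil (1 / δ n)
    rwa [div_le_iff₀ h1] at this
  have hd2 : d * δ n ≤ 2 := by
    have := (Int.ceil_lt_add_one (1 / δ n)).le
    have := mul_le_mul_of_nonneg_right this h1.le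
    rw [add_mul, div_mul_cancel₀ _ h1.ne'] at this
    linarith
  have hdpos : 0 < d := Int.ceil_pos.mpr (by positivity)
  have hl' := abs_le.mp hl
  have hm : ∀ j : ℤ, |(j : ℝ) * δ n| ≤ R2 → |m n j| ≤ |M| * (R2 + 1) + 1 := by
    intro j hj
    have a1 := hnear j hj
    have a2 : |M * (((j : ℝ) + 1 / 2) * δ n)| ≤ |M| * (R2 + 1) := by
      rw [abs_mul]
      refine mul_le_mul_of_nonneg_left ?_ (abs_nonneg _)
      rw [abs_le] at hj ⊢
      constructor <;> nlinarith
    have := abs_sub_abs_le_abs_sub (m n j) (M * (((j : ℝ) + 1 / 2) * δ n))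
    linarith
  have w1 : |((l - d : ℤ) : ℝ) * δ n| ≤ R2 := by
    rw [abs_le]; push_cast; constructor <;> nlinarith
  have w2 : |((l + 1 : ℤ) : ℝ) * δ n| ≤ R2 := by
    rw [abs_le]; push_cast; constructor <;> nlinarith
  have w3 : |((l + 1 + d : ℤ) : ℝ) * δ n| ≤ R2 := by
    rw [abs_le]; push_cast; constructor <;> nlinarith
  have w4 : |(l : ℝ) * δ n| ≤ R2 := by linarith
  have hEn : ∀ p q : ℤ, p < q → |(p : ℝ) * δ n| ≤ R2 → |(q : ℝ) * δ n| ≤ R2 →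
      locEn (δ n) (Λ n) β (m n) (W n) p q ≤ C' := by
    intro p q hpq hp hq
    refine (hE p q hpq hp hq).trans ?_
    rw [abs_le] at hp hq
    have : (q - p) * δ n ≤ 2 * R2 := by nlinarith
    rw [hC']
    nlinarith [mul_le_mul_of_nonneg_left this hD0]
  obtain ⟨a, ha1, ha2, ha3⟩ := exists_close h1 hΛ hβ (by omega : l - d ≤ l)
    (by push_cast; linarith) (hEn _ _ (by omega) w1 w4) (by linarith : 0 ≤ B) (by linarith : C' < β * B ^ 2 * 1)
  obtain ⟨b, hb1, hb2, hb3⟩ := exists_close h1 hΛ hβ (by omega : l + 1 ≤ l + 1 + d)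
    (by push_cast; linarith) (hEn _ _ (by omega) w2 w3) (by linarith : 0 ≤ B) (by linarith : C' < β * B ^ 2 * 1)
  have wab : ∀ j : ℤ, a ≤ j → j ≤ b → |(j : ℝ) * δ n| ≤ R2 := fun j h4 h5 =>
    window_mem h1.le w1 w3 (by omega) (by omega)
  have hWT : ∀ j : ℤ, |(j : ℝ) * δ n| ≤ R2 → |W n j - m n j| ≤ B → |W n j| ≤ T := by
    intro j hj hj2
    have := abs_sub_abs_le_abs_sub (W n j) (m n j)
    have := hm j hj
    rw [hT]; linarith
  have hfin := clamp_bound h1 hΛ hβ hmin ha2 (by omega : l < b) (wab _ (by omega) (by omega))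
    (wab _ (by omega) (by omega)) (fun j h4 h5 => (hm j (wab j h4 h5)).trans (by rw [hT]; linarith))
    (hWT a (wab _ le_rfl (by omega)) ha3) (hWT b (wab _ (by omega) le_rfl) hb3)
  refine ⟨hfin, ?_⟩
  have := abs_sub (W n l) (m n l)
  have := hm l w4
  have : |m n l| ≤ T := by rw [hT]; linarith
  linarith

/-- Big jumps are well separated, and as soon as there are two of them they are bounded away
from zero. -/
lemma separation (h : BlowUp β M δ Λ m W) (R : ℝ) :
    ∃ c : ℝ, 0 < c ∧ ∀ᶠ n in atTop, ∀ i j : ℤ, i < j → |(i : ℝ) * δ n| ≤ R →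
      |(j : ℝ) * δ n| ≤ R → Big (δ n) (W n) i → Big (δ n) (W n) j →
      c ≤ (j - i) * δ n ∧ c ≤ |W n i - W n (i - 1)| ∧ c ≤ |W n j - W n (j - 1)| := by
  have hβ := h.β_pos
  obtain ⟨C, hC, hbd⟩ := h.sup_bound (|R| + 1)
  have hRR : R ≤ |R| := le_abs_self R
  have hR0 : 0 ≤ |R| := abs_nonneg R
  refine ⟨1 / (4 * (β * (6 * C)) * (2 * C + 2 * (|R| + 1))), by positivity, ?_⟩
  filter_upwards [h.basic one_pos 16, h.locmin R, hbd, h.jcost_big]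
    with n ⟨h1, h2, h3⟩ hmin hb hbig i j hij hi hj hBi hBj
  have hΛ : 0 < Λ n := by linarith
  set s := min |W n i - W n (i - 1)| |W n j - W n (j - 1)| with hs
  have hsC : s ≤ 2 * C := by
    refine (min_le_left _ _).trans ((abs_sub _ _).trans ?_)
    have a1 := (hb i (by linarith)).1
    have a2 := (hb (i - 1) (by rw [abs_le] at hi ⊢; push_cast; constructor <;> nlinarith)).1
    linarith
  have hspos : √(δ n) < s := lt_min hBi hBj
  have hs0 : 0 < s := (Real.sqrt_nonneg _).trans_lt hspos
  have hsh := shift_compare h1.le hΛ.le hβ.le hmin hij hi hj (C := 2 * C)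
    (fun l a b => (hb l ((window_mem h1.le hi hj a b.le).trans (by linarith))).2) hs
  have hc1 := hbig s (by rwa [abs_of_pos hs0])
  have hlog : Real.log 4 / Λ n ≤ 1 / 4 := by
    rw [div_le_iff₀ hΛ]
    have : Real.log 4 ≤ 4 - 1 := Real.log_le_sub_one_of_pos (by norm_num)
    linarith
  have hij' : (i : ℝ) < j := by exact_mod_cast hij
  set d := ((j : ℝ) - i) * δ n with hd
  have hd0 : 0 < d := mul_pos (by linarith) h1
  have hdR : d ≤ 2 * (|R| + 1) := by rw [abs_le] at hi hj; rw [hd]; nlinarith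
  have hmain : 1 ≤ 4 * (β * (6 * C)) * (d * s) := by
    have : β * d * (2 * (2 * C) * s + s ^ 2) ≤ β * d * (6 * C * s) := by
      refine mul_le_mul_of_nonneg_left ?_ (by positivity)
      nlinarith
    nlinarith
  have k1 : 1 / (4 * (β * (6 * C)) * (2 * C + 2 * (|R| + 1))) ≤ d := by
    rw [div_le_iff₀ (by positivity)]
    have : d * s ≤ d * (2 * C + 2 * (|R| + 1)) := mul_le_mul_of_nonneg_left (by linarith) hd0.le
    have := mul_le_mul_of_nonneg_left this (by positivity : 0 ≤ 4 * (β * (6 * C)))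
    linarith
  have k2 : 1 / (4 * (β * (6 * C)) * (2 * C + 2 * (|R| + 1))) ≤ s := by
    rw [div_le_iff₀ (by positivity)]
    have : d * s ≤ (2 * C + 2 * (|R| + 1)) * s := mul_le_mul_of_nonneg_right (by linarith) hs0.le
    have := mul_le_mul_of_nonneg_left this (by positivity : 0 ≤ 4 * (β * (6 * C)))
    linarith
  exact ⟨k1, k2.trans (min_le_left _ _), k2.trans (min_le_right _ _)⟩

open Classical in
/-- The total variation carried by the jumps that are not big vanishes in the limit. -/
lemma small_var (h : BlowUp β M δ Λ m W) (R : ℝ) {ε : ℝ} (hε : 0 < ε) :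
    ∀ᶠ n in atTop, ∀ p q : ℤ, p ≤ q → |(p : ℝ) * δ n| ≤ R → |(q : ℝ) * δ n| ≤ R →
      ∑ l ∈ Finset.Ico p q, (if Big (δ n) (W n) l then 0 else |W n l - W n (l - 1)|) ≤ ε := by
  have hβ := h.β_pos
  obtain ⟨D, hD0, -, hD⟩ := h.energy_bound
  have hRR : R ≤ |R| := le_abs_self R
  have hR0 : 0 ≤ |R| := abs_nonneg R
  set C' := 9 + D * (1 + 2 * |R|) with hC'
  have hC'0 : 0 < C' := by positivity
  set κ := ε / (4 * (|R| + 1)) with hκ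
  have hκ0 : 0 < κ := by positivity
  have hlim : Tendsto (fun n => (1 / κ + 2) * (√(δ n) * Λ n) * C') atTop
      (nhds ((1 / κ + 2) * 0 * C')) := (h.sqrt_lim.const_mul _).mul_const _
  have hev := hlim.eventually (ge_mem_nhds (show (1 / κ + 2) * 0 * C' < ε / 2 by simpa using hε))
  filter_upwards [h.basic one_pos 1, hev, hD R] with n ⟨h1, h2, h3⟩ hsm hE p q hpq hp hq
  rcases hpq.eq_or_lt with rfl | hpq'
  · simpa using hε.le
  have hΛ : 0 < Λ n := by linarith
  have hE1 := hE p q hpq' hp hq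
  have hpqR : (p : ℝ) < q := by exact_mod_cast hpq'
  have hlen : (q - p) * δ n ≤ 2 * |R| := by rw [abs_le] at hp hq; nlinarith
  have hE2 : locEn (δ n) (Λ n) β (m n) (W n) p q ≤ C' := by
    rw [hC']; nlinarith [mul_le_mul_of_nonneg_left hlen hD0]
  have hs1 : √(δ n) ≤ 1 := Real.sqrt_le_iff.mpr ⟨by norm_num, by linarith⟩
  have hs0 := Real.sqrt_nonneg (δ n)
  have hss := Real.mul_self_sqrt h1.le
  have hcell : ∀ l ∈ Finset.Ico p q, (if Big (δ n) (W n) l then 0 else |W n l - W n (l - 1)|) ≤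
      δ n * κ + (δ n / κ + 2 * √(δ n)) * Λ n * cellEn (δ n) (Λ n) β (m n) (W n) l := by
    intro l _
    have hc : jcost (δ n) (Λ n) (W n l - W n (l - 1)) ≤ cellEn (δ n) (Λ n) β (m n) (W n) l := by
      unfold cellEn
      have : 0 ≤ β * δ n * (W n l - m n l) ^ 2 := by positivity
      linarith
    have hc0 := jcost_nonneg (δ := δ n) hΛ.le (W n l - W n (l - 1))
    have hmul := mul_le_mul_of_nonneg_left hc
      (by positivity : 0 ≤ (δ n / κ + 2 * √(δ n)) * Λ n)
    split_ifs with hB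
    · have : 0 ≤ (δ n / κ + 2 * √(δ n)) * Λ n * jcost (δ n) (Λ n) (W n l - W n (l - 1)) := by
        positivity
      have : 0 ≤ δ n * κ := by positivity
      linarith
    · have := small_jump_le h1 hΛ hκ0 (not_lt.mp hB)
      linarith
  refine (Finset.sum_le_sum hcell).trans ?_
  rw [Finset.sum_add_distrib, Finset.sum_const, nsmul_eq_mul, card_Ico_cast hpq, ← Finset.mul_sum]
  have t1 : ((q : ℝ) - p) * (δ n * κ) ≤ ε / 2 := by
    have e : 2 * (|R| + 1) * κ = ε / 2 := by rw [hκ]; field_simp; norm_num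
    rw [← mul_assoc, ← e]
    exact mul_le_mul_of_nonneg_right (by linarith) hκ0.le
  have t2 : (δ n / κ + 2 * √(δ n)) * Λ n * locEn (δ n) (Λ n) β (m n) (W n) p q ≤ ε / 2 := by
    refine le_trans ?_ hsm
    have a1 : δ n / κ + 2 * √(δ n) ≤ (1 / κ + 2) * √(δ n) := by
      have : δ n ≤ √(δ n) := by nlinarith
      have := div_le_div_of_nonneg_right this hκ0.le
      have e : (1 / κ + 2) * √(δ n) = √(δ n) / κ + 2 * √(δ n) := by ring
      rw [e]; linarith
    calc (δ n / κ + 2 * √(δ n)) * Λ n * locEn (δ n) (Λ n) β (m n) (W n) p q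
        ≤ (δ n / κ + 2 * √(δ n)) * Λ n * C' := mul_le_mul_of_nonneg_left hE2 (by positivity)
      _ ≤ (1 / κ + 2) * √(δ n) * Λ n * C' :=
          mul_le_mul_of_nonneg_right (mul_le_mul_of_nonneg_right a1 hΛ.le) hC'0.le
      _ = (1 / κ + 2) * (√(δ n) * Λ n) * C' := by ring
  unfold locEn at t2
  linarith

end BlowUp

/-! ### Plateaus between big jumps -/

lemma abs_sub_le_sum (W : ℤ → ℝ) {p l : ℤ} (h : p ≤ l) :
    |W l - W p| ≤ ∑ j ∈ Finset.Ico (p + 1) (l + 1), |W j - W (j - 1)| := by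
  induction l, h using Int.leInduction with
  | base => simp
  | succ l hl ih =>
    rw [sum_Ico_succ _ (by omega : p + 1 ≤ l + 1)]
    have e : W (l + 1) - W p = (W l - W p) + (W (l + 1) - W (l + 1 - 1)) := by
      rw [add_sub_cancel_right]; ring
    rw [e]
    exact (abs_add_le _ _).trans (by linarith)

/-- A lower bound for the energy of a function that is nearly constant on `[P, Q)`, when the
forcing term is nearly linear. -/
lemma plateau_lower {δ Λ β M c e A : ℝ} {m W : ℤ → ℝ} (hδ : 0 ≤ δ) (hΛ : 0 ≤ Λ) (hβ : 0 ≤ β)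
    {P Q : ℤ} (hPQ : P < Q) (hW : ∀ l, P ≤ l → l < Q → |W l - c| ≤ e)
    (hm : ∀ l : ℤ, P ≤ l → l < Q → |m l - M * (((l : ℝ) + 1 / 2) * δ)| ≤ e)
    (hA : ∀ l : ℤ, P ≤ l → l < Q → |c - M * (((l : ℝ) + 1 / 2) * δ)| ≤ A) :
    jcost δ Λ (W P - W (P - 1)) + β * M ^ 2 / 12 * (((Q - P) * δ) ^ 3 - (Q - P) * δ * δ ^ 2) +
      β * ((Q - P) * δ) * (c - M * ((P + Q) / 2 * δ)) ^ 2 - β * ((Q - P) * δ) * (4 * e * A) ≤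
      locEn δ Λ β m W P Q := by
  have h1 : jcost δ Λ (W P - W (P - 1)) ≤
      ∑ l ∈ Finset.Ico P Q, jcost δ Λ (W l - W (l - 1)) :=
    Finset.single_le_sum (f := fun l => jcost δ Λ (W l - W (l - 1)))
      (fun l _ => jcost_nonneg hΛ _) (Finset.mem_Ico.mpr ⟨le_rfl, hPQ⟩)
  have h2 : ∑ l ∈ Finset.Ico P Q, ((c - M * (((l : ℝ) + 1 / 2) * δ)) ^ 2 - 4 * e * A) ≤
      ∑ l ∈ Finset.Ico P Q, (W l - m l) ^ 2 := by
    refine Finset.sum_le_sum fun l hl => ?_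
    obtain ⟨a, b⟩ := Finset.mem_Ico.mp hl
    have w1 := hW l a b
    have w2 := hm l a b
    have w3 := hA l a b
    set x := c - M * (((l : ℝ) + 1 / 2) * δ)
    set d := (W l - c) - (m l - M * (((l : ℝ) + 1 / 2) * δ)) with hd
    have hde : |d| ≤ 2 * e := (abs_sub _ _).trans (by linarith)
    have e1 : W l - m l = x + d := by simp only [x, hd]; ring
    rw [e1]
    have : -(|x| * |d|) ≤ x * d := by rw [← abs_mul]; exact neg_abs_le _
    have h5 : |x| * |d| ≤ A * (2 * e) := mul_le_mul w3 hde (abs_nonneg _) ((abs_nonneg _).trans w3)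
    nlinarith [sq_nonneg d]
  rw [Finset.sum_sub_distrib, plateau_sum c M δ hPQ.le, Finset.sum_const, nsmul_eq_mul,
    card_Ico_cast hPQ.le] at h2
  have h3 : locEn δ Λ β m W P Q = ∑ l ∈ Finset.Ico P Q, jcost δ Λ (W l - W (l - 1)) +
      β * δ * ∑ l ∈ Finset.Ico P Q, (W l - m l) ^ 2 := by
    simp only [locEn, cellEn]
    rw [Finset.sum_add_distrib, Finset.mul_sum]
  rw [h3]
  have h4 := mul_le_mul_of_nonneg_left h2 (mul_nonneg hβ hδ)
  refine le_trans (le_of_eq ?_) (add_le_add h1 h4)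
  ring

open Classical in
/-- The first element after `P` of a set of integers, if there is one up to `S`. -/
lemma exists_next (B : ℤ → Prop) {P S : ℤ} (h : P < S) (hS : B S) :
    ∃ Q, P < Q ∧ Q ≤ S ∧ B Q ∧ ∀ l, P < l → l < Q → ¬ B l := by
  have hex : ∃ k : ℕ, B (P + 1 + k) := ⟨(S - P - 1).toNat, by
    rwa [Int.toNat_of_nonneg (by omega), show P + 1 + (S - P - 1) = S by ring]⟩
  refine ⟨P + 1 + Nat.find hex, by omega, ?_, Nat.find_spec hex, fun l h1 h2 hB => ?_⟩
  · have : Nat.find hex ≤ (S - P - 1).toNat := Nat.find_min' hex (by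
      rwa [Int.toNat_of_nonneg (by omega), show P + 1 + (S - P - 1) = S by ring])
    omega
  · refine Nat.find_min hex (m := (l - P - 1).toNat) (by omega) ?_
    rwa [Int.toNat_of_nonneg (by omega), show P + 1 + (l - P - 1) = l by ring]

namespace BlowUp

variable {β M : ℝ} {δ Λ : ℕ → ℝ} {m W : ℕ → ℤ → ℝ}

/-- Between big jumps the blow-ups are asymptotically constant. -/
lemma plateau_osc (h : BlowUp β M δ Λ m W) (R : ℝ) {ε : ℝ} (hε : 0 < ε) :
    ∀ᶠ n in atTop, ∀ P Q : ℤ, |(P : ℝ) * δ n| ≤ R → |(Q : ℝ) * δ n| ≤ R →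
      (∀ l, P < l → l < Q → ¬ Big (δ n) (W n) l) →
      ∀ l, P ≤ l → l < Q → |W n l - W n P| ≤ ε := by
  classical
  filter_upwards [h.small_var R hε, h.δ_pos] with n h1 hδ P Q hP hQ hno l hl hl'
  refine (abs_sub_le_sum _ hl).trans ?_
  have h2 := h1 (P + 1) (l + 1) (by omega) (window_mem hδ.le hP hQ (by omega) (by omega))
    (window_mem hδ.le hP hQ (by omega) (by omega))
  refine le_trans (le_of_eq (Finset.sum_congr rfl fun j hj => ?_)) h2
  obtain ⟨a, b⟩ := Finset.mem_Ico.mp hj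
  rw [if_neg (hno j (by omega) (by omega))]

/-- The fidelity part of the energy of a plateau: the quantitative lower bound behind both the
bound on the gaps and the rigidity. -/
lemma plateau_fid (h : BlowUp β M δ Λ m W) (R : ℝ) {ε : ℝ} (hε : 0 < ε) :
    ∀ᶠ n in atTop, ∀ P Q : ℤ, P < Q → |(P : ℝ) * δ n| ≤ R → |(Q : ℝ) * δ n| ≤ R →
      (∀ l, P < l → l < Q → ¬ Big (δ n) (W n) l) →
      jcost (δ n) (Λ n) (W n P - W n (P - 1)) + β * M ^ 2 / 12 * ((Q - P) * δ n) ^ 3 +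
        β * ((Q - P) * δ n) * (W n P - M * ((P + Q) / 2 * δ n)) ^ 2 - ε ≤
      locEn (δ n) (Λ n) β (m n) (W n) P Q := by
  have hβ := h.β_pos
  obtain ⟨C, hC, hsup⟩ := h.sup_bound R
  obtain ⟨A, hA⟩ : ∃ A, A = C + |M| * (|R| + 1) := ⟨_, rfl⟩
  have hA0 : 0 < A := by rw [hA]; positivity
  obtain ⟨X, hX⟩ : ∃ X, X = β * (2 * |R|) * (4 * A) + 1 := ⟨_, rfl⟩
  have hX0 : 0 < X := by rw [hX]; positivity
  obtain ⟨Y, hY⟩ : ∃ Y, Y = β * M ^ 2 / 12 * (2 * |R|) + 1 := ⟨_, rfl⟩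
  have hY0 : 0 < Y := by rw [hY]; positivity
  obtain ⟨e, he⟩ : ∃ e, e = ε / (2 * X) := ⟨_, rfl⟩
  have he0 : 0 < e := by rw [he]; positivity
  have hd0 : 0 < min 1 (ε / (2 * Y)) := by positivity
  filter_upwards [h.basic hd0 1, h.near R e he0, h.plateau_osc R he0, hsup]
    with n ⟨h1, h2, h3⟩ hnear hosc hsup P Q hPQ hP hQ hno
  have hd1 : δ n ≤ 1 := h2.trans (min_le_left _ _)
  have hd2 : δ n ≤ ε / (2 * Y) := h2.trans (min_le_right _ _)
  have hpl := plateau_lower (Λ := Λ n) (m := m n) (M := M) (A := A) h1.le (by linarith) hβ.le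
    hPQ
    (hosc P Q hP hQ hno)
    (fun l a b => hnear l (window_mem h1.le hP hQ a b.le))
    (fun l a b => by
      have w := window_mem h1.le hP hQ a b.le
      rw [hA]
      refine (abs_sub _ _).trans (add_le_add (hsup P hP).1 ?_)
      rw [abs_mul]
      refine mul_le_mul_of_nonneg_left ?_ (abs_nonneg _)
      rw [add_mul]
      refine (abs_add_le _ _).trans (add_le_add (w.trans (le_abs_self R)) ?_)
      rw [abs_of_nonneg (by positivity)]; linarith)
  have hPQ' : (P : ℝ) < Q := by exact_mod_cast hPQ
  have hlen : (Q - P) * δ n ≤ 2 * |R| := by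
    rw [abs_le] at hP hQ
    have := le_abs_self R
    rw [sub_mul]; linarith [hP.1, hQ.2]
  have hlen0 : 0 ≤ (Q - P) * δ n := mul_nonneg (by linarith) h1.le
  have t1 : β * ((Q - P) * δ n) * (4 * e * A) ≤ ε / 2 := by
    have : β * ((Q - P) * δ n) * (4 * e * A) ≤ β * (2 * |R|) * (4 * e * A) := by gcongr
    have e2 : e * X = ε / 2 := by rw [he]; field_simp
    have e3 : β * (2 * |R|) * (4 * e * A) = e * X - e := by rw [hX]; ring
    linarith
  have t2 : β * M ^ 2 / 12 * ((Q - P) * δ n * δ n ^ 2) ≤ ε / 2 := by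
    have a1 : δ n ^ 2 ≤ δ n := by nlinarith
    have a2 : β * M ^ 2 / 12 * ((Q - P) * δ n * δ n ^ 2) ≤
        β * M ^ 2 / 12 * (2 * |R| * δ n) := by gcongr
    have a3 : δ n * Y ≤ ε / 2 := by
      calc δ n * Y ≤ ε / (2 * Y) * Y := by gcongr
        _ = ε / 2 := by field_simp
    have e3 : β * M ^ 2 / 12 * (2 * |R| * δ n) = δ n * Y - δ n := by rw [hY]; ring
    linarith
  linarith

/-- Big jumps are relatively dense when the slope of the forcing term does not vanish. -/
lemma gap (h : BlowUp β M δ Λ m W) (hM : M ≠ 0) :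
    ∃ R0 : ℝ, 0 < R0 ∧ ∀ R : ℝ, ∀ᶠ n in atTop, ∀ p q : ℤ, |(p : ℝ) * δ n| ≤ R →
      |(q : ℝ) * δ n| ≤ R → R0 ≤ (q - p) * δ n → ∃ l, p < l ∧ l < q ∧ Big (δ n) (W n) l := by
  have hβ := h.β_pos
  obtain ⟨D, hD0, -, hE⟩ := h.energy_bound
  set K := β * M ^ 2 / 12 with hK
  have hK0 : 0 < K := by positivity
  set R0 := 2 + (12 + 2 * D) / K with hR0
  have hR2 : 2 ≤ R0 := by rw [hR0]; linarith [show 0 ≤ (12 + 2 * D) / K by positivity]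
  have hKR : 12 + 2 * D ≤ K * R0 := by
    have : K * R0 = 2 * K + (12 + 2 * D) := by rw [hR0]; field_simp
    linarith
  refine ⟨R0, by linarith, fun R => ?_⟩
  filter_upwards [hE R, h.plateau_fid R one_pos, h.basic one_pos 1]
    with n hE hfid ⟨h1, h2, h3⟩ p q hp hq hlen
  by_contra hno
  push Not at hno
  set q' : ℤ := p + ⌈R0 / δ n⌉ with hq'
  have hc : 0 < ⌈R0 / δ n⌉ := Int.ceil_pos.mpr (by positivity)
  have hq'q : q' ≤ q := by
    have : ⌈R0 / δ n⌉ ≤ q - p := Int.ceil_le.mpr (by push_cast; rwa [div_le_iff₀ h1])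
    omega
  have e1 : (q' : ℝ) - p = ⌈R0 / δ n⌉ := by rw [hq']; push_cast; ring
  have l1 : R0 ≤ (q' - p) * δ n := by rw [e1, ← div_le_iff₀ h1]; exact Int.le_ceil _
  have l2 : (q' - p) * δ n ≤ R0 + 1 := by
    rw [e1]
    have := mul_le_mul_of_nonneg_right (Int.ceil_lt_add_one (R0 / δ n)).le h1.le
    rw [add_mul, div_mul_cancel₀ _ h1.ne'] at this
    linarith
  have hwq' := window_mem h1.le hp hq (by omega : p ≤ q') hq'q
  have b1 := hE p q' (by omega) hp hwq'
  have b2 := hfid p q' (by omega) hp hwq' (fun l a b => hno l a (by omega))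
  have b3 : 0 ≤ jcost (δ n) (Λ n) (W n p - W n (p - 1)) := jcost_nonneg (by linarith) _
  set x := ((q' : ℝ) - p) * δ n
  have b4 : 0 ≤ β * x * (W n p - M * ((p + q') / 2 * δ n)) ^ 2 := by
    have : 0 ≤ x := by linarith
    positivity
  have b5 : K * R0 ^ 3 ≤ K * x ^ 3 := by gcongr
  have b6 : R0 ^ 2 ≥ 2 * R0 := by nlinarith
  have b7 : K * R0 ^ 3 ≥ (12 + 2 * D) * (2 * R0) := by
    have : K * R0 ^ 3 = (K * R0) * R0 ^ 2 := by ring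
    rw [this]
    exact mul_le_mul hKR b6 (by linarith) (by positivity)
  have b8 : D * (1 + x) ≤ D * (2 + R0) := mul_le_mul_of_nonneg_left (by linarith) hD0
  have b9 : 0 ≤ D * (R0 - 2) := mul_nonneg hD0 (by linarith)
  rw [← hK] at b2
  nlinarith

/-- Energy of a plateau: one jump, the variance of the line on the plateau, and a penalty for a
height that differs from the value of the line at the midpoint. -/
lemma plateau_energy (h : BlowUp β M δ Λ m W) (R : ℝ) {ε : ℝ} (hε : 0 < ε) :
    ∀ᶠ n in atTop, ∀ P Q : ℤ, P < Q → |(P : ℝ) * δ n| ≤ R → |(Q : ℝ) * δ n| ≤ R →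
      Big (δ n) (W n) P → Big (δ n) (W n) Q →
      (∀ l, P < l → l < Q → ¬ Big (δ n) (W n) l) →
      4 / 3 + β * M ^ 2 / 12 * ((Q - P) * δ n) ^ 3 +
        β * ((Q - P) * δ n) * (W n P - M * ((P + Q) / 2 * δ n)) ^ 2 - ε ≤
      locEn (δ n) (Λ n) β (m n) (W n) P Q := by
  obtain ⟨c, hc, hsep⟩ := h.separation R
  filter_upwards [hsep, h.jcost_lower hc (half_pos hε), h.plateau_fid R (half_pos hε)]
    with n hsep hlow hfid P Q hPQ hP hQ bP bQ hno
  have := hfid P Q hPQ hP hQ hno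
  have := hlow _ (hsep P Q hPQ hP hQ bP bQ).2.1
  linarith

/-- Energy lower bound, linear in the length, between any two big jumps. The slope is the energy
per unit length of the optimal staircase. -/
lemma chain_lower (h : BlowUp β M δ Λ m W) {ℓ : ℝ} (hℓ : 0 < ℓ)
    (hℓ3 : β * M ^ 2 * ℓ ^ 3 = 8) (R : ℝ) {ε : ℝ} (hε : 0 < ε) :
    ∀ᶠ n in atTop, ∀ P S : ℤ, P ≤ S → |(P : ℝ) * δ n| ≤ R → |(S : ℝ) * δ n| ≤ R →
      Big (δ n) (W n) P → Big (δ n) (W n) S →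
      (β * M ^ 2 * ℓ ^ 2 / 4 - ε) * ((S - P) * δ n) ≤ locEn (δ n) (Λ n) β (m n) (W n) P S := by
  have hβ := h.β_pos
  obtain ⟨c, hc, hsep⟩ := h.separation R
  filter_upwards [hsep, h.plateau_energy R (mul_pos hε hc), h.δ_pos]
    with n hsep hpl hδ P S hPS hP hS bP bS
  obtain ⟨k, hk⟩ : ∃ k : ℕ, (S - P).toNat ≤ k := ⟨_, le_rfl⟩
  induction k generalizing P with
  | zero =>
    obtain rfl : P = S := by omega
    simp [locEn]
  | succ k ih =>
    rcases hPS.eq_or_lt with rfl | hlt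
    · simp [locEn]
    obtain ⟨Q, q1, q2, q3, q4⟩ := exists_next (Big (δ n) (W n)) hlt bS
    have wQ := window_mem hδ.le hP hS q1.le q2
    have i1 := ih Q q2 wQ q3 (by omega)
    have i2 := hpl P Q q1 hP wQ bP q3 q4
    have i3 := (hsep P Q q1 hP wQ bP q3).1
    rw [locEn_add q1.le q2]
    set x := ((Q : ℝ) - P) * δ n with hx
    have e : ((S : ℝ) - P) * δ n = x + (S - Q) * δ n := by rw [hx]; ring
    rw [e]
    have key : 4 / 3 + β * M ^ 2 / 12 * x ^ 3 - β * M ^ 2 * ℓ ^ 2 / 4 * x =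
        β * M ^ 2 / 12 * ((x - ℓ) ^ 2 * (x + 2 * ℓ)) := by linear_combination (-1/6) * hℓ3
    have hx0 : 0 ≤ x := by linarith
    have k1 : 0 ≤ β * M ^ 2 / 12 * ((x - ℓ) ^ 2 * (x + 2 * ℓ)) := by positivity
    have k2 : 0 ≤ β * x * (W n P - M * ((P + Q) / 2 * δ n)) ^ 2 := by positivity
    have k3 : ε * c ≤ ε * x := by gcongr
    linarith

end BlowUp

/-! ### Rigidity of the cells -/

/-- Energy of the staircase with `N = ⌈L / ℓ⌉` equal steps on an interval of length `L`. The
remainder comes from the difference between `L / N` and the optimal step length `ℓ`. -/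
lemma stair_real {K ℓ L x N T : ℝ} (hK : 0 < K) (hℓ : 0 < ℓ) (hKℓ : 2 * K * ℓ ^ 3 = 4 / 3)
    (hT : 0 < T) (hTL : T ≤ L) (h1 : L ≤ N * ℓ) (h2 : N * ℓ ≤ L + ℓ) (hx : N * x = L) :
    N * (4 / 3) + N * (K * x ^ 3) ≤ 3 * K * ℓ ^ 2 * L + 3 * K * ℓ ^ 4 / T := by
  have hN : 0 < N := by
    by_contra hN
    nlinarith [mul_nonneg (sub_nonneg.mpr (not_lt.mp hN)) hℓ.le]
  have hx0 : 0 < x := by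
    by_contra hx0
    nlinarith [mul_nonneg hN.le (sub_nonneg.mpr (not_lt.mp hx0))]
  have hxl : x ≤ ℓ := le_of_mul_le_mul_left (by linarith : N * x ≤ N * ℓ) hN
  have e : N * (4 / 3) + N * (K * x ^ 3) = 3 * K * ℓ ^ 2 * L +
      N * (K * ((ℓ - x) ^ 2 * (x + 2 * ℓ))) := by
    linear_combination (-N) * hKℓ + 3 * K * ℓ ^ 2 * hx
  rw [e]
  have hy : N * (ℓ - x) ≤ ℓ := by linarith
  have hy0 : 0 ≤ ℓ - x := by linarith
  have k1 : N * (K * ((ℓ - x) ^ 2 * (x + 2 * ℓ))) ≤ N * (K * ((ℓ - x) ^ 2 * (3 * ℓ))) := by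
    gcongr; linarith
  have k2 : N * (K * ((ℓ - x) ^ 2 * (3 * ℓ))) * T ≤ 3 * K * ℓ ^ 4 := by
    have a1 : T ≤ N * ℓ := by linarith
    calc N * (K * ((ℓ - x) ^ 2 * (3 * ℓ))) * T ≤ N * (K * ((ℓ - x) ^ 2 * (3 * ℓ))) * (N * ℓ) := by
          gcongr
      _ = 3 * K * ℓ ^ 2 * (N * (ℓ - x)) ^ 2 := by ring
      _ ≤ 3 * K * ℓ ^ 2 * ℓ ^ 2 := by gcongr
      _ = 3 * K * ℓ ^ 4 := by ring
  have k3 : N * (K * ((ℓ - x) ^ 2 * (3 * ℓ))) ≤ 3 * K * ℓ ^ 4 / T := by rwa [le_div_iff₀ hT]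
  linarith

namespace BlowUp

variable {β M : ℝ} {δ Λ : ℕ → ℝ} {m W : ℕ → ℤ → ℝ}

set_option maxHeartbeats 1000000 in
/-- Energy upper bound between two distant big jumps, by comparison with an optimal staircase. -/
lemma chain_upper (h : BlowUp β M δ Λ m W) {ℓ : ℝ} (hℓ : 0 < ℓ)
    (hℓ3 : β * M ^ 2 * ℓ ^ 3 = 8) {R T : ℝ} (hR : 0 < R) (hT : 0 < T) {ε : ℝ} (hε : 0 < ε) :
    ∀ᶠ n in atTop, ∀ P S : ℤ, P < S → |(P : ℝ) * δ n| ≤ R → |(S : ℝ) * δ n| ≤ R →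
      Big (δ n) (W n) P → Big (δ n) (W n) S → T ≤ (S - P) * δ n →
      locEn (δ n) (Λ n) β (m n) (W n) P S ≤
        β * M ^ 2 * ℓ ^ 2 / 4 * ((S - P) * δ n) + β * M ^ 2 * ℓ ^ 4 / 4 / T + ε := by
  have hβ := h.β_pos
  obtain ⟨K, hK⟩ : ∃ K, K = β * M ^ 2 / 12 := ⟨_, rfl⟩
  have hK0 : 0 < K := by
    have : 0 < β * M ^ 2 * ℓ ^ 3 := by rw [hℓ3]; norm_num
    have := pos_of_mul_pos_left this (by positivity)
    rw [hK]; linarith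
  have hKℓ : 2 * K * ℓ ^ 3 = 4 / 3 := by rw [hK]; linear_combination (1 / 6) * hℓ3
  obtain ⟨c, hc, hsep⟩ := h.separation R
  obtain ⟨C, hC, hsup⟩ := h.sup_bound (R + 1)
  obtain ⟨Nm, hNm⟩ : ∃ Nm, Nm = 2 * R / ℓ + 1 := ⟨_, rfl⟩
  have hNm0 : 0 < Nm := by rw [hNm]; positivity
  obtain ⟨ε₁, hε₁⟩ : ∃ ε₁, ε₁ = ε / (3 * (Nm + 2)) := ⟨_, rfl⟩
  have hε₁0 : 0 < ε₁ := by rw [hε₁]; positivity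
  have hε₁e : (Nm + 2) * ε₁ = ε / 3 := by rw [hε₁]; field_simp
  obtain ⟨Y, hY⟩ : ∃ Y, Y = Nm * (K * (3 * ℓ ^ 2 + 3 * ℓ + 1)) := ⟨_, rfl⟩
  have hY0 : 0 < Y := by rw [hY]; positivity
  obtain ⟨X, hX⟩ : ∃ X, X = β * (2 * R) * (2 * (|M| * (ℓ + 1)) + 1) := ⟨_, rfl⟩
  have hX0 : 0 < X := by rw [hX]; positivity
  obtain ⟨η, hη⟩ : ∃ η, η = min 1 (ε / (3 * X)) := ⟨_, rfl⟩
  have hη0 : 0 < η := by rw [hη]; positivity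
  have hη1 : η ≤ 1 := by rw [hη]; exact min_le_left _ _
  have hηX : X * η ≤ ε / 3 := by
    calc X * η ≤ X * (ε / (3 * X)) := by
          refine mul_le_mul_of_nonneg_left ?_ hX0.le; rw [hη]; exact min_le_right _ _
      _ = ε / 3 := by field_simp
  obtain ⟨C1, hC1⟩ : ∃ C1, C1 = C + |M| * (R + (ℓ + 1)) := ⟨_, rfl⟩
  have hd0 : 0 < min 1 (ε / (3 * Y)) := by positivity
  filter_upwards [h.basic hd0 1, h.near R η hη0, h.locmin R, hsep, hsup, h.jcost_upper C1 hε₁0,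
    h.jcost_lower hc hε₁0]
    with n ⟨h1, h2, h3⟩ hnear hmin hsep hsup hup hlow P S hPS hP hS bP bS hTL
  have hd1 : δ n ≤ 1 := h2.trans (min_le_left _ _)
  have hd2 : Y * δ n ≤ ε / 3 := by
    calc Y * δ n ≤ Y * (ε / (3 * Y)) :=
          mul_le_mul_of_nonneg_left (h2.trans (min_le_right _ _)) hY0.le
      _ = ε / 3 := by field_simp
  obtain ⟨L, hL⟩ : ∃ L, L = ((S : ℝ) - P) * δ n := ⟨_, rfl⟩
  rw [← hL] at hTL
  rw [← hL]
  have hL0 : 0 < L := by linarith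
  have hLR : L ≤ 2 * R := by
    rw [abs_le] at hP hS; rw [hL, sub_mul]; linarith [hP.1, hS.2]
  obtain ⟨N, hN⟩ : ∃ N : ℕ, N = ⌈L / ℓ⌉₊ := ⟨_, rfl⟩
  have n1 : L ≤ N * ℓ := by rw [hN, ← div_le_iff₀ hℓ]; exact Nat.le_ceil _
  have n2' : (N : ℝ) ≤ L / ℓ + 1 := by
    rw [hN]; exact (Nat.ceil_lt_add_one (by positivity)).le
  have n2 : N * ℓ ≤ L + ℓ := by
    have := mul_le_mul_of_nonneg_right n2' hℓ.le
    rwa [add_mul, div_mul_cancel₀ _ hℓ.ne', one_mul] at this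
  have hNpos : 0 < N := by rw [hN]; exact Nat.ceil_pos.mpr (by positivity)
  have hNR : (0 : ℝ) < N := by exact_mod_cast hNpos
  have n3 : (N : ℝ) ≤ Nm := by
    rw [hNm]; refine n2'.trans ?_; gcongr
  obtain ⟨d, hd⟩ : ∃ d : ℤ, d = ⌈((S : ℝ) - P) / N⌉ := ⟨_, rfl⟩
  have hPS' : (P : ℝ) < S := by exact_mod_cast hPS
  have hdpos : 0 < d := by rw [hd]; exact Int.ceil_pos.mpr (div_pos (by linarith) hNR)
  have hNd : S - P ≤ N * d := by
    have : ((S : ℝ) - P) / N ≤ d := by rw [hd]; exact Int.le_ceil _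
    rw [div_le_iff₀ hNR] at this
    have h' : (S : ℝ) - P ≤ N * d := by linarith
    exact_mod_cast h'
  obtain ⟨x, hx⟩ : ∃ x, x = L / N := ⟨_, rfl⟩
  have hNx : N * x = L := by rw [hx]; field_simp
  have hx0 : 0 ≤ x := by rw [hx]; positivity
  have hxl : x ≤ ℓ := by rw [hx, div_le_iff₀ hNR]; linarith
  have hdx : d * δ n ≤ x + δ n := by
    have : (d : ℝ) ≤ ((S : ℝ) - P) / N + 1 := by rw [hd]; exact (Int.ceil_lt_add_one _).le
    have := mul_le_mul_of_nonneg_right this h1.le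
    rw [hx, hL]
    calc _ ≤ _ := this
      _ = _ := by ring
  have hdR : (0 : ℝ) < d := by exact_mod_cast hdpos
  have hdδ0 : 0 ≤ d * δ n := by positivity
  have hdδ : d * δ n ≤ ℓ + 1 := by linarith
  obtain ⟨zp, zq, hzp, hzq, hcomp⟩ := stair_compare (M := M) (ε := η) h1.le (by linarith) hβ.le hmin
    hPS hP hS hdpos hNd (fun l a b => hnear l (window_mem h1.le hP hS a b.le))
  have hz : |M| * (R + d * δ n) ≤ |M| * (R + (ℓ + 1)) := by gcongr
  have c1 : jcost (δ n) (Λ n) (zp - W n (P - 1)) ≤ 4 / 3 + ε₁ := by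
    refine hup _ ((abs_sub _ _).trans ?_)
    have := (hsup (P - 1) (by
      rw [abs_le] at hP ⊢; push_cast; rw [sub_mul]; constructor <;> linarith [hP.1, hP.2])).1
    rw [hC1]; linarith
  have c2 : jcost (δ n) (Λ n) (W n S - zq) ≤ 4 / 3 + ε₁ := by
    refine hup _ ((abs_sub _ _).trans ?_)
    have := (hsup S (by linarith)).1
    rw [hC1]; linarith
  have c3 : jcost (δ n) (Λ n) (M * (d * δ n)) ≤ 4 / 3 + ε₁ := by
    refine hup _ ?_
    rw [abs_mul, abs_of_nonneg hdδ0, hC1]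
    have : |M| * (d * δ n) ≤ |M| * (R + (ℓ + 1)) := by gcongr; linarith
    linarith
  have c4 := hlow _ (hsep P S hPS hP hS bP bS).2.2
  have c5 : ((N : ℝ) - 1) * jcost (δ n) (Λ n) (M * (d * δ n)) ≤ (N - 1) * (4 / 3 + ε₁) := by
    refine mul_le_mul_of_nonneg_left c3 ?_
    have : (1 : ℝ) ≤ N := by exact_mod_cast hNpos
    linarith
  have c6 : (N : ℝ) * (β * M ^ 2 / 12 * (d * δ n) ^ 3) ≤ N * (K * x ^ 3) + ε / 3 := by
    rw [← hK]
    have a1 : (d * δ n) ^ 3 ≤ (x + δ n) ^ 3 := by gcongr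
    have a2 : (x + δ n) ^ 3 ≤ x ^ 3 + δ n * (3 * ℓ ^ 2 + 3 * ℓ + 1) := by
      have e1 : (x + δ n) ^ 3 = x ^ 3 + δ n * (3 * x ^ 2 + 3 * (x * δ n) + δ n ^ 2) := by ring
      rw [e1]
      have b1 : x ^ 2 ≤ ℓ ^ 2 := by gcongr
      have b2 : x * δ n ≤ ℓ * 1 := by gcongr
      have b3 : δ n ^ 2 ≤ 1 := pow_le_one₀ h1.le hd1
      have := mul_le_mul_of_nonneg_left
        (show 3 * x ^ 2 + 3 * (x * δ n) + δ n ^ 2 ≤ 3 * ℓ ^ 2 + 3 * ℓ + 1 by linarith) h1.le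
      linarith
    have a3 : (N : ℝ) * (K * (d * δ n) ^ 3) ≤
        N * (K * (x ^ 3 + δ n * (3 * ℓ ^ 2 + 3 * ℓ + 1))) := by
      gcongr; exact a1.trans a2
    have a4 : (N : ℝ) * (K * (δ n * (3 * ℓ ^ 2 + 3 * ℓ + 1))) ≤
        Nm * (K * (δ n * (3 * ℓ ^ 2 + 3 * ℓ + 1))) := by gcongr
    have a5 : Nm * (K * (δ n * (3 * ℓ ^ 2 + 3 * ℓ + 1))) = Y * δ n := by rw [hY]; ring
    linarith
  have c7 : β * ((S - P) * δ n) * (2 * (|M| * (d * δ n)) * η + η ^ 2) ≤ ε / 3 := by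
    rw [← hL]
    have a1 : 2 * (|M| * (d * δ n)) * η + η ^ 2 ≤ 2 * (|M| * (ℓ + 1)) * η + 1 * η := by
      rw [sq]; gcongr
    calc β * L * (2 * (|M| * (d * δ n)) * η + η ^ 2)
        ≤ β * (2 * R) * (2 * (|M| * (ℓ + 1)) * η + 1 * η) := by gcongr
      _ = X * η := by rw [hX]; ring
      _ ≤ ε / 3 := hηX
  have c8 := stair_real hK0 hℓ hKℓ hT hTL n1 n2 hNx
  have c9 : ((N : ℝ) + 2) * ε₁ ≤ ε / 3 := by rw [← hε₁e]; gcongr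
  have e1 : 3 * K * ℓ ^ 2 * L = β * M ^ 2 * ℓ ^ 2 / 4 * L := by rw [hK]; ring
  have e2 : 3 * K * ℓ ^ 4 / T = β * M ^ 2 * ℓ ^ 4 / 4 / T := by rw [hK]; ring
  rw [e1, e2] at c8
  linarith

/-- Asymptotic optimality of each plateau: its excess energy with respect to the optimal length
`ℓ` and the optimal height tends to zero. -/
lemma rigid_energy (h : BlowUp β M δ Λ m W) (hM : M ≠ 0) {ℓ : ℝ} (hℓ : 0 < ℓ)
    (hℓ3 : β * M ^ 2 * ℓ ^ 3 = 8) {R : ℝ} (hR : 0 < R) {ε : ℝ} (hε : 0 < ε) :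
    ∀ᶠ n in atTop, ∀ P Q : ℤ, P < Q → |(P : ℝ) * δ n| ≤ R → |(Q : ℝ) * δ n| ≤ R →
      Big (δ n) (W n) P → Big (δ n) (W n) Q →
      (∀ l, P < l → l < Q → ¬ Big (δ n) (W n) l) →
      β * M ^ 2 / 12 * (((Q - P) * δ n - ℓ) ^ 2 * ((Q - P) * δ n + 2 * ℓ)) +
        β * ((Q - P) * δ n) * (W n P - M * ((P + Q) / 2 * δ n)) ^ 2 ≤ ε := by
  have hβ := h.β_pos
  obtain ⟨R0, hR0, hgap⟩ := h.gap hM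
  obtain ⟨T, hT⟩ : ∃ T, T = R0 + β * M ^ 2 * ℓ ^ 4 / (2 * ε) := ⟨_, rfl⟩
  have hTR : R0 ≤ T := by
    rw [hT]; have : 0 ≤ β * M ^ 2 * ℓ ^ 4 / (2 * ε) := by positivity
    linarith
  have hT0 : 0 < T := by linarith
  have hTe : β * M ^ 2 * ℓ ^ 4 / 4 / T ≤ ε / 2 := by
    rw [div_le_iff₀ hT0, hT]
    have : ε / 2 * (β * M ^ 2 * ℓ ^ 4 / (2 * ε)) = β * M ^ 2 * ℓ ^ 4 / 4 := by field_simp; norm_num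
    nlinarith
  obtain ⟨R1, hR1⟩ : ∃ R1, R1 = R + T + R0 + 2 := ⟨_, rfl⟩
  have hR1R : R ≤ R1 := by linarith
  have hR10 : 0 < R1 := by linarith
  obtain ⟨ε₁, hε₁⟩ : ∃ ε₁, ε₁ = ε / 6 / (2 * R1 + 1) := ⟨_, rfl⟩
  have hε₁0 : 0 < ε₁ := by rw [hε₁]; positivity
  have hε₁e : ε₁ * (2 * R1 + 1) = ε / 6 := by rw [hε₁]; field_simp
  have h6 : 0 < ε / 6 := by positivity
  filter_upwards [h.basic one_pos 1, hgap R1, h.plateau_energy R1 h6,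
    h.chain_lower hℓ hℓ3 R1 hε₁0, h.chain_upper hℓ hℓ3 hR10 hT0 h6]
    with n ⟨h1, h2, h3⟩ hgap hpl hlow hup P Q hPQ hP hQ bP bQ hno
  have hP1 : |(P : ℝ) * δ n| ≤ R1 := hP.trans hR1R
  have hQ1 : |(Q : ℝ) * δ n| ≤ R1 := hQ.trans hR1R
  have ceil_bd : ∀ t : ℝ, t ≤ ⌈t / δ n⌉ * δ n ∧ ⌈t / δ n⌉ * δ n ≤ t + 1 := fun t => by
    refine ⟨by rw [← div_le_iff₀ h1]; exact Int.le_ceil _, ?_⟩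
    have := mul_le_mul_of_nonneg_right (Int.ceil_lt_add_one (t / δ n)).le h1.le
    rw [add_mul, div_mul_cancel₀ _ h1.ne'] at this
    linarith
  obtain ⟨t1, t2⟩ := ceil_bd T
  obtain ⟨r1, r2⟩ := ceil_bd R0
  rw [abs_le] at hP
  -- A big jump at distance at least `T` to the right of `P`.
  obtain ⟨S, s1, s2, bS⟩ := hgap (P + ⌈T / δ n⌉) (P + ⌈T / δ n⌉ + ⌈R0 / δ n⌉)
    (by push_cast; rw [add_mul, abs_le]; constructor <;> linarith [hP.1, hP.2])
    (by push_cast; rw [add_mul, add_mul, abs_le]; constructor <;> linarith [hP.1, hP.2])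
    (by push_cast; linarith)
  have s1' : ((P : ℝ) + ⌈T / δ n⌉) * δ n ≤ S * δ n := by
    refine mul_le_mul_of_nonneg_right ?_ h1.le; exact_mod_cast s1.le
  have s2' : (S : ℝ) * δ n ≤ (P + ⌈T / δ n⌉ + ⌈R0 / δ n⌉) * δ n := by
    refine mul_le_mul_of_nonneg_right ?_ h1.le; exact_mod_cast s2.le
  rw [add_mul] at s1'
  rw [add_mul, add_mul] at s2'
  have hS : |(S : ℝ) * δ n| ≤ R1 := by
    rw [abs_le]; constructor <;> linarith [hP.1, hP.2]
  have hTL : T ≤ (S - P) * δ n := by rw [sub_mul]; linarith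
  have hQS : Q ≤ S := by
    by_contra hlt
    push Not at hlt
    obtain ⟨l, l1, l2, l3⟩ := hgap P Q hP1 hQ1 (by
      have : (S : ℝ) ≤ Q := by exact_mod_cast hlt.le
      have := mul_le_mul_of_nonneg_right this h1.le
      rw [sub_mul]; linarith)
    exact hno l l1 l2 l3
  have u := hup P S (by omega) hP1 hS bP bS hTL
  have l1 := hpl P Q hPQ hP1 hQ1 bP bQ hno
  have l2 := hlow Q S hQS hQ1 hS bQ bS
  rw [locEn_add hPQ.le hQS] at u
  have hSQ : (S - Q) * δ n ≤ 2 * R1 := by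
    rw [abs_le] at hS hQ1; rw [sub_mul]; linarith [hS.2, hQ1.1]
  have l3 : ε₁ * ((S - Q) * δ n) ≤ ε / 6 := by
    rw [← hε₁e]
    exact mul_le_mul_of_nonneg_left (by linarith) hε₁0.le
  have e : ((S : ℝ) - P) * δ n = (Q - P) * δ n + (S - Q) * δ n := by ring
  rw [e] at u
  have key : 4 / 3 + β * M ^ 2 / 12 * ((Q - P) * δ n) ^ 3 - β * M ^ 2 * ℓ ^ 2 / 4 * ((Q - P) * δ n) =
      β * M ^ 2 / 12 * (((Q - P) * δ n - ℓ) ^ 2 * ((Q - P) * δ n + 2 * ℓ)) := by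
    linear_combination (-1/6) * hℓ3
  linarith

/-- Consecutive big jumps are asymptotically at distance `ℓ`, and on the plateau between them the
function is close to the value of the line at the midpoint. -/
lemma rigidity (h : BlowUp β M δ Λ m W) (hM : M ≠ 0) {ℓ : ℝ} (hℓ : 0 < ℓ)
    (hℓ3 : β * M ^ 2 * ℓ ^ 3 = 8) {R : ℝ} (hR : 0 < R) {ε : ℝ} (hε : 0 < ε) :
    ∀ᶠ n in atTop, ∀ P Q : ℤ, P < Q → |(P : ℝ) * δ n| ≤ R → |(Q : ℝ) * δ n| ≤ R →
      Big (δ n) (W n) P → Big (δ n) (W n) Q →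
      (∀ l, P < l → l < Q → ¬ Big (δ n) (W n) l) →
      |(Q - P) * δ n - ℓ| ≤ ε ∧
      ∀ l, P ≤ l → l < Q → |W n l - M * ((P + Q) / 2 * δ n)| ≤ ε := by
  have hβ := h.β_pos
  obtain ⟨e, he⟩ : ∃ e, e = min (ε / 2) (ℓ / 2) := ⟨_, rfl⟩
  have he0 : 0 < e := by rw [he]; positivity
  have he1 : e ≤ ε / 2 := by rw [he]; exact min_le_left _ _
  have he2 : e ≤ ℓ / 2 := by rw [he]; exact min_le_right _ _
  obtain ⟨η, hη⟩ : ∃ η, η = min (β * M ^ 2 / 12 * (e ^ 2 * ℓ)) (β * (ℓ / 2) * e ^ 2) := ⟨_, rfl⟩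
  have hη0 : 0 < η := by rw [hη]; positivity
  filter_upwards [h.rigid_energy hM hℓ hℓ3 hR hη0, h.δ_pos, h.plateau_osc R he0]
    with n hrig hδ hosc P Q hPQ hP hQ bP bQ hno
  have hr := hrig P Q hPQ hP hQ bP bQ hno
  have hPQ' : (P : ℝ) < Q := by exact_mod_cast hPQ
  obtain ⟨x, hx⟩ : ∃ x, x = ((Q : ℝ) - P) * δ n := ⟨_, rfl⟩
  have hx0 : 0 < x := by rw [hx]; exact mul_pos (by linarith) hδ
  rw [← hx] at hr ⊢
  have hA : 0 ≤ β * x * (W n P - M * ((P + Q) / 2 * δ n)) ^ 2 := by positivity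
  have hB : 0 ≤ β * M ^ 2 / 12 * ((x - ℓ) ^ 2 * (x + 2 * ℓ)) := by positivity
  have h1 : |x - ℓ| ≤ e := by
    refine abs_le_of_sq_le_sq ?_ he0.le
    have : β * M ^ 2 / 12 * ((x - ℓ) ^ 2 * ℓ) ≤ β * M ^ 2 / 12 * (e ^ 2 * ℓ) := by
      have a : β * M ^ 2 / 12 * ((x - ℓ) ^ 2 * ℓ) ≤
        β * M ^ 2 / 12 * ((x - ℓ) ^ 2 * (x + 2 * ℓ)) := by gcongr; linarith
      have b : η ≤ β * M ^ 2 / 12 * (e ^ 2 * ℓ) := by rw [hη]; exact min_le_left _ _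
      linarith
    have := le_of_mul_le_mul_left this (by positivity)
    exact le_of_mul_le_mul_right this hℓ
  have hxl : ℓ / 2 ≤ x := by rw [abs_le] at h1; linarith [h1.1]
  have h2 : |W n P - M * ((P + Q) / 2 * δ n)| ≤ e := by
    refine abs_le_of_sq_le_sq ?_ he0.le
    have : β * (ℓ / 2) * (W n P - M * ((P + Q) / 2 * δ n)) ^ 2 ≤ β * (ℓ / 2) * e ^ 2 := by
      have a : β * (ℓ / 2) * (W n P - M * ((P + Q) / 2 * δ n)) ^ 2 ≤
        β * x * (W n P - M * ((P + Q) / 2 * δ n)) ^ 2 := by gcongr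
      have b : η ≤ β * (ℓ / 2) * e ^ 2 := by rw [hη]; exact min_le_right _ _
      linarith
    exact le_of_mul_le_mul_left this (by positivity)
  refine ⟨by linarith, fun l a b => ?_⟩
  have := hosc P Q hP hQ hno l a b
  calc |W n l - M * ((P + Q) / 2 * δ n)| = |(W n l - W n P) + (W n P - M * ((P + Q) / 2 * δ n))| := by
        congr 1; ring
    _ ≤ _ := abs_add_le _ _
    _ ≤ ε := by linarith

end BlowUp

/-! ### Position and height of the jumps -/

/-- `[P, Q)` is the plateau of `W` that contains `l`: it is delimited by two consecutive big
jumps. -/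
def Cell (δ : ℝ) (W : ℤ → ℝ) (P Q l : ℤ) : Prop :=
  P ≤ l ∧ l < Q ∧ Big δ W P ∧ Big δ W Q ∧ ∀ j, P < j → j < Q → ¬ Big δ W j

lemma exists_prev (B : ℤ → Prop) {S l : ℤ} (h : S ≤ l) (hS : B S) :
    ∃ P, S ≤ P ∧ P ≤ l ∧ B P ∧ ∀ j, P < j → j ≤ l → ¬ B j := by
  obtain ⟨Q, h1, h2, h3, h4⟩ := exists_next (fun x => B (-x)) (P := -(l + 1)) (S := -S) (by omega)
    (by simpa using hS)
  refine ⟨-Q, by omega, by omega, h3, fun j a b => ?_⟩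
  have := h4 (-j) (by omega) (by omega)
  simpa using this

lemma ceil_mul_bound {δ : ℝ} (hδ : 0 < δ) (t : ℝ) :
    t ≤ ⌈t / δ⌉ * δ ∧ ⌈t / δ⌉ * δ ≤ t + δ := by
  refine ⟨by rw [← div_le_iff₀ hδ]; exact Int.le_ceil _, ?_⟩
  have := mul_le_mul_of_nonneg_right (Int.ceil_lt_add_one (t / δ)).le hδ.le
  rw [add_mul, div_mul_cancel₀ _ hδ.ne'] at this
  linarith

lemma floor_mul_bound {δ : ℝ} (hδ : 0 < δ) (t : ℝ) :
    ⌊t / δ⌋ * δ ≤ t ∧ t - δ ≤ ⌊t / δ⌋ * δ := by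
  refine ⟨by rw [← le_div_iff₀ hδ]; exact Int.floor_le _, ?_⟩
  have := mul_le_mul_of_nonneg_right (Int.lt_floor_add_one (t / δ)).le hδ.le
  rw [add_mul, div_mul_cancel₀ _ hδ.ne'] at this
  linarith

lemma sum_jumps (W : ℤ → ℝ) {p l : ℤ} (h : p ≤ l) :
    ∑ j ∈ Finset.Ico (p + 1) (l + 1), (W j - W (j - 1)) = W l - W p := by
  induction l, h using Int.leInduction with
  | base => simp
  | succ l hl ih =>
    rw [sum_Ico_succ _ (by omega : p + 1 ≤ l + 1), ih, add_sub_cancel_right]; ring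

namespace BlowUp

variable {β M : ℝ} {δ Λ : ℕ → ℝ} {m W : ℕ → ℤ → ℝ}

lemma comp (h : BlowUp β M δ Λ m W) {g : ℕ → ℕ} (hg : Tendsto g atTop atTop) :
    BlowUp β M (fun n => δ (g n)) (fun n => Λ (g n)) (fun n => m (g n)) (fun n => W (g n)) where
  β_pos := h.β_pos
  δ_pos := hg.eventually h.δ_pos
  δ_lim := h.δ_lim.comp hg
  Λ_lim := h.Λ_lim.comp hg
  ratio := h.ratio.comp hg
  sqrt_lim := h.sqrt_lim.comp hg
  near R ε hε := hg.eventually (h.near R ε hε)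
  poly R T := hg.eventually (h.poly R T)
  locmin R := hg.eventually (h.locmin R)

lemma cell_exists (h : BlowUp β M δ Λ m W) (hM : M ≠ 0) :
    ∃ R0 : ℝ, 0 < R0 ∧ ∀ R : ℝ, ∀ᶠ n in atTop, ∀ l : ℤ, |(l : ℝ) * δ n| ≤ R →
      ∃ P Q, Cell (δ n) (W n) P Q l ∧ |(P : ℝ) * δ n| ≤ R + R0 ∧ |(Q : ℝ) * δ n| ≤ R + R0 := by
  obtain ⟨R0, hR0, hgap⟩ := h.gap hM
  refine ⟨R0 + 1, by linarith, fun R => ?_⟩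
  filter_upwards [h.basic one_pos 1, hgap (R + (R0 + 1))] with n ⟨h1, h2, _⟩ hgap l hl
  obtain ⟨r1, r2⟩ := ceil_mul_bound h1 R0
  have hl' : |(l : ℝ) * δ n| ≤ R + (R0 + 1) := by linarith
  have hl0 := abs_le.mp hl
  have w1 : |((l + ⌈R0 / δ n⌉ : ℤ) : ℝ) * δ n| ≤ R + (R0 + 1) := by
    push_cast; rw [add_mul, abs_le]; constructor <;> linarith [hl0.1, hl0.2]
  have w2 : |((l - ⌈R0 / δ n⌉ : ℤ) : ℝ) * δ n| ≤ R + (R0 + 1) := by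
    push_cast; rw [sub_mul, abs_le]; constructor <;> linarith [hl0.1, hl0.2]
  obtain ⟨S, s1, s2, s3⟩ := hgap _ _ hl' w1 (by push_cast; linarith)
  obtain ⟨S', s1', s2', s3'⟩ := hgap _ _ w2 hl' (by push_cast; linarith)
  obtain ⟨Q, q1, q2, q3, q4⟩ := exists_next _ s1 s3
  obtain ⟨P, p1, p2, p3, p4⟩ := exists_prev _ s2'.le s3'
  refine ⟨P, Q, ⟨p2, q1, p3, q3, fun j a b => ?_⟩, window_mem h1.le w2 hl' (by omega) p2,
    window_mem h1.le hl' w1 q1.le (by omega)⟩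
  by_cases hj : j ≤ l
  · exact p4 j a hj
  · exact q4 j (by omega) b

/-- Every cell of the window lies on a plateau of nearly optimal length and height. -/
lemma cell_rigid (h : BlowUp β M δ Λ m W) (hM : M ≠ 0) {ℓ : ℝ} (hℓ : 0 < ℓ)
    (hℓ3 : β * M ^ 2 * ℓ ^ 3 = 8) (R : ℝ) {ε : ℝ} (hε : 0 < ε) :
    ∀ᶠ n in atTop, ∀ l : ℤ, |(l : ℝ) * δ n| ≤ R →
      ∃ P Q, Cell (δ n) (W n) P Q l ∧ |((Q : ℝ) - P) * δ n - ℓ| ≤ ε ∧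
        |W n l - M * (((P : ℝ) + Q) / 2 * δ n)| ≤ ε := by
  obtain ⟨R0, hR0, hcell⟩ := h.cell_exists hM
  filter_upwards [hcell R, h.rigidity hM hℓ hℓ3 (R := |R| + R0) (by positivity) hε]
    with n hcell hrig l hl
  obtain ⟨P, Q, hc, hP, hQ⟩ := hcell l hl
  have hR := le_abs_self R
  obtain ⟨r1, r2⟩ := hrig P Q (by have := hc.1; have := hc.2.1; omega) (by linarith) (by linarith)
    hc.2.2.1 hc.2.2.2.1 hc.2.2.2.2
  exact ⟨P, Q, hc, r1, r2 l hc.1 hc.2.1⟩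

/-- All big jumps have the sign of the slope of the forcing term. -/
lemma jump_sign (h : BlowUp β M δ Λ m W) (hM : M ≠ 0) {ℓ : ℝ} (hℓ : 0 < ℓ)
    (hℓ3 : β * M ^ 2 * ℓ ^ 3 = 8) (R : ℝ) :
    ∀ᶠ n in atTop, ∀ Q : ℤ, |(Q : ℝ) * δ n| ≤ R → Big (δ n) (W n) Q →
      0 < M * (W n Q - W n (Q - 1)) := by
  have hM0 : 0 < |M| := abs_pos.mpr hM
  have hε : 0 < |M| * ℓ / (2 * (|M| + 2)) := by positivity
  filter_upwards [h.cell_rigid hM hℓ hℓ3 (R + 1) hε, h.basic one_pos 1]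
    with n hrig ⟨h1, h2, _⟩ Q hQ bQ
  obtain ⟨ε, hεd⟩ : ∃ ε, ε = |M| * ℓ / (2 * (|M| + 2)) := ⟨_, rfl⟩
  rw [← hεd] at hrig hε
  obtain ⟨P, S, c1, a1, b1⟩ := hrig Q (by linarith)
  obtain ⟨P', S', c2, a2, b2⟩ := hrig (Q - 1) (by
    rw [abs_le] at hQ ⊢; push_cast; rw [sub_mul]; constructor <;> linarith [hQ.1, hQ.2])
  have e1 : P = Q := by
    by_contra hne
    exact c1.2.2.2.2 Q (by have := c1.1; omega) c1.2.1 bQ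
  have e2 : S' = Q := by
    by_contra hne
    exact c2.2.2.2.2 Q (by have := c2.1; omega) (by have := c2.2.1; omega) bQ
  subst e1
  subst e2
  rw [abs_le] at a1 a2
  obtain ⟨t, ht⟩ : ∃ t, t = W n S' - W n (S' - 1) := ⟨_, rfl⟩
  obtain ⟨x, hx⟩ : ∃ x, x = ((S : ℝ) - P') / 2 * δ n := ⟨_, rfl⟩
  have hxl : ℓ - ε ≤ x := by rw [hx]; nlinarith [a1.1, a2.1]
  have htx : |t - M * x| ≤ 2 * ε := by
    have e : t - M * x = (W n S' - M * (((S' : ℝ) + S) / 2 * δ n)) -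
        (W n (S' - 1) - M * (((P' : ℝ) + S') / 2 * δ n)) := by rw [ht, hx]; ring
    rw [e]; exact (abs_sub _ _).trans (by linarith)
  rw [← ht]
  have hMM : M * M = |M| * |M| := (abs_mul_abs_self M).symm
  have k1 : -(|M| * (2 * ε)) ≤ M * (t - M * x) := by
    have : |M * (t - M * x)| ≤ |M| * (2 * ε) := by rw [abs_mul]; gcongr
    exact (abs_le.mp this).1
  have k2 : M * t = M * (t - M * x) + |M| * |M| * x := by rw [← hMM]; ring
  have k3 : |M| * |M| * (ℓ - ε) ≤ |M| * |M| * x := by gcongr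
  have k4 : ε * (2 * (|M| + 2)) = |M| * ℓ := by rw [hεd]; field_simp
  have k5 : |M| * (|M| * ℓ) - |M| * (ε * (|M| + 2)) > 0 := by
    rw [← k4, ← mul_sub]
    refine mul_pos hM0 ?_
    have : 0 < ε * (|M| + 2) := by positivity
    linarith
  rw [k2]
  nlinarith

/-- Up to an infinitesimal error, the rescaled minimizers are monotone on bounded windows: their
variation equals the absolute value of their increment. -/
lemma var_bound (h : BlowUp β M δ Λ m W) (hM : M ≠ 0) {ℓ : ℝ} (hℓ : 0 < ℓ)
    (hℓ3 : β * M ^ 2 * ℓ ^ 3 = 8) (R : ℝ) {ε : ℝ} (hε : 0 < ε) :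
    ∀ᶠ n in atTop, ∀ p l : ℤ, p ≤ l → |(p : ℝ) * δ n| ≤ R → |(l : ℝ) * δ n| ≤ R →
      ∑ j ∈ Finset.Ico (p + 1) (l + 1), |W n j - W n (j - 1)| ≤ |W n l - W n p| + ε := by
  classical
  obtain ⟨σ, hσ, hσM⟩ : ∃ σ : ℝ, |σ| = 1 ∧ ∀ t, 0 < M * t → |t| = σ * t := by
    rcases lt_or_gt_of_ne hM with h0 | h0
    · refine ⟨-1, by simp, fun t ht => ?_⟩
      have : t < 0 := by by_contra h1; nlinarith [mul_nonneg_of_nonpos_of_nonpos h0.le (neg_nonpos.mpr (not_lt.mp h1))]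
      rw [abs_of_neg this]; ring
    · refine ⟨1, by simp, fun t ht => ?_⟩
      rw [abs_of_pos (pos_of_mul_pos_right ht h0.le)]; ring
  filter_upwards [h.small_var (R + 1) (half_pos hε), h.jump_sign hM hℓ hℓ3 R, h.basic one_pos 1]
    with n hsv hsg ⟨h1, h2, _⟩ p l hpl hp hl
  have hs := hsv (p + 1) (l + 1) (by omega)
    (by rw [abs_le] at hp ⊢; push_cast; rw [add_mul]; constructor <;> linarith [hp.1, hp.2])
    (by rw [abs_le] at hl ⊢; push_cast; rw [add_mul]; constructor <;> linarith [hl.1, hl.2])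
  have key : ∀ j ∈ Finset.Ico (p + 1) (l + 1), |W n j - W n (j - 1)| ≤
      σ * (W n j - W n (j - 1)) +
        2 * (if Big (δ n) (W n) j then 0 else |W n j - W n (j - 1)|) := by
    intro j hj
    obtain ⟨a, b⟩ := Finset.mem_Ico.mp hj
    split_ifs with hB
    · rw [hσM _ (hsg j (window_mem h1.le hp hl (by omega) (by omega)) hB)]; linarith
    · have : |σ * (W n j - W n (j - 1))| = |W n j - W n (j - 1)| := by rw [abs_mul, hσ, one_mul]
      linarith [neg_abs_le (σ * (W n j - W n (j - 1)))]
  refine (Finset.sum_le_sum key).trans ?_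
  rw [Finset.sum_add_distrib, ← Finset.mul_sum, ← Finset.mul_sum, sum_jumps _ hpl]
  have : σ * (W n l - W n p) ≤ |W n l - W n p| := by
    refine (le_abs_self _).trans ?_
    rw [abs_mul, hσ, one_mul]
  linarith

/-- The first big jump to the right of the origin is asymptotically at `p0`. -/
def FirstJump (δ : ℕ → ℝ) (W : ℕ → ℤ → ℝ) (p0 : ℝ) : Prop :=
  ∀ ε : ℝ, 0 < ε → ∀ᶠ n in atTop, ∃ P Q, Cell (δ n) (W n) P Q 0 ∧ |(Q : ℝ) * δ n - p0| ≤ ε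

/-- Compactness: the position of the first jump is the only parameter that is not determined in the
limit, and it ranges in a bounded interval. -/
lemma exists_firstJump (h : BlowUp β M δ Λ m W) (hM : M ≠ 0) {ℓ : ℝ} (hℓ : 0 < ℓ)
    (hℓ3 : β * M ^ 2 * ℓ ^ 3 = 8) :
    ∃ φ : ℕ → ℕ, StrictMono φ ∧ ∃ p0 ∈ Set.Icc (0 : ℝ) ℓ,
      FirstJump (fun n => δ (φ n)) (fun n => W (φ n)) p0 := by
  have hev : ∀ ε : ℝ, 0 < ε → ∀ᶠ n in atTop, ∃ P Q, Cell (δ n) (W n) P Q 0 ∧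
      (Q : ℝ) * δ n ∈ Set.Icc 0 (ℓ + ε) := by
    intro ε hε
    filter_upwards [h.cell_rigid hM hℓ hℓ3 0 hε, h.δ_pos] with n hn hδ
    obtain ⟨P, Q, hc, h1, -⟩ := hn 0 (by simp)
    have hP : (P : ℝ) ≤ 0 := by exact_mod_cast hc.1
    have hQ : (0 : ℝ) ≤ Q := by exact_mod_cast hc.2.1.le
    rw [abs_le, sub_mul] at h1
    refine ⟨P, Q, hc, by positivity, ?_⟩
    have := mul_nonpos_of_nonpos_of_nonneg hP hδ.le
    linarith [h1.2]
  have hch : ∀ n, ∃ x ∈ Set.Icc (0 : ℝ) (ℓ + 1), (∃ P Q, Cell (δ n) (W n) P Q 0 ∧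
      (Q : ℝ) * δ n ∈ Set.Icc 0 (ℓ + 1)) → ∃ P Q, Cell (δ n) (W n) P Q 0 ∧ x = (Q : ℝ) * δ n := by
    intro n
    by_cases hn : ∃ P Q, Cell (δ n) (W n) P Q 0 ∧ (Q : ℝ) * δ n ∈ Set.Icc 0 (ℓ + 1)
    · obtain ⟨P, Q, a, b⟩ := hn
      exact ⟨_, b, fun _ => ⟨P, Q, a, rfl⟩⟩
    · exact ⟨0, ⟨le_rfl, by linarith⟩, fun hx => absurd hx hn⟩
  choose x hx hxe using hch
  obtain ⟨p0, hp0, φ, hφ, hlim⟩ := isCompact_Icc.tendsto_subseq hx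
  have hF : FirstJump (fun n => δ (φ n)) (fun n => W (φ n)) p0 := by
    intro ε hε
    filter_upwards [hφ.tendsto_atTop.eventually (hev 1 one_pos),
      hlim.eventually (Metric.closedBall_mem_nhds p0 hε)] with n h1 h2
    obtain ⟨P, Q, a, b⟩ := hxe (φ n) h1
    refine ⟨P, Q, a, ?_⟩
    rw [← b]
    simpa [Real.dist_eq] using h2
  refine ⟨φ, hφ, p0, ⟨hp0.1, ?_⟩, hF⟩
  refine le_of_forall_pos_le_add fun ε hε => ?_
  obtain ⟨n, ⟨P, Q, a, b⟩, P', Q', a', b'⟩ := ((hF (ε / 2) (by positivity)).and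
    (hφ.tendsto_atTop.eventually (hev (ε / 2) (by positivity)))).exists
  -- The plateau that contains a given cell is unique.
  have e : Q = Q' := by
    rcases lt_trichotomy Q Q' with hlt | heq | hgt
    · exact absurd a.2.2.2.1 (a'.2.2.2.2 Q (by have := a'.1; have := a.2.1; omega) hlt)
    · exact heq
    · exact absurd a'.2.2.2.1 (a.2.2.2.2 Q' (by have := a.1; have := a'.2.1; omega) hgt)
  subst e
  rw [abs_le] at b
  linarith [b.1, b'.2]

lemma jumps_at (h : BlowUp β M δ Λ m W) (hM : M ≠ 0) {ℓ : ℝ} (hℓ : 0 < ℓ)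
    (hℓ3 : β * M ^ 2 * ℓ ^ 3 = 8) {p0 : ℝ} (hp : FirstJump δ W p0) (i : ℤ) :
    ∀ ε : ℝ, 0 < ε → ∀ᶠ n in atTop, ∃ P, Big (δ n) (W n) P ∧ |(P : ℝ) * δ n - (p0 + i * ℓ)| ≤ ε := by
  induction i using Int.induction_on with
  | zero =>
    intro ε hε
    filter_upwards [hp ε hε] with n ⟨P, Q, hc, hQ⟩
    exact ⟨Q, hc.2.2.2.1, by simpa using hQ⟩
  | succ i ih =>
    intro ε hε
    filter_upwards [ih (ε / 2) (half_pos hε),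
      h.cell_rigid hM hℓ hℓ3 (|p0 + i * ℓ| + ε) (half_pos hε)] with n ⟨P, bP, hP⟩ hcell
    obtain ⟨P', Q, c, h1, -⟩ := hcell P (by
      have : |(P : ℝ) * δ n| ≤ |(P : ℝ) * δ n - (p0 + i * ℓ)| + |p0 + i * ℓ| := by
        simpa using abs_add_le ((P : ℝ) * δ n - (p0 + i * ℓ)) (p0 + i * ℓ)
      push_cast at hP
      linarith)
    have e : P' = P := by
      by_contra hne
      exact c.2.2.2.2 P (by have := c.1; omega) c.2.1 bP
    subst e
    refine ⟨Q, c.2.2.2.1, ?_⟩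
    rw [abs_le] at *
    push_cast at *
    rw [sub_mul] at h1
    constructor <;> linarith [h1.1, h1.2, hP.1, hP.2]
  | pred i ih =>
    intro ε hε
    filter_upwards [ih (ε / 2) (half_pos hε), h.basic one_pos 1,
      h.cell_rigid hM hℓ hℓ3 (|p0 + -i * ℓ| + ε + 1) (half_pos hε)]
      with n ⟨P, bP, hP⟩ ⟨d1, d2, _⟩ hcell
    obtain ⟨P', Q, c, h1, -⟩ := hcell (P - 1) (by
      have : |(P : ℝ) * δ n| ≤ |(P : ℝ) * δ n - (p0 + -i * ℓ)| + |p0 + -i * ℓ| := by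
        simpa using abs_add_le ((P : ℝ) * δ n - (p0 + -i * ℓ)) (p0 + -i * ℓ)
      have h3 : |((P - 1 : ℤ) : ℝ) * δ n| ≤ |(P : ℝ) * δ n| + δ n := by
        push_cast; rw [sub_mul, one_mul]
        refine (abs_sub _ _).trans ?_
        rw [abs_of_pos d1]
      push_cast at hP
      linarith)
    have e : Q = P := by
      by_contra hne
      exact c.2.2.2.2 P (by have := c.1; omega) (by have := c.2.1; omega) bP
    subst e
    refine ⟨P', c.2.2.1, ?_⟩
    rw [abs_le] at *
    push_cast at *
    rw [sub_mul] at h1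
    constructor <;> linarith [h1.1, h1.2, hP.1, hP.2]

lemma tendsto_zero_cell (h : BlowUp β M δ Λ m W) (hM : M ≠ 0) {ℓ : ℝ} (hℓ : 0 < ℓ)
    (hℓ3 : β * M ^ 2 * ℓ ^ 3 = 8) {p0 : ℝ} (hp : FirstJump δ W p0) :
    Tendsto (fun n => W n 0) atTop (nhds (M * (p0 - ℓ / 2))) := by
  rw [Metric.tendsto_nhds]
  intro ε hε
  obtain ⟨e, he⟩ : ∃ e, e = ε / (2 * |M| + 2) := ⟨_, rfl⟩
  have he0 : 0 < e := by rw [he]; positivity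
  have hee : e * (2 * |M| + 2) = ε := by rw [he]; field_simp
  filter_upwards [hp e he0, h.cell_rigid hM hℓ hℓ3 0 he0] with n ⟨P, Q, c, hQ⟩ hcell
  obtain ⟨P', Q', c', h1, h2⟩ := hcell 0 (by simp)
  have eQ : Q = Q' := by
    rcases lt_trichotomy Q Q' with hlt | heq | hgt
    · exact absurd c.2.2.2.1 (c'.2.2.2.2 Q (by have := c'.1; have := c.2.1; omega) hlt)
    · exact heq
    · exact absurd c'.2.2.2.1 (c.2.2.2.2 Q' (by have := c.1; have := c'.2.1; omega) hgt)
  subst eQ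
  have h3 : |((P' : ℝ) + Q) / 2 * δ n - (p0 - ℓ / 2)| ≤ 2 * e := by
    rw [abs_le, sub_mul] at h1
    rw [abs_le] at hQ ⊢
    have eP : ((P' : ℝ) + Q) / 2 * δ n = Q * δ n - (Q * δ n - P' * δ n) / 2 := by ring
    rw [eP]
    constructor <;> linarith [h1.1, h1.2, hQ.1, hQ.2]
  rw [Real.dist_eq]
  have eW : W n 0 - M * (p0 - ℓ / 2) = (W n 0 - M * (((P' : ℝ) + Q) / 2 * δ n)) +
      M * (((P' : ℝ) + Q) / 2 * δ n - (p0 - ℓ / 2)) := by ring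
  rw [eW]
  refine (abs_add_le _ _).trans_lt ?_
  rw [abs_mul]
  have : |M| * |((P' : ℝ) + Q) / 2 * δ n - (p0 - ℓ / 2)| ≤ |M| * (2 * e) := by gcongr
  linarith

lemma tendsto_cell (h : BlowUp β M δ Λ m W) (hM : M ≠ 0) {ℓ : ℝ} (hℓ : 0 < ℓ)
    (hℓ3 : β * M ^ 2 * ℓ ^ 3 = 8) {p0 : ℝ} (hp : FirstJump δ W p0) {y : ℝ} {i : ℤ}
    (hy1 : p0 + i * ℓ < y) (hy2 : y < p0 + (i + 1) * ℓ) :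
    Tendsto (fun n => W n ⌊y / δ n⌋) atTop (nhds (M * (p0 + i * ℓ + ℓ / 2))) := by
  rw [Metric.tendsto_nhds]
  intro ε hε
  obtain ⟨e, he⟩ : ∃ e, e = min (ε / (2 * |M| + 2)) (min (y - (p0 + i * ℓ)) ((p0 + (i + 1) * ℓ - y) / 3)) :=
    ⟨_, rfl⟩
  have he0 : 0 < e := by
    rw [he]; refine lt_min (by positivity) (lt_min (by linarith) (by linarith))
  have he1 : e * (2 * |M| + 2) ≤ ε := by
    rw [← le_div_iff₀ (by positivity), he]; exact min_le_left _ _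
  have he2 : e ≤ y - (p0 + i * ℓ) := by
    rw [he]; exact (min_le_right _ _).trans (min_le_left _ _)
  have he3 : e ≤ (p0 + (i + 1) * ℓ - y) / 3 := by
    rw [he]; exact (min_le_right _ _).trans (min_le_right _ _)
  filter_upwards [h.jumps_at hM hℓ hℓ3 hp i e he0, h.cell_rigid hM hℓ hℓ3 (|y| + 1) he0,
    h.jumps_at hM hℓ hℓ3 hp (i + 1) e he0, h.basic one_pos 1]
    with n ⟨P, bP, hP⟩ hcell ⟨S, bS, hS⟩ ⟨d1, d2, _⟩
  obtain ⟨f1, f2⟩ := floor_mul_bound d1 y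
  obtain ⟨P', Q, c, h1, h2⟩ := hcell ⌊y / δ n⌋ (by
    rw [abs_le]
    constructor <;> linarith [le_abs_self y, neg_abs_le y])
  rw [abs_le] at hP hS
  rw [abs_le, sub_mul] at h1
  push_cast at hS
  have hPl : P ≤ ⌊y / δ n⌋ := by
    rw [Int.le_floor, le_div_iff₀ d1]; linarith [hP.2]
  have hlS : ⌊y / δ n⌋ < S := by
    rw [Int.floor_lt, div_lt_iff₀ d1]; linarith [hS.1]
  have k1 : P ≤ P' := by
    by_contra hlt
    exact c.2.2.2.2 P (by omega) (by have := c.2.1; omega) bP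
  have k2 : Q ≤ S := by
    by_contra hlt
    exact c.2.2.2.2 S (by have := c.1; omega) (by omega) bS
  have k1' : (P : ℝ) * δ n ≤ P' * δ n := by
    refine mul_le_mul_of_nonneg_right ?_ d1.le; exact_mod_cast k1
  have k2' : (Q : ℝ) * δ n ≤ S * δ n := by
    refine mul_le_mul_of_nonneg_right ?_ d1.le; exact_mod_cast k2
  have h3 : |((P' : ℝ) + Q) / 2 * δ n - (p0 + i * ℓ + ℓ / 2)| ≤ 2 * e := by
    have eP : ((P' : ℝ) + Q) / 2 * δ n = (P' * δ n + Q * δ n) / 2 := by ring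
    rw [eP, abs_le]
    constructor <;> linarith [h1.1, h1.2, hP.1, hP.2, hS.1, hS.2]
  rw [Real.dist_eq]
  have eW : W n ⌊y / δ n⌋ - M * (p0 + i * ℓ + ℓ / 2) =
      (W n ⌊y / δ n⌋ - M * (((P' : ℝ) + Q) / 2 * δ n)) +
      M * (((P' : ℝ) + Q) / 2 * δ n - (p0 + i * ℓ + ℓ / 2)) := by ring
  rw [eW]
  refine (abs_add_le _ _).trans_lt ?_
  rw [abs_mul]
  have : |M| * |((P' : ℝ) + Q) / 2 * δ n - (p0 + i * ℓ + ℓ / 2)| ≤ |M| * (2 * e) := by gcongr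
  linarith

end BlowUp

/-! ### From jumps to locally strict convergence -/

/-- The blow-up function on the real line encoded by the grid function `W`, normalized to vanish
at the origin. -/
noncomputable def gridFun (δ : ℝ) (W : ℤ → ℝ) (y : ℝ) : ℝ := W ⌊y / δ⌋ - W 0

/-- A function whose increments are controlled by those of `g` has variation at most the total
increment of `g`. -/
lemma eVariationOn_le_of {f g : ℝ → ℝ} {s : Set ℝ} {A : ℝ}
    (h : ∀ x ∈ s, ∀ y ∈ s, x ≤ y → |f y - f x| ≤ g y - g x)
    (hA : ∀ x ∈ s, ∀ y ∈ s, x ≤ y → g y - g x ≤ A) :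
    eVariationOn f s ≤ ENNReal.ofReal A := by
  refine iSup_le fun ⟨n, u, hu, hus⟩ => ?_
  calc ∑ i ∈ Finset.range n, edist (f (u (i + 1))) (f (u i))
      ≤ ∑ i ∈ Finset.range n, ENNReal.ofReal (g (u (i + 1)) - g (u i)) := by
        refine Finset.sum_le_sum fun i _ => ?_
        rw [edist_dist, Real.dist_eq]
        exact ENNReal.ofReal_le_ofReal (h _ (hus i) _ (hus (i + 1)) (hu (Nat.le_succ i)))
    _ = ENNReal.ofReal (∑ i ∈ Finset.range n, (g (u (i + 1)) - g (u i))) := by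
        rw [ENNReal.ofReal_sum_of_nonneg]
        intro i _
        exact (abs_nonneg _).trans (h _ (hus i) _ (hus (i + 1)) (hu (Nat.le_succ i)))
    _ ≤ ENNReal.ofReal A := by
        rw [Finset.sum_range_sub (fun i => g (u i))]
        exact ENNReal.ofReal_le_ofReal (hA _ (hus 0) _ (hus n) (hu (Nat.zero_le n)))

lemma le_eVariationOn {f : ℝ → ℝ} {s : Set ℝ} {x y : ℝ} (hx : x ∈ s) (hy : y ∈ s) :
    ENNReal.ofReal |f y - f x| ≤ eVariationOn f s := by
  have := eVariationOn.edist_le f hy hx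
  rwa [edist_dist, Real.dist_eq] at this

/-- Points at which a monotone function is continuous exist near the ends of any interval, with
values of the function close to those at the ends, if it is continuous there. -/
lemma exists_inner {F : ℝ → ℝ} (hF : Monotone F) {a b : ℝ} (hab : a < b) (ha : ContinuousAt F a)
    (hb : ContinuousAt F b) {ε : ℝ} (hε : 0 < ε) :
    ∃ a' ∈ Ioo a b, ∃ b' ∈ Ioo a b, ContinuousAt F a' ∧ ContinuousAt F b' ∧
      |F a' - F a| < ε ∧ |F b' - F b| < ε := by
  have hd : Dense {x | ¬ ContinuousAt F x}ᶜ := hF.countable_not_continuousAt.dense_compl ℝ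
  obtain ⟨η, hη, h1⟩ := Metric.continuousAt_iff.mp ha ε hε
  obtain ⟨η', hη', h2⟩ := Metric.continuousAt_iff.mp hb ε hε
  obtain ⟨a', ha', ha1, ha2⟩ := hd.exists_between (show a < min b (a + η) from lt_min hab (by linarith))
  obtain ⟨b', hb', hb1, hb2⟩ := hd.exists_between (show max a (b - η') < b from max_lt hab (by linarith))
  rw [lt_min_iff] at ha2
  rw [max_lt_iff] at hb1
  refine ⟨a', ⟨ha1, ha2.1⟩, b', ⟨hb1.1, hb2⟩, by simpa using ha', by simpa using hb', ?_, ?_⟩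
  · exact h1 (by rw [Real.dist_eq, abs_lt]; constructor <;> linarith)
  · exact h2 (by rw [Real.dist_eq, abs_lt]; constructor <;> linarith)

/-- Criterion for locally strict convergence of blow-ups to a monotone (up to the sign of `M`)
limit: local boundedness, pointwise convergence at continuity points, and asymptotic
monotonicity. -/
lemma locStrict_of {δ : ℕ → ℝ} {W : ℕ → ℤ → ℝ} {M : ℝ} {F : ℝ → ℝ} (hF : Monotone F)
    (hδ : ∀ᶠ n in atTop, 0 < δ n ∧ δ n ≤ 1)
    (hsup : ∀ R : ℝ, ∃ C : ℝ, ∀ᶠ n in atTop, ∀ l : ℤ, |(l : ℝ) * δ n| ≤ R → |W n l| ≤ C)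
    (hvar : ∀ R ε : ℝ, 0 < ε → ∀ᶠ n in atTop, ∀ p l : ℤ, p ≤ l → |(p : ℝ) * δ n| ≤ R →
      |(l : ℝ) * δ n| ≤ R →
      ∑ j ∈ Finset.Ico (p + 1) (l + 1), |W n j - W n (j - 1)| ≤ |W n l - W n p| + ε)
    (hpt : ∀ y, ContinuousAt (fun x => M * F x) y →
      Tendsto (fun n => gridFun (δ n) (W n) y) atTop (nhds (M * F y))) :
    LocStrictBV (fun n => gridFun (δ n) (W n)) (fun x => M * F x) := by
  intro a b hab ha hb
  obtain ⟨R, hR⟩ : ∃ R, R = |a| + |b| + 1 := ⟨_, rfl⟩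
  have hwin : ∀ d : ℝ, 0 < d → d ≤ 1 → ∀ y ∈ Icc a b, |(⌊y / d⌋ : ℝ) * d| ≤ R := by
    intro d h1 h2 y hy
    obtain ⟨f1, f2⟩ := floor_mul_bound h1 y
    rw [abs_le, hR]
    constructor <;>
      linarith [hy.1, hy.2, le_abs_self a, neg_abs_le a, le_abs_self b, neg_abs_le b, abs_nonneg a,
        abs_nonneg b]
  obtain ⟨C, hC⟩ := hsup R
  have hFm : Measurable F := hF.measurable
  constructor
  · have key : Tendsto (fun n => ∫ x in Ioo a b, |gridFun (δ n) (W n) x - M * F x|) atTop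
        (nhds (∫ x in Ioo a b, (0 : ℝ))) := by
      refine tendsto_integral_filter_of_dominated_convergence
        (fun _ => 2 * C + |M| * (|F a| + |F b|)) ?_ ?_ ?_ ?_
      · refine Eventually.of_forall fun n => ?_
        have hm : Measurable (gridFun (δ n) (W n)) := by
          unfold gridFun
          exact ((measurable_from_top (f := W n)).comp
            (Int.measurable_floor.comp (measurable_id.div_const _))).sub_const _
        exact ((hm.sub (hFm.const_mul M)).abs).aestronglyMeasurable
      · filter_upwards [hC, hδ] with n hn ⟨d1, d2⟩
        refine (ae_restrict_iff' measurableSet_Ioo).mpr (Eventually.of_forall fun x hx => ?_)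
        rw [Real.norm_eq_abs, abs_abs]
        have h1 := hn _ (hwin _ d1 d2 x ⟨hx.1.le, hx.2.le⟩)
        have h2 := hn 0 (by simp only [Int.cast_zero, zero_mul, abs_zero]; rw [hR]; positivity)
        have h3 : |M * F x| ≤ |M| * (|F a| + |F b|) := by
          rw [abs_mul]
          refine mul_le_mul_of_nonneg_left ?_ (abs_nonneg _)
          have := hF hx.1.le
          have := hF hx.2.le
          rw [abs_le]
          constructor <;>
            linarith [le_abs_self (F a), neg_abs_le (F a), le_abs_self (F b), neg_abs_le (F b),
              abs_nonneg (F a), abs_nonneg (F b)]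
        have h4 : |gridFun (δ n) (W n) x| ≤ 2 * C := (abs_sub _ _).trans (by linarith)
        exact (abs_sub _ _).trans (by linarith)
      · exact integrable_const _
      · have hc : ∀ᵐ x ∂(volume : Measure ℝ), ContinuousAt F x := by
          have := hF.countable_not_continuousAt.ae_notMem (volume : Measure ℝ)
          filter_upwards [this] with x hx
          simpa using hx
        filter_upwards [ae_restrict_of_ae hc] with x hx
        have := (hpt x (hx.const_mul M)).sub_const (M * F x)
        rw [sub_self] at this
        simpa using this.abs
    simpa using key
  · -- Both variations are compared with `A = |M| (F b - F a)`.
    obtain ⟨A, hA⟩ : ∃ A, A = |M| * (F b - F a) := ⟨_, rfl⟩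
    have hA' : |M * F b - M * F a| = A := by
      rw [← mul_sub, abs_mul, abs_of_nonneg (sub_nonneg.mpr (hF hab.le)), hA]
    have hinner : ∀ ε : ℝ, 0 < ε → ∃ a' ∈ Ioo a b, ∃ b' ∈ Ioo a b,
        ContinuousAt (fun x => M * F x) a' ∧ ContinuousAt (fun x => M * F x) b' ∧
        A - ε < |M * F b' - M * F a'| := by
      intro ε hε
      by_cases hM : M = 0
      · refine ⟨(a + b) / 2, ⟨by linarith, by linarith⟩, (a + b) / 2, ⟨by linarith, by linarith⟩,
          by simp [hM, continuousAt_const], by simp [hM, continuousAt_const], by simp [hA, hM, hε]⟩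
      have cF : ∀ y, ContinuousAt (fun x => M * F x) y → ContinuousAt F y := fun y hy => by
        have := hy.const_mul M⁻¹
        simpa [← mul_assoc, inv_mul_cancel₀ hM] using this
      have hM0 : 0 < |M| := abs_pos.mpr hM
      obtain ⟨a', ha', b', hb', ca, cb, ea, eb⟩ := exists_inner hF hab (cF a ha) (cF b hb)
        (show 0 < ε / (2 * |M|) by positivity)
      refine ⟨a', ha', b', hb', ca.const_mul M, cb.const_mul M, ?_⟩
      rw [← mul_sub, abs_mul, hA]
      rw [abs_lt] at ea eb
      have h1 : F b - F a - ε / |M| < F b' - F a' := by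
        have : ε / |M| = ε / (2 * |M|) + ε / (2 * |M|) := by field_simp; norm_num
        linarith [ea.2, eb.1]
      have h2 := mul_lt_mul_of_pos_left (h1.trans_le (le_abs_self _)) hM0
      have h3 : |M| * (F b - F a - ε / |M|) = |M| * (F b - F a) - ε := by field_simp
      linarith
    have hlim : eVariationOn (fun x => M * F x) (Ioo a b) = ENNReal.ofReal A := by
      refine le_antisymm (eVariationOn_le_of (g := fun x => |M| * F x) ?_ ?_) ?_
      · intro x _ y _ hxy
        rw [← mul_sub, abs_mul, abs_of_nonneg (sub_nonneg.mpr (hF hxy)), mul_sub]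
      · intro x hx y hy _
        rw [← mul_sub, hA]
        have := hF hx.1.le
        have := hF hy.2.le
        exact mul_le_mul_of_nonneg_left (by linarith) (abs_nonneg _)
      · refine ENNReal.le_of_forall_pos_le_add fun ε hε _ => ?_
        obtain ⟨a', ha', b', hb', -, -, e⟩ := hinner ε hε
        calc ENNReal.ofReal A ≤ ENNReal.ofReal (|M * F b' - M * F a'| + ε) :=
              ENNReal.ofReal_le_ofReal (by linarith)
          _ ≤ ENNReal.ofReal |M * F b' - M * F a'| + ENNReal.ofReal ε := ENNReal.ofReal_add_le
          _ ≤ _ := by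
            rw [ENNReal.ofReal_coe_nnreal]
            gcongr
            exact le_eVariationOn (f := fun x => M * F x) ha' hb'
    rw [hlim]
    refine tendsto_order.mpr ⟨fun t ht => ?_, fun t ht => ?_⟩
    · -- lower bound
      have hA0 : 0 < A := ENNReal.ofReal_pos.mp (bot_le.trans_lt ht)
      have htt : t ≠ ⊤ := ne_top_of_lt ht
      have ht' : t.toReal < A := by
        rwa [ENNReal.lt_ofReal_iff_toReal_lt htt] at ht
      obtain ⟨a', ha', b', hb', ca, cb, e⟩ := hinner (A - t.toReal) (by linarith)
      have hl := ((hpt b' cb).sub (hpt a' ca)).abs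
      filter_upwards [hl.eventually (lt_mem_nhds (show t.toReal < _ by linarith))] with n hn
      refine lt_of_lt_of_le ?_ (le_eVariationOn (f := gridFun (δ n) (W n)) ha' hb')
      rwa [ENNReal.lt_ofReal_iff_toReal_lt htt]
    · -- upper bound
      obtain ⟨A', hA1, hA2⟩ : ∃ A', A < A' ∧ ENNReal.ofReal A' ≤ t := by
        by_cases htt : t = ⊤
        · exact ⟨A + 1, by linarith, by simp [htt]⟩
        · refine ⟨t.toReal, ?_, by rw [ENNReal.ofReal_toReal htt]⟩
          exact (ENNReal.ofReal_lt_iff_lt_toReal (by rw [← hA']; positivity) htt).mp ht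
      have hl := ((hpt b hb).sub (hpt a ha)).abs
      rw [hA'] at hl
      filter_upwards [hl.eventually (gt_mem_nhds (show A < (A + A') / 2 by linarith)), hδ,
        hvar R ((A' - A) / 4) (by linarith)] with n hn ⟨d1, d2⟩ hv
      have hA'' : ENNReal.ofReal ((A + A') / 2 + (A' - A) / 4) < ENNReal.ofReal A' :=
        (ENNReal.ofReal_lt_ofReal_iff (by
          have : 0 ≤ A := by rw [← hA']; positivity
          linarith)).mpr (by linarith)
      refine lt_of_lt_of_le (lt_of_le_of_lt ?_ hA'') hA2
      have fmono : ∀ x y : ℝ, x ≤ y → ⌊x / δ n⌋ ≤ ⌊y / δ n⌋ := fun x y hxy =>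
        Int.floor_mono (div_le_div_of_nonneg_right hxy d1.le)
      refine eVariationOn_le_of (g := fun y =>
        ∑ j ∈ Finset.Ico (⌊a / δ n⌋ + 1) (⌊y / δ n⌋ + 1), |W n j - W n (j - 1)|) ?_ ?_
      · intro x hx y hy hxy
        have f1 := fmono a x hx.1.le
        have f2 := fmono x y hxy
        have := abs_sub_le_sum (W n) f2
        rw [sum_Ico_split (fun j => |W n j - W n (j - 1)|)
          (show ⌊a / δ n⌋ + 1 ≤ ⌊x / δ n⌋ + 1 by omega)
          (show ⌊x / δ n⌋ + 1 ≤ ⌊y / δ n⌋ + 1 by omega)]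
        simp only [gridFun, sub_sub_sub_cancel_right]
        linarith
      · intro x hx y hy hxy
        have hv' := hv ⌊a / δ n⌋ ⌊b / δ n⌋ (fmono a b hab.le)
          (hwin _ d1 d2 a ⟨le_rfl, hab.le⟩) (hwin _ d1 d2 b ⟨hab.le, le_rfl⟩)
        simp only [gridFun, sub_sub_sub_cancel_right] at hn
        have f1 := fmono a y hy.1.le
        have f2 := fmono y b hy.2.le
        rw [sum_Ico_split (fun j => |W n j - W n (j - 1)|)
          (show ⌊a / δ n⌋ + 1 ≤ ⌊y / δ n⌋ + 1 by omega)
          (show ⌊y / δ n⌋ + 1 ≤ ⌊b / δ n⌋ + 1 by omega)] at hv'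
        have p1 : 0 ≤ ∑ j ∈ Finset.Ico (⌊y / δ n⌋ + 1) (⌊b / δ n⌋ + 1), |W n j - W n (j - 1)| :=
          Finset.sum_nonneg fun _ _ => abs_nonneg _
        have p2 : 0 ≤ ∑ j ∈ Finset.Ico (⌊a / δ n⌋ + 1) (⌊x / δ n⌋ + 1), |W n j - W n (j - 1)| :=
          Finset.sum_nonneg fun _ _ => abs_nonneg _
        linarith

/-- The increasing staircase with steps of unit slope and length `ℓ`, with a jump at `p0`, which
vanishes to the left of `p0`. -/
noncomputable def stepFun (ℓ p0 y : ℝ) : ℝ := ℓ * (⌊(y - p0) / ℓ⌋ + 1)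

lemma stepFun_mono {ℓ : ℝ} (hℓ : 0 < ℓ) (p0 : ℝ) : Monotone (stepFun ℓ p0) := by
  intro x y hxy
  unfold stepFun
  have : ⌊(x - p0) / ℓ⌋ ≤ ⌊(y - p0) / ℓ⌋ :=
    Int.floor_mono (div_le_div_of_nonneg_right (by linarith) hℓ.le)
  have : (⌊(x - p0) / ℓ⌋ : ℝ) ≤ ⌊(y - p0) / ℓ⌋ := by exact_mod_cast this
  gcongr

lemma stepFun_not_jump {ℓ M : ℝ} (hℓ : 0 < ℓ) (hM : M ≠ 0) {p0 y : ℝ}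
    (hy : ContinuousAt (fun x => M * stepFun ℓ p0 x) y) :
    p0 + ⌊(y - p0) / ℓ⌋ * ℓ < y := by
  have h1 : p0 + ⌊(y - p0) / ℓ⌋ * ℓ ≤ y := by
    have := (floor_mul_bound hℓ (y - p0)).1
    linarith
  refine lt_of_le_of_ne h1 fun heq => ?_
  have hpos : 0 < |M| * ℓ := mul_pos (abs_pos.mpr hM) hℓ
  obtain ⟨η, hη, h2⟩ := Metric.continuousAt_iff.mp hy (|M| * ℓ) hpos
  obtain ⟨t, ht⟩ : ∃ t, t = min (η / 2) (ℓ / 2) := ⟨_, rfl⟩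
  have ht0 : 0 < t := by rw [ht]; positivity
  have ht1 : t ≤ η / 2 := by rw [ht]; exact min_le_left _ _
  have ht2 : t ≤ ℓ / 2 := by rw [ht]; exact min_le_right _ _
  have h3 := h2 (x := y - t) (by rw [Real.dist_eq]; rw [abs_lt]; constructor <;> linarith)
  have hfl : ⌊(y - t - p0) / ℓ⌋ = ⌊(y - p0) / ℓ⌋ - 1 := by
    rw [Int.floor_eq_iff, le_div_iff₀ hℓ, div_lt_iff₀ hℓ]
    push_cast
    constructor <;> linarith
  rw [Real.dist_eq] at h3
  simp only [stepFun] at h3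
  rw [hfl] at h3
  push_cast at h3
  have e : M * (ℓ * ((⌊(y - p0) / ℓ⌋ : ℝ) - 1 + 1)) - M * (ℓ * (⌊(y - p0) / ℓ⌋ + 1)) =
      -(M * ℓ) := by ring
  rw [e, abs_neg, abs_mul, abs_of_pos hℓ] at h3
  exact lt_irrefl _ h3

namespace BlowUp

variable {β M : ℝ} {δ Λ : ℕ → ℝ} {m W : ℕ → ℤ → ℝ}

lemma locStrict (h : BlowUp β M δ Λ m W) (hM : M ≠ 0) {ℓ : ℝ} (hℓ : 0 < ℓ)
    (hℓ3 : β * M ^ 2 * ℓ ^ 3 = 8) {p0 : ℝ} (hp : FirstJump δ W p0) :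
    LocStrictBV (fun n => gridFun (δ n) (W n)) (fun x => M * stepFun ℓ p0 x) := by
  refine locStrict_of (stepFun_mono hℓ p0)
    ((h.basic one_pos 1).mono fun n hn => ⟨hn.1, hn.2.1⟩) (fun R => ?_)
    (fun R ε hε => h.var_bound hM hℓ hℓ3 R hε) (fun y hy => ?_)
  · obtain ⟨C, -, hC⟩ := h.sup_bound R
    exact ⟨C, hC.mono fun n hn l hl => (hn l hl).1⟩
  · have h1 := stepFun_not_jump hℓ hM hy
    have h2 : y < p0 + (⌊(y - p0) / ℓ⌋ + 1) * ℓ := by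
      have := Int.lt_floor_add_one ((y - p0) / ℓ)
      rw [div_lt_iff₀ hℓ] at this
      linarith
    have := (h.tendsto_cell hM hℓ hℓ3 hp h1 h2).sub (h.tendsto_zero_cell hM hℓ hℓ3 hp)
    unfold gridFun stepFun
    convert this using 2
    ring

end BlowUp

/-! ### The case of vanishing slope -/

namespace BlowUp

variable {β M : ℝ} {δ Λ : ℕ → ℝ} {m W : ℕ → ℤ → ℝ}

/-- When the slope vanishes the energy stays bounded on arbitrarily long windows, so that on both
sides of any cell there are cells where `W` is small; truncation then makes `W` small everywhere. -/
lemma flat_sup (h : BlowUp β 0 δ Λ m W) (R : ℝ) {ε : ℝ} (hε : 0 < ε) :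
    ∀ᶠ n in atTop, ∀ l : ℤ, |(l : ℝ) * δ n| ≤ R → |W n l| ≤ ε := by
  have hβ := h.β_pos
  obtain ⟨D, -, hD1, hD⟩ := h.energy_bound
  rw [hD1 rfl] at hD
  obtain ⟨L, hL⟩ : ∃ L, L = 40 / (β * ε ^ 2) := ⟨_, rfl⟩
  have hL0 : 0 < L := by rw [hL]; positivity
  have hL1 : 9 < β * (ε / 2) ^ 2 * L := by
    have : β * (ε / 2) ^ 2 * L = 10 := by rw [hL]; field_simp; norm_num
    linarith
  obtain ⟨R2, hR2⟩ : ∃ R2, R2 = |R| + L + 3 := ⟨_, rfl⟩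
  have hRR : R ≤ |R| := le_abs_self R
  have hR0 : 0 ≤ |R| := abs_nonneg R
  filter_upwards [h.basic one_pos 1, h.near R2 (ε / 2) (by linarith), h.locmin R2, hD R2]
    with n ⟨h1, h2, h3⟩ hnear hmin hE l hl
  have hΛ : 0 ≤ Λ n := by linarith
  obtain ⟨d, hd⟩ : ∃ d : ℤ, d = ⌈L / δ n⌉ := ⟨_, rfl⟩
  have hd1 : L ≤ d * δ n := by
    have := Int.le_ceil (L / δ n)
    rwa [div_le_iff₀ h1, ← hd] at this
  have hd2 : d * δ n ≤ L + 1 := by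
    have := (Int.ceil_lt_add_one (L / δ n)).le
    have := mul_le_mul_of_nonneg_right this h1.le
    rw [add_mul, div_mul_cancel₀ _ h1.ne', ← hd] at this
    linarith
  have hdpos : 0 < d := by rw [hd]; exact Int.ceil_pos.mpr (by positivity)
  have hl' := abs_le.mp hl
  have hm : ∀ j : ℤ, |(j : ℝ) * δ n| ≤ R2 → |m n j| ≤ ε / 2 := by
    intro j hj
    have a1 := hnear j hj
    rwa [zero_mul, sub_zero] at a1
  have w1 : |((l - d : ℤ) : ℝ) * δ n| ≤ R2 := by
    rw [abs_le]; push_cast; rw [sub_mul]; constructor <;> linarith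
  have w2 : |((l + 1 : ℤ) : ℝ) * δ n| ≤ R2 := by
    rw [abs_le]; push_cast; rw [add_mul]; constructor <;> linarith
  have w3 : |((l + 1 + d : ℤ) : ℝ) * δ n| ≤ R2 := by
    rw [abs_le]; push_cast; rw [add_mul, add_mul]; constructor <;> linarith
  have w4 : |(l : ℝ) * δ n| ≤ R2 := by linarith
  have hEn : ∀ p q : ℤ, p < q → |(p : ℝ) * δ n| ≤ R2 → |(q : ℝ) * δ n| ≤ R2 →
      locEn (δ n) (Λ n) β (m n) (W n) p q ≤ 9 := by
    intro p q hpq hp hq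
    have := hE p q hpq hp hq
    linarith
  obtain ⟨a, ha1, ha2, ha3⟩ := exists_close h1 hΛ hβ (by omega : l - d ≤ l)
    (by push_cast; linarith) (hEn _ _ (by omega) w1 w4) (by linarith : 0 ≤ ε / 2) hL1
  obtain ⟨b, hb1, hb2, hb3⟩ := exists_close h1 hΛ hβ (by omega : l + 1 ≤ l + 1 + d)
    (by push_cast; linarith) (hEn _ _ (by omega) w2 w3) (by linarith : 0 ≤ ε / 2) hL1
  have wab : ∀ j : ℤ, a ≤ j → j ≤ b → |(j : ℝ) * δ n| ≤ R2 := fun j h4 h5 =>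
    window_mem h1.le w1 w3 (by omega) (by omega)
  have hWT : ∀ j : ℤ, |(j : ℝ) * δ n| ≤ R2 → |W n j - m n j| ≤ ε / 2 → |W n j| ≤ ε := by
    intro j hj hj2
    have := abs_sub_abs_le_abs_sub (W n j) (m n j)
    have := hm j hj
    linarith
  exact clamp_bound h1 hΛ hβ hmin ha2 (by omega : l < b) (wab _ (by omega) (by omega))
    (wab _ (by omega) (by omega)) (fun j h4 h5 => (hm j (wab j h4 h5)).trans (by linarith))
    (hWT a (wab _ le_rfl (by omega)) ha3) (hWT b (wab _ (by omega) le_rfl) hb3)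

/-- The energy bound limits the number of big jumps, so uniform smallness gives small total
variation. -/
lemma flat_var (h : BlowUp β 0 δ Λ m W) (R : ℝ) {ε : ℝ} (hε : 0 < ε) :
    ∀ᶠ n in atTop, ∀ p q : ℤ, p ≤ q → |(p : ℝ) * δ n| ≤ R → |(q : ℝ) * δ n| ≤ R →
      ∑ l ∈ Finset.Ico (p + 1) (q + 1), |W n l - W n (l - 1)| ≤ ε := by
  classical
  have hβ := h.β_pos
  obtain ⟨D, -, hD1, hD⟩ := h.energy_bound
  rw [hD1 rfl] at hD
  filter_upwards [h.basic one_pos 1, h.flat_sup R (show 0 < ε / 72 by linarith),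
    h.small_var (R + 1) (show 0 < ε / 2 by linarith), hD (R + 1), h.jcost_big]
    with n ⟨h1, h2, h3⟩ hsup hsm hE hbig p q hpq hp hq
  have hΛ : 0 ≤ Λ n := by linarith
  rcases hpq.eq_or_lt with rfl | hpq'
  · simp; linarith
  have hp' : |((p + 1 : ℤ) : ℝ) * δ n| ≤ R + 1 :=
    (window_mem h1.le hp hq (by omega) (by omega)).trans (by linarith)
  have hq' : |((q + 1 : ℤ) : ℝ) * δ n| ≤ R + 1 := by
    rw [abs_le] at hq ⊢
    push_cast
    rw [add_mul]
    constructor <;> linarith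
  have hE' := hE (p + 1) (q + 1) (by omega) hp' hq'
  have hS := hsm (p + 1) (q + 1) (by omega) hp' hq'
  have hterm : ∀ l ∈ Finset.Ico (p + 1) (q + 1), |W n l - W n (l - 1)| ≤
      (if Big (δ n) (W n) l then 0 else |W n l - W n (l - 1)|) +
        ε / 18 * cellEn (δ n) (Λ n) β (m n) (W n) l := by
    intro l hl
    rw [Finset.mem_Ico] at hl
    have hc := cellEn_nonneg h1.le hΛ hβ.le (m n) (W n) l
    split_ifs with hB
    · have b1 := hbig _ hB
      have b2 : 1 / 2 ≤ cellEn (δ n) (Λ n) β (m n) (W n) l := by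
        unfold cellEn
        have : 0 ≤ β * δ n * (W n l - m n l) ^ 2 := by positivity
        linarith
      have b3 := mul_le_mul_of_nonneg_left b2 (show 0 ≤ ε / 18 by linarith)
      have s1 := hsup l (window_mem h1.le hp hq (by omega) (by omega))
      have s2 := hsup (l - 1) (window_mem h1.le hp hq (by omega) (by omega))
      have := abs_sub (W n l) (W n (l - 1))
      linarith
    · have := mul_nonneg (show 0 ≤ ε / 18 by linarith) hc
      linarith
  have := Finset.sum_le_sum hterm
  rw [Finset.sum_add_distrib, ← Finset.mul_sum] at this
  have e := mul_le_mul_of_nonneg_left hE' (show 0 ≤ ε / 18 by linarith)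
  unfold locEn at e
  linarith

lemma flat_locStrict (h : BlowUp β 0 δ Λ m W) :
    LocStrictBV (fun n => gridFun (δ n) (W n)) (fun _ => 0) := by
  have := locStrict_of (M := 0) (F := fun _ => 0) (W := W) (fun _ _ _ => le_rfl)
    ((h.basic one_pos 1).mono fun n hn => ⟨hn.1, hn.2.1⟩)
    (fun R => ⟨1, h.flat_sup R one_pos⟩)
    (fun R ε hε => (h.flat_var R hε).mono fun n hn p l hpl hp hl =>
      (hn p l hpl hp hl).trans (by linarith [abs_nonneg (W n l - W n p)]))
    (fun y _ => ?_)
  · simpa using this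
  · rw [Metric.tendsto_atTop']
    intro ε hε
    obtain ⟨N, hN⟩ := eventually_atTop.mp ((h.flat_sup (|y| + 1)
      (show 0 < ε / 4 by linarith)).and (h.basic one_pos 1))
    refine ⟨N, fun n hn => ?_⟩
    obtain ⟨h1, h2, h3, -⟩ := hN n hn.le
    have fb := floor_mul_bound h2 y
    have a1 := h1 ⌊y / δ n⌋ (by
      rw [abs_le]
      constructor <;> linarith [le_abs_self y, neg_abs_le y])
    have a2 := h1 0 (by simp; positivity)
    rw [Real.dist_eq, mul_zero, sub_zero]
    unfold gridFun
    have := abs_sub (W n ⌊y / δ n⌋) (W n 0)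
    linarith

end BlowUp

/-! ### The scales `ω(n)` and `δ(n)` -/

lemma log_pos_of_two_le {n : ℕ} (hn : 2 ≤ n) : 0 < Real.log n :=
  Real.log_pos (by exact_mod_cast (by omega : 1 < n))

lemma omg_pos {n : ℕ} (hn : 2 ≤ n) : 0 < omg n := by
  have := log_pos_of_two_le hn
  have : (0 : ℝ) < n := by positivity
  unfold omg
  positivity

lemma omg_cube {n : ℕ} (hn : 2 ≤ n) : omg n ^ 3 = Real.log n / n := by
  have := log_pos_of_two_le hn
  unfold omg
  rw [← Real.rpow_natCast, ← Real.rpow_mul (by positivity)]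
  norm_num

lemma omg_le_one {n : ℕ} (hn : 2 ≤ n) : omg n ≤ 1 := by
  have h0 := log_pos_of_two_le hn
  have h1 : Real.log n ≤ n := (Real.log_le_sub_one_of_pos (by positivity)).trans (by linarith)
  exact Real.rpow_le_one (by positivity) (div_le_one_of_le₀ h1 (by positivity)) (by norm_num)

lemma tendsto_log_nat : Tendsto (fun n : ℕ => Real.log n) atTop atTop :=
  Real.tendsto_log_atTop.comp tendsto_natCast_atTop_atTop

lemma tendsto_omg : Tendsto omg atTop (nhds 0) := by
  have h1 : Tendsto (fun n : ℕ => Real.log n / n) atTop (nhds 0) :=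
    (Real.isLittleO_log_id_atTop.tendsto_div_nhds_zero).comp tendsto_natCast_atTop_atTop
  have := h1.rpow_const (p := (1 : ℝ) / 3) (Or.inr (by norm_num))
  rwa [Real.zero_rpow (by norm_num)] at this

lemma dlt_pos {n : ℕ} (hn : 2 ≤ n) : 0 < dlt n := by
  have := omg_pos hn
  unfold dlt
  positivity

lemma dlt_ratio : Tendsto (fun n => Real.log (1 / dlt n) / Real.log n) atTop (nhds (2 / 3)) := by
  have h1 : Tendsto (fun n : ℕ => Real.log (Real.log n) / Real.log n) atTop (nhds 0) :=
    (Real.isLittleO_log_id_atTop.tendsto_div_nhds_zero).comp tendsto_log_nat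
  have h2 : Tendsto (fun n : ℕ => 2 / 3 + 1 / 3 * (Real.log (Real.log n) / Real.log n)) atTop
      (nhds (2 / 3 + 1 / 3 * 0)) := (h1.const_mul _).const_add _
  rw [mul_zero, add_zero] at h2
  refine h2.congr' ?_
  filter_upwards [eventually_ge_atTop 2] with n hn
  have hl := log_pos_of_two_le hn
  have hn0 : (0 : ℝ) < n := by positivity
  have hω := omg_pos hn
  have e1 : 1 / dlt n = n * omg n := by unfold dlt; rw [one_div_one_div]
  rw [e1, Real.log_mul hn0.ne' hω.ne']
  unfold omg
  rw [Real.log_rpow (by positivity), Real.log_div hl.ne' hn0.ne']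
  field_simp
  ring

lemma tendsto_log_dlt : Tendsto (fun n => Real.log (1 / dlt n)) atTop atTop := by
  have := dlt_ratio.pos_mul_atTop (by norm_num : (0 : ℝ) < 2 / 3) tendsto_log_nat
  refine this.congr' ?_
  filter_upwards [eventually_ge_atTop 2] with n hn
  exact div_mul_cancel₀ _ (log_pos_of_two_le hn).ne'

lemma dlt_eq_exp {n : ℕ} (hn : 2 ≤ n) : dlt n = Real.exp (-Real.log (1 / dlt n)) := by
  rw [one_div, Real.log_inv, neg_neg, Real.exp_log (dlt_pos hn)]

lemma tendsto_dlt : Tendsto dlt atTop (nhds 0) := by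
  refine (Real.tendsto_exp_neg_atTop_nhds_zero.comp tendsto_log_dlt).congr' ?_
  filter_upwards [eventually_ge_atTop 2] with n hn
  exact (dlt_eq_exp hn).symm

lemma sqrt_dlt_lim : Tendsto (fun n => √(dlt n) * Real.log n) atTop (nhds 0) := by
  have h1 : Tendsto (fun n : ℕ => 4 * ((Real.log n / 4) ^ 1 * Real.exp (-(Real.log n / 4))))
      atTop (nhds (4 * 0)) :=
    ((Real.tendsto_pow_mul_exp_neg_atTop_nhds_zero 1).comp
      (tendsto_log_nat.atTop_div_const (by norm_num : (0 : ℝ) < 4))).const_mul 4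
  rw [mul_zero] at h1
  refine squeeze_zero' ?_ ?_ h1
  · filter_upwards [eventually_ge_atTop 2] with n hn
    have := log_pos_of_two_le hn
    positivity
  · filter_upwards [eventually_ge_atTop 2,
      dlt_ratio.eventually (le_mem_nhds (show (1 / 2 : ℝ) < 2 / 3 by norm_num))] with n hn hr
    have hl := log_pos_of_two_le hn
    rw [le_div_iff₀ hl] at hr
    have h2 : √(dlt n) ≤ Real.exp (-(Real.log n / 4)) := by
      rw [Real.sqrt_le_left (Real.exp_pos _).le, ← Real.exp_nat_mul, dlt_eq_exp hn]
      apply Real.exp_le_exp.mpr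
      push_cast
      linarith
    have := mul_le_mul_of_nonneg_right h2 hl.le
    rw [pow_one]
    linarith

/-! ### The functional as a sum over cells -/

lemma sum_range_int (F : ℤ → ℝ) (n : ℕ) :
    ∑ i ∈ Finset.range n, F i = ∑ l ∈ Finset.Ico (0 : ℤ) n, F l := by
  induction n with
  | zero => simp
  | succ n ih =>
    rw [Finset.sum_range_succ, ih]
    push_cast
    rw [sum_Ico_succ F (by positivity : (0 : ℤ) ≤ n)]

lemma integral_grid {n : ℕ} (N : ℕ) (F : ℝ → ℝ)
    (hF : ∀ i : ℕ, i < N → IntervalIntegrable F volume ((i : ℝ) * (1 / n)) (((i : ℝ) + 1) * (1 / n))) :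
    ∫ x in (0 : ℝ)..(N * (1 / n)), F x =
      ∑ i ∈ Finset.range N, ∫ x in ((i : ℝ) * (1 / n))..(((i : ℝ) + 1) * (1 / n)), F x := by
  have := intervalIntegral.sum_integral_adjacent_intervals (μ := volume) (f := F)
    (a := fun i : ℕ => (i : ℝ) * (1 / n)) (n := N) (fun i hi => by
      have := hF i hi
      simpa using this)
  simp only [Nat.cast_zero, zero_mul, Nat.cast_add, Nat.cast_one] at this
  exact this.symm

lemma integral_cell_congr {n : ℕ} (hn : 0 < n) (i : ℕ) (F G : ℝ → ℝ)
    (h : ∀ x ∈ Ico ((i : ℝ) * (1 / n)) (((i : ℝ) + 1) * (1 / n)), F x = G x) :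
    ∫ x in ((i : ℝ) * (1 / n))..(((i : ℝ) + 1) * (1 / n)), F x =
      ∫ x in ((i : ℝ) * (1 / n))..(((i : ℝ) + 1) * (1 / n)), G x := by
  have hle : (i : ℝ) * (1 / n) ≤ ((i : ℝ) + 1) * (1 / n) := by gcongr; linarith
  refine intervalIntegral.integral_congr_Ioo_of_le hle fun x hx => h x ⟨hx.1.le, hx.2⟩

lemma integrable_cell_congr {n : ℕ} (hn : 0 < n) (i : ℕ) (F G : ℝ → ℝ)
    (h : ∀ x ∈ Ico ((i : ℝ) * (1 / n)) (((i : ℝ) + 1) * (1 / n)), F x = G x)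
    (hG : IntervalIntegrable G volume ((i : ℝ) * (1 / n)) (((i : ℝ) + 1) * (1 / n))) :
    IntervalIntegrable F volume ((i : ℝ) * (1 / n)) (((i : ℝ) + 1) * (1 / n)) := by
  have hle : (i : ℝ) * (1 / n) ≤ ((i : ℝ) + 1) * (1 / n) := by gcongr; linarith
  rw [intervalIntegrable_iff_integrableOn_Ico_of_le hle] at hG ⊢
  exact hG.congr_fun (fun x hx => (h x hx).symm) measurableSet_Ico

/-- For piecewise constant functions the functional is a finite sum over the cells. -/
lemma dpmf_sum {n : ℕ} (hn : 2 ≤ n) (β : ℝ) {f w : ℝ → ℝ} (hf : ContinuousOn f (Icc 0 1))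
    (hw : IsPC (1 / (n : ℝ)) w) :
    DPMF n β f 0 1 w =
      (∑ i ∈ Finset.range (n - 1), (1 / (n : ℝ)) *
        Real.log (1 + ((w (((i : ℝ) + 1) * (1 / n)) - w ((i : ℝ) * (1 / n))) / (1 / n)) ^ 2)) +
      β * ∑ i ∈ Finset.range n,
        ∫ x in ((i : ℝ) * (1 / n))..(((i : ℝ) + 1) * (1 / n)), (w ((i : ℝ) * (1 / n)) - f x) ^ 2 := by
  have hn0 : (0 : ℝ) < n := by positivity
  have hnn : 0 < n := by omega
  have hw' : ∀ i : ℕ, ∀ x ∈ Ico ((i : ℝ) * (1 / n)) (((i : ℝ) + 1) * (1 / n)),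
      w x = w ((i : ℝ) * (1 / n)) := fun i x hx => by
    simpa using hw i x (by simpa using hx)
  have hlow : lowGrid (1 / (n : ℝ)) 0 = 0 := by simp [lowGrid]
  have hhigh : highGrid (1 / (n : ℝ)) 1 - 1 / n = ((n - 1 : ℕ) : ℝ) * (1 / n) := by
    have e : (1 : ℝ) / (1 / (n : ℝ)) = ((n : ℤ) : ℝ) := by simp
    rw [highGrid, e, Int.ceil_intCast, Nat.cast_sub (by omega)]
    push_cast
    ring
  unfold DPMF
  rw [hlow, hhigh]
  have hD : ∀ i : ℕ, ∀ x ∈ Ico ((i : ℝ) * (1 / n)) (((i : ℝ) + 1) * (1 / n)),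
      Real.log (1 + (Dd (1 / (n : ℝ)) w x) ^ 2) =
      Real.log (1 + ((w (((i : ℝ) + 1) * (1 / n)) - w ((i : ℝ) * (1 / n))) / (1 / n)) ^ 2) := by
    intro i x hx
    have h1 := hw' i x hx
    have h2 := hw' (i + 1) (x + 1 / n) (by
      push_cast
      constructor
      · linarith [hx.1]
      · linarith [hx.2])
    push_cast at h2
    rw [Dd, h1, h2]
  have hfid : ∀ i : ℕ, ∀ x ∈ Ico ((i : ℝ) * (1 / n)) (((i : ℝ) + 1) * (1 / n)),
      (w x - f x) ^ 2 = (w ((i : ℝ) * (1 / n)) - f x) ^ 2 := fun i x hx => by rw [hw' i x hx]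
  have hsub : ∀ i : ℕ, i < n → uIcc ((i : ℝ) * (1 / n)) (((i : ℝ) + 1) * (1 / n)) ⊆ Icc 0 1 := by
    intro i hi
    have hi' : (i : ℝ) + 1 ≤ n := by exact_mod_cast hi
    rw [uIcc_of_le (by gcongr; linarith)]
    refine Icc_subset_Icc (by positivity) ?_
    rw [mul_one_div, div_le_one hn0]
    exact hi'
  have h1 : (1 : ℝ) = (n : ℝ) * (1 / n) := by field_simp
  have hb : ∫ x in (0 : ℝ)..1, (w x - f x) ^ 2 = ∫ x in (0 : ℝ)..((n : ℝ) * (1 / n)), (w x - f x) ^ 2 := by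
    rw [← h1]
  rw [hb, integral_grid, integral_grid]
  · congr 1
    · refine Finset.sum_congr rfl fun i _ => ?_
      rw [integral_cell_congr hnn i _ _ (hD i), intervalIntegral.integral_const, smul_eq_mul]
      ring
    · congr 1
      exact Finset.sum_congr rfl fun i _ => integral_cell_congr hnn i _ _ (hfid i)
  · intro i hi
    refine integrable_cell_congr hnn i _ _ (hfid i) (ContinuousOn.intervalIntegrable ?_)
    exact ((continuousOn_const.sub hf).pow 2).mono (hsub i hi)
  · intro i hi
    exact integrable_cell_congr hnn i _ _ (hD i) intervalIntegrable_const

/-! ### Energy of the blow-ups -/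

/-- Rescaled values of `w`: the value on the cell at distance `l` from the cell `k`, centred at `c`
and divided by `ω(n)`. -/
noncomputable def blowW (n k : ℕ) (c : ℝ) (w : ℝ → ℝ) (l : ℤ) : ℝ :=
  (w (((k : ℝ) + l) * (1 / n)) - c) / omg n

/-- Rescaled averages of `f` over the cells, with the same centring as in `blowW`. -/
noncomputable def blowM (n k : ℕ) (c : ℝ) (f : ℝ → ℝ) (l : ℤ) : ℝ :=
  (n * (∫ x in (((k : ℝ) + l) * (1 / n))..(((k : ℝ) + l + 1) * (1 / n)), f x) - c) / omg n

lemma cell_sub {n : ℕ} (hn : 0 < n) {i : ℝ} (h0 : 0 ≤ i) (h1 : i + 1 ≤ n) :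
    uIcc (i * (1 / n)) ((i + 1) * (1 / n)) ⊆ Icc (0 : ℝ) 1 := by
  have hn0 : (0 : ℝ) < n := by positivity
  rw [uIcc_of_le (by gcongr; linarith)]
  refine Icc_subset_Icc (by positivity) ?_
  rw [mul_one_div, div_le_one hn0]
  exact h1

/-- On one cell the fidelity term depends on `f` only through its average, up to a constant. -/
lemma cell_fid {n : ℕ} (hn : 0 < n) {f : ℝ → ℝ} {a b : ℝ} (hab : b - a = 1 / n)
    (hf : ContinuousOn f (uIcc a b)) (t : ℝ) :
    ∫ x in a..b, (t - f x) ^ 2 = 1 / n * (t - n * ∫ x in a..b, f x) ^ 2 +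
      ((∫ x in a..b, f x ^ 2) - n * (∫ x in a..b, f x) ^ 2) := by
  have hn0 : (n : ℝ) ≠ 0 := by positivity
  have i1 : IntervalIntegrable f volume a b := hf.intervalIntegrable
  have i2 : IntervalIntegrable (fun x => f x ^ 2) volume a b := (hf.pow 2).intervalIntegrable
  have e : ∀ x, (t - f x) ^ 2 = (t ^ 2 - 2 * t * f x) + f x ^ 2 := fun x => by ring
  simp only [e]
  rw [intervalIntegral.integral_add (intervalIntegrable_const.sub (i1.const_mul _)) i2,
    intervalIntegral.integral_sub intervalIntegrable_const (i1.const_mul _),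
    intervalIntegral.integral_const, intervalIntegral.integral_const_mul, hab, smul_eq_mul]
  field_simp
  ring

lemma sum_shift (F : ℤ → ℝ) (N : ℕ) (s : ℤ) :
    ∑ i ∈ Finset.range N, F (i + s) = ∑ l ∈ Finset.Ico s (N + s), F l := by
  rw [sum_range_int (fun i => F (i + s)), Finset.sum_Ico_add' F 0 (N : ℤ) s, zero_add]

/-- In rescaled variables the functional is, up to a factor and an additive constant, the discrete
energy of the blow-up. -/
lemma dpmf_blow {n : ℕ} (hn : 2 ≤ n) (β : ℝ) {f : ℝ → ℝ} (hf : ContinuousOn f (Icc 0 1))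
    {k : ℕ} (hk : k < n) (c : ℝ) :
    ∃ K : ℝ, ∀ w : ℝ → ℝ, IsPC (1 / (n : ℝ)) w →
      DPMF n β f 0 1 w = omg n ^ 3 *
        (locEn (dlt n) (Real.log n) β (blowM n k c f) (blowW n k c w) (1 - k) (n - k) +
          β * dlt n * (blowW n k c w (-k) - blowM n k c f (-k)) ^ 2) + K := by
  have hn0 : (0 : ℝ) < n := by positivity
  have hω := omg_pos hn
  have hl := log_pos_of_two_le hn
  have hω3 := omg_cube hn
  obtain ⟨κ, hκ⟩ : ∃ κ : ℕ → ℝ, κ = fun i : ℕ =>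
    (∫ x in ((i : ℝ) * (1 / n))..(((i : ℝ) + 1) * (1 / n)), f x ^ 2) -
      n * (∫ x in ((i : ℝ) * (1 / n))..(((i : ℝ) + 1) * (1 / n)), f x) ^ 2 := ⟨_, rfl⟩
  refine ⟨β * ∑ i ∈ Finset.range n, κ i, fun w hw => ?_⟩
  rw [dpmf_sum hn β hf hw]
  obtain ⟨W, hW⟩ : ∃ W, W = blowW n k c w := ⟨_, rfl⟩
  obtain ⟨m, hm⟩ : ∃ m, m = blowM n k c f := ⟨_, rfl⟩
  rw [← hW, ← hm]
  have hA : ∑ i ∈ Finset.range (n - 1), (1 / (n : ℝ)) *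
      Real.log (1 + ((w (((i : ℝ) + 1) * (1 / n)) - w ((i : ℝ) * (1 / n))) / (1 / n)) ^ 2) =
      omg n ^ 3 * ∑ l ∈ Finset.Ico (1 - k : ℤ) (n - k),
        jcost (dlt n) (Real.log n) (W l - W (l - 1)) := by
    rw [Finset.mul_sum]
    have e : ((n : ℤ) - k) = ((n - 1 : ℕ) : ℤ) + (1 - k) := by omega
    rw [e, ← sum_shift (fun l => omg n ^ 3 * jcost (dlt n) (Real.log n) (W l - W (l - 1)))]
    refine Finset.sum_congr rfl fun i _ => ?_
    have e1 : W ((i : ℤ) + (1 - k)) = (w (((i : ℝ) + 1) * (1 / n)) - c) / omg n := by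
      rw [hW, blowW]; push_cast; congr 4; ring
    have e2 : W ((i : ℤ) + (1 - k) - 1) = (w ((i : ℝ) * (1 / n)) - c) / omg n := by
      rw [hW, blowW]; push_cast; congr 4; ring
    have e3 : (W ((i : ℤ) + (1 - k)) - W ((i : ℤ) + (1 - k) - 1)) / dlt n =
        (w (((i : ℝ) + 1) * (1 / n)) - w ((i : ℝ) * (1 / n))) / (1 / n) := by
      rw [e1, e2, dlt]; field_simp; ring
    rw [jcost, e3, hω3]
    field_simp
  have hB : ∑ i ∈ Finset.range n, (∫ x in ((i : ℝ) * (1 / n))..(((i : ℝ) + 1) * (1 / n)),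
      (w ((i : ℝ) * (1 / n)) - f x) ^ 2) =
      omg n ^ 3 * (∑ l ∈ Finset.Ico (1 - k : ℤ) (n - k), dlt n * (W l - m l) ^ 2 +
        dlt n * (W (-k) - m (-k)) ^ 2) + ∑ i ∈ Finset.range n, κ i := by
    have e0 : ∑ l ∈ Finset.Ico (1 - k : ℤ) (n - k), dlt n * (W l - m l) ^ 2 +
        dlt n * (W (-k) - m (-k)) ^ 2 =
        ∑ l ∈ Finset.Ico (-k : ℤ) (n + (-k)), dlt n * (W l - m l) ^ 2 := by
      rw [sum_Ico_split (fun l => dlt n * (W l - m l) ^ 2) (by omega : (-k : ℤ) ≤ -k + 1)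
        (by omega : (-k + 1 : ℤ) ≤ n + -k),
        sum_Ico_succ _ le_rfl, Finset.Ico_self, Finset.sum_empty, zero_add, add_comm]
      congr 3
      omega
    rw [e0, ← sum_shift (fun l => dlt n * (W l - m l) ^ 2), Finset.mul_sum,
      ← Finset.sum_add_distrib]
    refine Finset.sum_congr rfl fun i hi => ?_
    have hi' : (i : ℝ) + 1 ≤ n := by exact_mod_cast Finset.mem_range.mp hi
    rw [cell_fid (by omega : 0 < n) (by ring) (hf.mono (cell_sub (by omega) (by positivity) hi')),
      hκ]
    have e1 : W ((i : ℤ) + -k) = (w ((i : ℝ) * (1 / n)) - c) / omg n := by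
      rw [hW, blowW]; push_cast; congr 4; ring
    have e2 : m ((i : ℤ) + -k) = (n * (∫ x in ((i : ℝ) * (1 / n))..(((i : ℝ) + 1) * (1 / n)), f x)
        - c) / omg n := by
      rw [hm, blowM]
      have a1 : (k : ℝ) + (((i : ℤ) + -k : ℤ) : ℝ) = i := by push_cast; ring
      rw [a1]
    rw [e1, e2, dlt]
    congr 1
    field_simp
    ring
  rw [hA, hB]
  have hE : locEn (dlt n) (Real.log n) β m W (1 - k) (n - k) =
      ∑ l ∈ Finset.Ico (1 - k : ℤ) (n - k), jcost (dlt n) (Real.log n) (W l - W (l - 1)) +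
      β * ∑ l ∈ Finset.Ico (1 - k : ℤ) (n - k), dlt n * (W l - m l) ^ 2 := by
    unfold locEn cellEn
    rw [Finset.sum_add_distrib, Finset.mul_sum]
    congr 1
    exact Finset.sum_congr rfl fun l _ => by ring
  rw [hE]
  ring

/-- Minimizers are local minimizers of the discrete energy after the blow-up. -/
lemma locMin_blow {n : ℕ} (hn : 2 ≤ n) {β : ℝ} {f u : ℝ → ℝ} (hf : ContinuousOn f (Icc 0 1))
    (hu : IsMinimizer n β f u) {k : ℕ} (hk : k < n) (c : ℝ) {R : ℝ}
    (hwin : ∀ l : ℤ, |(l : ℝ) * dlt n| ≤ R → 1 - k ≤ l ∧ l + 1 ≤ n - k) :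
    LocMin (dlt n) (Real.log n) β (blowM n k c f) (blowW n k c u) R := by
  intro p q hpq hp hq Z hZ
  obtain ⟨hp1, -⟩ := hwin p hp
  obtain ⟨-, hq1⟩ := hwin q hq
  have hn0 : (0 : ℝ) < n := by positivity
  have hω := omg_pos hn
  obtain ⟨K, hK⟩ := dpmf_blow hn β hf hk c
  obtain ⟨w, hw⟩ : ∃ w : ℝ → ℝ, w = fun x => c + omg n * Z (⌊x * (n : ℝ)⌋ - (k : ℤ)) := ⟨_, rfl⟩
  have hwpc : IsPC (1 / (n : ℝ)) w := by
    intro z x hx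
    have e1 : ⌊x * n⌋ = z := by
      rw [Int.floor_eq_iff]
      constructor
      · have := mul_le_mul_of_nonneg_right hx.1 hn0.le
        rwa [mul_assoc, one_div_mul_cancel hn0.ne', mul_one] at this
      · have := mul_lt_mul_of_pos_right hx.2 hn0
        rwa [mul_assoc, one_div_mul_cancel hn0.ne', mul_one] at this
    have e2 : ⌊(z : ℝ) * (1 / n) * n⌋ = z := by
      rw [mul_assoc, one_div_mul_cancel hn0.ne', mul_one, Int.floor_intCast]
    rw [hw]
    simp only [e1, e2]
  have hwZ : blowW n k c w = Z := by
    funext l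
    have e2 : ⌊((k : ℝ) + l) * (1 / n) * n⌋ = k + l := by
      rw [mul_assoc, one_div_mul_cancel hn0.ne', mul_one]
      exact_mod_cast Int.floor_intCast ((k : ℤ) + l)
    rw [blowW, hw]
    simp only [e2]
    rw [add_sub_cancel_left, add_sub_cancel_left, mul_div_cancel_left₀ _ hω.ne']
  have hle := hu.2 w hwpc
  rw [hK u hu.1, hK w hwpc, hwZ] at hle
  obtain ⟨W, hW⟩ : ∃ W, W = blowW n k c u := ⟨_, rfl⟩
  obtain ⟨m, hm⟩ : ∃ m, m = blowM n k c f := ⟨_, rfl⟩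
  rw [← hW, ← hm] at hle ⊢
  rw [← hW] at hZ
  have hle2 := le_of_mul_le_mul_left (le_of_add_le_add_right hle) (by positivity)
  rw [hZ (-k) (by omega)] at hle2
  have hle3 := le_of_add_le_add_right hle2
  have split : ∀ Y : ℤ → ℝ, locEn (dlt n) (Real.log n) β m Y (1 - k) (n - k) =
      locEn (dlt n) (Real.log n) β m Y (1 - k) p + locEn (dlt n) (Real.log n) β m Y p q +
      cellEn (dlt n) (Real.log n) β m Y q + locEn (dlt n) (Real.log n) β m Y (q + 1) (n - k) := by
    intro Y
    have h1 := locEn_add (δ := dlt n) (Λ := Real.log n) (β := β) (m := m) (Z := Y) hp1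
      (by omega : p ≤ (n : ℤ) - k)
    have h2 := locEn_add (δ := dlt n) (Λ := Real.log n) (β := β) (m := m) (Z := Y) hpq.le
      (by omega : q ≤ (n : ℤ) - k)
    have h3 := locEn_add (δ := dlt n) (Λ := Real.log n) (β := β) (m := m) (Z := Y)
      (by omega : q ≤ q + 1) hq1
    have h4 : locEn (dlt n) (Real.log n) β m Y q (q + 1) =
        cellEn (dlt n) (Real.log n) β m Y q := by
      unfold locEn
      rw [sum_Ico_succ _ le_rfl, Finset.Ico_self, Finset.sum_empty, zero_add]
    linarith
  have o1 : locEn (dlt n) (Real.log n) β m Z (1 - k) p =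
      locEn (dlt n) (Real.log n) β m W (1 - k) p := by
    refine Finset.sum_congr rfl fun l hl => ?_
    rw [Finset.mem_Ico] at hl
    rw [cellEn, cellEn, hZ l (by omega), hZ (l - 1) (by omega)]
  have o2 : locEn (dlt n) (Real.log n) β m Z (q + 1) (n - k) =
      locEn (dlt n) (Real.log n) β m W (q + 1) (n - k) := by
    refine Finset.sum_congr rfl fun l hl => ?_
    rw [Finset.mem_Ico] at hl
    rw [cellEn, cellEn, hZ l (by omega), hZ (l - 1) (by omega)]
  rw [split W, split Z, o1, o2] at hle3
  unfold cellEn at hle3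
  rw [hZ q (by omega)] at hle3
  linarith

/-! ### Blow-ups of minimizers -/

/-- Strict differentiability with increments measured near `x`, from continuity of `f'`. -/
lemma affine_approx {f f' : ℝ → ℝ} (hder : ∀ x ∈ Icc (0 : ℝ) 1, HasDerivAt f (f' x) x)
    (hcont : ContinuousOn f' (Icc (0 : ℝ) 1)) {x₀ : ℝ} (hx : x₀ ∈ Ioo (0 : ℝ) 1) {η : ℝ}
    (hη : 0 < η) : ∃ r > 0, ∀ x ∈ Icc (x₀ - r) (x₀ + r), ∀ y ∈ Icc (x₀ - r) (x₀ + r),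
      |f x - f y - f' x₀ * (x - y)| ≤ η * |x - y| := by
  have hc : ContinuousAt f' x₀ := hcont.continuousAt (Icc_mem_nhds hx.1 hx.2)
  have hev : ∀ᶠ x in nhds x₀, |f' x - f' x₀| ≤ η ∧ x ∈ Icc (0 : ℝ) 1 := by
    refine Filter.Eventually.and ?_ (Icc_mem_nhds hx.1 hx.2)
    have := hc.eventually (Metric.closedBall_mem_nhds (f' x₀) hη)
    filter_upwards [this] with x hx'
    rwa [Real.dist_eq] at hx'
  obtain ⟨r, hr, hball⟩ := Metric.nhds_basis_closedBall.mem_iff.mp hev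
  refine ⟨r, hr, fun x hx y hy => ?_⟩
  rw [Real.closedBall_eq_Icc] at hball
  have := Convex.norm_image_sub_le_of_norm_hasDerivWithin_le (f := fun x => f x - f' x₀ * x)
    (f' := fun x => f' x - f' x₀) (s := Icc (x₀ - r) (x₀ + r)) (x := y) (y := x) (C := η)
    (fun z hz => ((hder z (hball hz).2).hasDerivWithinAt.sub
      (by simpa using ((hasDerivAt_id z).const_mul (f' x₀)).hasDerivWithinAt)))
    (fun z hz => (hball hz).1) (convex_Icc _ _) hy hx
  rw [Real.norm_eq_abs, Real.norm_eq_abs] at this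
  convert this using 2
  ring

/-- Every window around the blow-up point is eventually interior to `(0, 1)`. -/
lemma window_interior {k : ℕ → ℕ} {x₀ : ℝ} (hx₀ : x₀ ∈ Ioo (0 : ℝ) 1)
    (hx : Tendsto (fun n => (k n : ℝ) / n) atTop (nhds x₀)) (R : ℝ) :
    ∀ᶠ n in atTop, ∀ l : ℤ, |(l : ℝ) * dlt n| ≤ R → 1 - (k n : ℤ) ≤ l ∧ l + 1 ≤ (n : ℤ) - k n := by
  have t1 : Tendsto (fun n => (k n : ℝ) / n - R * omg n) atTop (nhds (x₀ - R * 0)) :=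
    hx.sub (tendsto_omg.const_mul R)
  have t2 : Tendsto (fun n => (k n : ℝ) / n + R * omg n) atTop (nhds (x₀ + R * 0)) :=
    hx.add (tendsto_omg.const_mul R)
  have a1 := hx₀.1
  have a2 := hx₀.2
  have e1 := t1.eventually (le_mem_nhds (show x₀ / 2 < _ by linarith))
  have e2 := t2.eventually (ge_mem_nhds (show _ < (1 + x₀) / 2 by linarith))
  have n1 := tendsto_natCast_atTop_atTop (R := ℝ) |>.eventually_ge_atTop (2 / x₀)
  have n2 := tendsto_natCast_atTop_atTop (R := ℝ) |>.eventually_ge_atTop (2 / (1 - x₀))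
  filter_upwards [eventually_ge_atTop 2, e1, e2, n1, n2] with n hn h1 h2 h3 h4 l hl
  have hn0 : (0 : ℝ) < n := by positivity
  have hω := omg_pos hn
  rw [div_le_iff₀ (by linarith)] at h3 h4
  have hl2 : |(l : ℝ)| ≤ R * omg n * n := by
    rw [abs_mul, abs_of_pos (dlt_pos hn), dlt, mul_one_div, div_le_iff₀ (by positivity)] at hl
    linarith
  rw [abs_le] at hl2
  have h1' := mul_le_mul_of_nonneg_right h1 hn0.le
  have h2' := mul_le_mul_of_nonneg_right h2 hn0.le
  rw [sub_mul, div_mul_cancel₀ _ hn0.ne'] at h1'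
  rw [add_mul, div_mul_cancel₀ _ hn0.ne'] at h2'
  have g1 : (1 : ℝ) ≤ k n + l := by linarith
  have g2 : (k n : ℝ) + l + 1 ≤ n := by linarith
  have g1' : (1 : ℤ) ≤ k n + l := by exact_mod_cast g1
  have g2' : (k n : ℤ) + l + 1 ≤ n := by exact_mod_cast g2
  omega

/-- The averages of `f` at the blow-up scale are close to a line of slope `f' x₀`. -/
lemma near_blow {f f' : ℝ → ℝ} (hder : ∀ x ∈ Icc (0 : ℝ) 1, HasDerivAt f (f' x) x)
    (hcont : ContinuousOn f' (Icc (0 : ℝ) 1)) {k : ℕ → ℕ} {x₀ : ℝ} (hx₀ : x₀ ∈ Ioo (0 : ℝ) 1)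
    (hx : Tendsto (fun n => (k n : ℝ) / n) atTop (nhds x₀)) (R ε : ℝ) (hε : 0 < ε) :
    ∀ᶠ n in atTop, ∀ l : ℤ, |(l : ℝ) * dlt n| ≤ R →
      |blowM n (k n) (f ((k n : ℝ) / n)) f l - f' x₀ * (((l : ℝ) + 1 / 2) * dlt n)| ≤ ε := by
  obtain ⟨η, hηd⟩ : ∃ η, η = ε / (|R| + 1) := ⟨_, rfl⟩
  have hη : 0 < η := by rw [hηd]; positivity
  obtain ⟨r, hr, happ⟩ := affine_approx hder hcont hx₀ hη
  have hf : ContinuousOn f (Icc 0 1) := fun x hx => (hder x hx).continuousAt.continuousWithinAt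
  have t1 : Tendsto (fun n => |(k n : ℝ) / n - x₀|) atTop (nhds 0) := by
    have := (hx.sub_const x₀).abs
    rwa [sub_self, abs_zero] at this
  have t2 : Tendsto (fun n => (|R| + 1) * omg n) atTop (nhds 0) := by
    simpa using tendsto_omg.const_mul (|R| + 1)
  filter_upwards [eventually_ge_atTop 2, t1.eventually (ge_mem_nhds (show 0 < r / 2 by linarith)),
    t2.eventually (ge_mem_nhds (show 0 < r / 2 by linarith)), window_interior hx₀ hx R,
    tendsto_dlt.eventually (ge_mem_nhds one_pos)] with n hn hn1 hn2 hwin hδ1 l hl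
  have hn0 : (0 : ℝ) < n := by positivity
  have hω := omg_pos hn
  have hδ := dlt_pos hn
  have hRR := le_abs_self R
  have hδn : dlt n * omg n = 1 / n := by rw [dlt]; field_simp
  have hn1' : 1 / (n : ℝ) ≤ omg n := by
    rw [← hδn]
    exact mul_le_of_le_one_left hω.le hδ1
  obtain ⟨X, hX⟩ : ∃ X, X = (k n : ℝ) / n := ⟨_, rfl⟩
  rw [← hX] at hn1 ⊢
  obtain ⟨g1, g2⟩ := hwin l hl
  have g1' : (0 : ℝ) ≤ (k n : ℝ) + l := by exact_mod_cast (by omega : (0 : ℤ) ≤ (k n : ℤ) + l)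
  have g2' : (k n : ℝ) + l + 1 ≤ n := by exact_mod_cast (by omega : (k n : ℤ) + l + 1 ≤ n)
  have hsub := cell_sub (by omega : 0 < n) g1' g2'
  have hl2 : |(l : ℝ) * (1 / n)| ≤ |R| * omg n := by
    rw [← hδn, ← mul_assoc, abs_mul, abs_of_pos hω]
    exact mul_le_mul_of_nonneg_right (hl.trans hRR) hω.le
  obtain ⟨a, ha⟩ : ∃ a, a = ((k n : ℝ) + l) * (1 / n) := ⟨_, rfl⟩
  obtain ⟨b, hb⟩ : ∃ b, b = ((k n : ℝ) + l + 1) * (1 / n) := ⟨_, rfl⟩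
  have hab : b - a = 1 / n := by rw [ha, hb]; ring
  have haX : a = X + l * (1 / n) := by rw [ha, hX]; ring
  have hle : a ≤ b := by have : 0 < 1 / (n : ℝ) := by positivity
                         linarith
  rw [← ha, ← hb] at hsub
  have hfab := hf.mono hsub
  have hdist : ∀ x ∈ Icc a b, |x - X| ≤ (|R| + 1) * omg n := by
    intro x hx'
    rw [abs_le] at hl2 ⊢
    constructor <;> linarith [hx'.1, hx'.2]
  have hbd : ‖∫ x in a..b, (f x - f X - f' x₀ * (x - X))‖ ≤
      (η * ((|R| + 1) * omg n)) * |b - a| := by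
    refine intervalIntegral.norm_integral_le_of_norm_le_const fun x hx' => ?_
    rw [uIoc_of_le hle] at hx'
    have hd := hdist x ⟨hx'.1.le, hx'.2⟩
    have hn1a := abs_le.mp hn1
    have hda := abs_le.mp hd
    rw [Real.norm_eq_abs]
    refine (happ x ⟨by linarith, by linarith⟩ X ⟨by linarith, by linarith⟩).trans ?_
    exact mul_le_mul_of_nonneg_left hd hη.le
  have heq : ∫ x in a..b, (f x - f X - f' x₀ * (x - X)) =
      (∫ x in a..b, f x) - 1 / n * f X - f' x₀ * (((l : ℝ) + 1 / 2) * (1 / n) * (1 / n)) := by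
    have i1 : IntervalIntegrable f volume a b := hfab.intervalIntegrable
    have e : ∫ x in a..b, (x - X) = ((l : ℝ) + 1 / 2) * (1 / n) * (1 / n) := by
      rw [intervalIntegral.integral_sub intervalIntegral.intervalIntegrable_id
        intervalIntegrable_const, integral_id, intervalIntegral.integral_const, hab, smul_eq_mul]
      have : b ^ 2 - a ^ 2 = (b - a) * (2 * a + (b - a)) := by ring
      rw [this, hab, haX]
      ring
    have i2 : IntervalIntegrable (fun x : ℝ => f' x₀ * (x - X)) volume a b :=
      (by fun_prop : Continuous fun x : ℝ => f' x₀ * (x - X)).intervalIntegrable _ _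
    rw [intervalIntegral.integral_sub (i1.sub intervalIntegrable_const) i2,
      intervalIntegral.integral_sub i1 intervalIntegrable_const,
      intervalIntegral.integral_const_mul, e, intervalIntegral.integral_const, hab, smul_eq_mul]
  rw [heq, Real.norm_eq_abs, hab, abs_of_pos (by positivity : 0 < 1 / (n : ℝ))] at hbd
  have key : blowM n (k n) (f X) f l - f' x₀ * (((l : ℝ) + 1 / 2) * dlt n) =
      n / omg n * ((∫ x in a..b, f x) - 1 / n * f X -
        f' x₀ * (((l : ℝ) + 1 / 2) * (1 / n) * (1 / n))) := by
    rw [blowM, ← ha, ← hb, dlt]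
    field_simp
  rw [key, abs_mul, abs_of_pos (by positivity : 0 < (n : ℝ) / omg n)]
  refine (mul_le_mul_of_nonneg_left hbd (by positivity)).trans (le_of_eq ?_)
  rw [hηd]
  field_simp

/-- A crude pointwise bound, from comparison with the null function. -/
lemma crude_bound {n : ℕ} (hn : 2 ≤ n) {β : ℝ} (hβ : 0 < β) {f u : ℝ → ℝ}
    (hf : ContinuousOn f (Icc 0 1)) (hu : IsMinimizer n β f u) {F : ℝ}
    (hF : ∀ x ∈ Icc (0 : ℝ) 1, |f x| ≤ F) {i : ℕ} (hi : i < n) {c : ℝ} (hc : |c| ≤ F) :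
    (u ((i : ℝ) * (1 / n)) - c) ^ 2 ≤ 10 * F ^ 2 * n := by
  have hn0 : (0 : ℝ) < n := by positivity
  have hF0 : 0 ≤ F := (abs_nonneg _).trans hc
  have h0 : IsPC (1 / (n : ℝ)) (fun _ => 0) := fun _ _ _ => rfl
  have hle := hu.2 _ h0
  rw [dpmf_sum hn β hf hu.1, dpmf_sum hn β hf h0] at hle
  simp only [sub_self, zero_div, ne_eq, OfNat.ofNat_ne_zero, not_false_eq_true, zero_pow, add_zero,
    Real.log_one, mul_zero, Finset.sum_const_zero, zero_add, zero_sub, neg_sq] at hle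
  have hlog : 0 ≤ ∑ i ∈ Finset.range (n - 1), (1 / (n : ℝ)) *
      Real.log (1 + ((u (((i : ℝ) + 1) * (1 / n)) - u ((i : ℝ) * (1 / n))) / (1 / n)) ^ 2) :=
    Finset.sum_nonneg fun j _ => mul_nonneg (by positivity)
      (Real.log_nonneg (le_add_of_nonneg_right (sq_nonneg _)))
  have hlen : ∀ j : ℕ, ((j : ℝ) + 1) * (1 / n) - (j : ℝ) * (1 / n) = 1 / n := fun j => by ring
  have hle' : ∀ j : ℕ, (j : ℝ) * (1 / n) ≤ ((j : ℝ) + 1) * (1 / n) := fun j => by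
    gcongr; linarith
  have hcell : ∀ j : ℕ, j < n →
      Icc ((j : ℝ) * (1 / n)) (((j : ℝ) + 1) * (1 / n)) ⊆ Icc 0 1 := fun j hj => by
    rw [← uIcc_of_le (hle' j)]
    exact cell_sub (by omega) (by positivity) (by exact_mod_cast hj)
  have hsq : ∀ x ∈ Icc (0 : ℝ) 1, f x ^ 2 ≤ F ^ 2 := fun x hx =>
    sq_le_sq' (abs_le.mp (hF x hx)).1 (abs_le.mp (hF x hx)).2
  have hup : ∑ j ∈ Finset.range n, (∫ x in ((j : ℝ) * (1 / n))..(((j : ℝ) + 1) * (1 / n)), f x ^ 2)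
      ≤ F ^ 2 := by
    have : ∀ j ∈ Finset.range n, (∫ x in ((j : ℝ) * (1 / n))..(((j : ℝ) + 1) * (1 / n)), f x ^ 2) ≤
        1 / n * F ^ 2 := by
      intro j hj
      have hj := hcell j (Finset.mem_range.mp hj)
      have := intervalIntegral.integral_mono_on (μ := volume) (hle' j)
        (((hf.mono hj).pow 2).intervalIntegrable_of_Icc (hle' j))
        (intervalIntegrable_const (c := F ^ 2)) (fun x hx => hsq x (hj hx))
      rwa [intervalIntegral.integral_const, hlen, smul_eq_mul] at this
    refine (Finset.sum_le_sum this).trans (le_of_eq ?_)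
    rw [Finset.sum_const, Finset.card_range, nsmul_eq_mul]
    field_simp
  have hsum : ∑ j ∈ Finset.range n, (∫ x in ((j : ℝ) * (1 / n))..(((j : ℝ) + 1) * (1 / n)),
      (u ((j : ℝ) * (1 / n)) - f x) ^ 2) ≤ F ^ 2 := by
    refine le_trans (le_of_mul_le_mul_left ?_ hβ) hup
    linarith
  have hone : ∫ x in ((i : ℝ) * (1 / n))..(((i : ℝ) + 1) * (1 / n)),
      (u ((i : ℝ) * (1 / n)) - f x) ^ 2 ≤ F ^ 2 :=
    (Finset.single_le_sum (f := fun j : ℕ => ∫ x in ((j : ℝ) * (1 / n))..(((j : ℝ) + 1) * (1 / n)),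
      (u ((j : ℝ) * (1 / n)) - f x) ^ 2) (fun j _ =>
        intervalIntegral.integral_nonneg (hle' j) fun x _ => sq_nonneg _)
      (Finset.mem_range.mpr hi)).trans hsum
  have hi' := hcell i hi
  have hci : IntervalIntegrable (fun x => (u ((i : ℝ) * (1 / n)) - f x) ^ 2) volume
      ((i : ℝ) * (1 / n)) (((i : ℝ) + 1) * (1 / n)) :=
    ((continuousOn_const.sub (hf.mono hi')).pow 2).intervalIntegrable_of_Icc (hle' i)
  have hfin := intervalIntegral.integral_mono_on (μ := volume) (hle' i)
    (intervalIntegrable_const (c := (u ((i : ℝ) * (1 / n)) - c) ^ 2))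
    ((hci.const_mul 2).add (intervalIntegrable_const (c := 8 * F ^ 2))) (fun x hx => by
      have b1 := abs_le.mp (hF x (hi' hx))
      have b2 := abs_le.mp hc
      have b3 : (f x - c) ^ 2 ≤ (2 * F) ^ 2 := sq_le_sq' (by linarith) (by linarith)
      have b4 := sq_nonneg ((u ((i : ℝ) * (1 / n)) - f x) - (f x - c))
      nlinarith)
  rw [intervalIntegral.integral_add (hci.const_mul 2) intervalIntegrable_const,
    intervalIntegral.integral_const_mul, intervalIntegral.integral_const,
    intervalIntegral.integral_const, hlen, smul_eq_mul, smul_eq_mul] at hfin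
  have h3 : 1 / (n : ℝ) * (8 * F ^ 2) ≤ 8 * F ^ 2 := by
    refine mul_le_of_le_one_left (by positivity) ?_
    rw [div_le_one hn0]
    exact_mod_cast (by omega : 1 ≤ n)
  have h4 : 1 / (n : ℝ) * (u ((i : ℝ) * (1 / n)) - c) ^ 2 ≤ 10 * F ^ 2 := by linarith
  have h5 := mul_le_mul_of_nonneg_left h4 hn0.le
  rw [← mul_assoc, mul_one_div_cancel hn0.ne', one_mul] at h5
  linarith

/-- The rescaled minimizers grow at most polynomially in `n`, which makes the cost of gluing them to
a bounded function bounded, because the cost is logarithmic. -/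
lemma poly_blow {n : ℕ} (hn : 2 ≤ n) {T F s : ℝ} {y : ℝ} (hbig : 2 * T ^ 2 + 20 * F ^ 2 + 1 ≤ n)
    (hy : y ^ 2 ≤ 10 * F ^ 2 * n) (hs : |s| ≤ T) :
    jcost (dlt n) (Real.log n) (s - y / omg n) ≤ 4 := by
  have hn0 : (0 : ℝ) < n := by positivity
  have hn1 : (1 : ℝ) ≤ n := by exact_mod_cast (by omega : 1 ≤ n)
  have hω := omg_pos hn
  have hω1 := omg_le_one hn
  have hl := log_pos_of_two_le hn
  unfold jcost
  rw [div_le_iff₀ hl]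
  have e4 : 4 * Real.log n = Real.log ((n : ℝ) ^ 4) := by rw [Real.log_pow]; norm_num
  rw [e4]
  refine Real.log_le_log (by positivity) ?_
  have e : (s - y / omg n) / dlt n = n * (s * omg n - y) := by rw [dlt]; field_simp
  rw [e]
  have h1 : (s * omg n) ^ 2 ≤ T ^ 2 := by
    have hT : 0 ≤ T := (abs_nonneg s).trans hs
    rw [← sq_abs, abs_mul, abs_of_pos hω]
    have : |s| * omg n ≤ T := by nlinarith [abs_nonneg s]
    gcongr
  have h2 : (s * omg n - y) ^ 2 ≤ 2 * T ^ 2 + 20 * F ^ 2 * n := by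
    nlinarith [sq_nonneg (s * omg n + y)]
  have h3 : 2 * T ^ 2 + 20 * F ^ 2 * n ≤ (n - 1) * n := by
    nlinarith [mul_le_mul_of_nonneg_left hn1 (sq_nonneg T), mul_le_mul_of_nonneg_right hbig hn0.le]
  have h4 : (n : ℝ) ^ 2 * (s * omg n - y) ^ 2 ≤ (n : ℝ) ^ 2 * ((n - 1) * n) :=
    mul_le_mul_of_nonneg_left (h2.trans h3) (by positivity)
  have h5 : (1 : ℝ) ≤ (n : ℝ) ^ 3 := one_le_pow₀ hn1
  rw [mul_pow]
  have e6 : (n : ℝ) ^ 2 * ((n - 1) * n) = (n : ℝ) ^ 4 - (n : ℝ) ^ 3 := by ring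
  linarith

/-- The blow-ups of the minimizers satisfy all the properties collected in `BlowUp`. -/
lemma blowUp_minimizers {β : ℝ} (hβ : 0 < β) {f f' : ℝ → ℝ}
    (hder : ∀ x ∈ Icc (0 : ℝ) 1, HasDerivAt f (f' x) x)
    (hcont : ContinuousOn f' (Icc (0 : ℝ) 1))
    {u : ℕ → ℝ → ℝ} (hu : ∀ n, 2 ≤ n → IsMinimizer n β f (u n))
    {k : ℕ → ℕ} (hk : ∀ n, 2 ≤ n → k n < n) {x₀ : ℝ} (hx₀ : x₀ ∈ Ioo (0 : ℝ) 1)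
    (hx : Tendsto (fun n => (k n : ℝ) / n) atTop (nhds x₀)) :
    BlowUp β (f' x₀) dlt (fun n => Real.log n)
      (fun n => blowM n (k n) (f ((k n : ℝ) / n)) f)
      (fun n => blowW n (k n) (f ((k n : ℝ) / n)) (u n)) := by
  have hf : ContinuousOn f (Icc 0 1) := fun x hx => (hder x hx).continuousAt.continuousWithinAt
  obtain ⟨F, hF⟩ := isCompact_Icc.exists_bound_of_continuousOn hf
  refine ⟨hβ, (eventually_ge_atTop 2).mono fun n hn => dlt_pos hn, tendsto_dlt, tendsto_log_nat,
    dlt_ratio, sqrt_dlt_lim, near_blow hder hcont hx₀ hx, fun R T => ?_, fun R => ?_⟩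
  · filter_upwards [eventually_ge_atTop 2, window_interior hx₀ hx R,
      tendsto_natCast_atTop_atTop (R := ℝ) |>.eventually_ge_atTop (2 * T ^ 2 + 20 * F ^ 2 + 1)]
      with n hn hwin hbig l hl t ht
    obtain ⟨g1, g2⟩ := hwin l hl
    obtain ⟨i, hi⟩ := Int.eq_ofNat_of_zero_le (by omega : 0 ≤ (k n : ℤ) + l)
    have hi' : (k n : ℝ) + l = i := by exact_mod_cast hi
    have hn0 : (0 : ℝ) < n := by positivity
    have hkn : (k n : ℝ) ≤ n := by exact_mod_cast (hk n hn).le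
    have hc : |f ((k n : ℝ) / n)| ≤ F :=
      hF _ ⟨by positivity, by rw [div_le_one hn0]; exact hkn⟩
    have hcr := crude_bound hn hβ hf (hu n hn) hF (by omega : i < n) hc
    unfold blowW
    rw [hi']
    exact poly_blow hn hbig hcr ht
  · filter_upwards [eventually_ge_atTop 2, window_interior hx₀ hx R] with n hn hwin
    exact locMin_blow hn hf (hu n hn) (hk n hn) _ hwin

/-- The functions `v_n` of the statement are the step functions built on the rescaled values. -/
lemma gridFun_blowW {n : ℕ} (hn : 2 ≤ n) {u : ℝ → ℝ} (hu : IsPC (1 / (n : ℝ)) u) (k : ℕ)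
    (c y : ℝ) : gridFun (dlt n) (blowW n k c u) y =
      (u ((k : ℝ) / n + omg n * y) - u ((k : ℝ) / n)) / omg n := by
  have hn0 : (0 : ℝ) < n := by positivity
  have hω := omg_pos hn
  obtain ⟨z, hz⟩ : ∃ z : ℤ, z = ⌊y / dlt n⌋ := ⟨_, rfl⟩
  have hyd : y / dlt n = y * omg n * n := by rw [dlt]; field_simp
  have h1 : (z : ℝ) ≤ y * omg n * n := by rw [hz, ← hyd]; exact Int.floor_le _
  have h2 : y * omg n * n < z + 1 := by rw [hz, ← hyd]; exact Int.lt_floor_add_one _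
  have h3 := hu (k + z) ((k : ℝ) / n + omg n * y) (by
    push_cast
    rw [mul_one_div, mul_one_div]
    constructor
    · rw [div_le_iff₀ hn0, add_mul, div_mul_cancel₀ _ hn0.ne']
      linarith
    · rw [lt_div_iff₀ hn0, add_mul, div_mul_cancel₀ _ hn0.ne']
      linarith)
  push_cast at h3
  unfold gridFun blowW
  rw [← hz, h3, Int.cast_zero, add_zero, mul_one_div (k : ℝ)]
  field_simp
  ring

lemma LocStrictBV.congr {g g' : ℕ → ℝ → ℝ} {w : ℝ → ℝ} (h : LocStrictBV g w)
    (he : ∀ᶠ n in atTop, g n = g' n) : LocStrictBV g' w := by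
  intro a b hab ha hb
  obtain ⟨h1, h2⟩ := h a b hab ha hb
  exact ⟨h1.congr' (he.mono fun n hn => by rw [hn]), h2.congr' (he.mono fun n hn => by rw [hn])⟩

/-- Blow-ups `v_n(y) = (u_n(x_n + ω(n)y) − u_n(x_n))/ω(n)` of minimizers
around points `x_n = k_n/n → x_∞ ∈ (0,1)` are relatively compact with respect to locally
strict convergence, and every limit point is a graph translation of horizontal type of the
canonical `(H,V)`-staircase with `H = (1/(β|f'(x_∞)|²))^{1/3}`, `V = f'(x_∞)H`. -/
theorem blowup_compactness_horizontal
    (β : ℝ) (hβ : 0 < β) (f f' : ℝ → ℝ)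
    (hder : ∀ x ∈ Set.Icc (0 : ℝ) 1, HasDerivAt f (f' x) x)
    (hcont : ContinuousOn f' (Set.Icc (0 : ℝ) 1))
    (u : ℕ → ℝ → ℝ) (hu : ∀ n, 2 ≤ n → IsMinimizer n β f (u n))
    (k : ℕ → ℕ) (hk : ∀ n, 2 ≤ n → k n < n)
    (xs : ℕ → ℝ) (hxs : ∀ n, xs n = (k n : ℝ) / (n : ℝ))
    (xinf : ℝ) (hxinf : xinf ∈ Set.Ioo (0 : ℝ) 1)
    (hx : Tendsto xs atTop (nhds xinf))
    (v : ℕ → ℝ → ℝ)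
    (hv : ∀ n y, v n y = (u n (xs n + omg n * y) - u n (xs n)) / omg n)
    (H V : ℝ)
    (hH : H = (1 / (β * |f' xinf| ^ 2)) ^ ((1 : ℝ) / 3))
    (hV : V = f' xinf * H) :
    ∀ nk : ℕ → ℕ, Tendsto nk atTop atTop →
      ∃ φ : ℕ → ℕ, StrictMono φ ∧ ∃ vinf : ℝ → ℝ, Orz H V vinf ∧
        LocStrictBV (fun h => v (nk (φ h))) vinf := by
  intro nk hnk
  have hx' : Tendsto (fun n => (k n : ℝ) / n) atTop (nhds xinf) := hx.congr hxs
  have hB := (blowUp_minimizers hβ hder hcont hu hk hxinf hx').comp hnk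
  have hgrid : ∀ n, 2 ≤ n →
      gridFun (dlt n) (blowW n (k n) (f ((k n : ℝ) / n)) (u n)) = v n := by
    intro n hn
    funext y
    rw [gridFun_blowW hn (hu n hn).1, hv, hxs]
  obtain ⟨M, hM⟩ : ∃ M, M = f' xinf := ⟨_, rfl⟩
  rw [← hM] at hH hV hB
  by_cases hM0 : M = 0
  · rw [hM0] at hB hV
    refine ⟨id, strictMono_id, fun _ => 0, ⟨0, by simp, fun x => ?_⟩, ?_⟩
    · rw [canStair, hV]; ring
    · refine hB.flat_locStrict.congr ?_
      filter_upwards [hnk.eventually_ge_atTop 2] with n hn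
      exact hgrid _ hn
  · have hH0 : 0 < H := by rw [hH]; positivity
    have hH3 : H ^ 3 = 1 / (β * M ^ 2) := by
      rw [hH, ← Real.rpow_natCast, ← Real.rpow_mul (by positivity), sq_abs]
      norm_num
    have hℓ : 0 < 2 * H := by linarith
    have hℓ3 : β * M ^ 2 * (2 * H) ^ 3 = 8 := by
      rw [mul_pow, hH3]; field_simp; norm_num
    obtain ⟨φ, hφ, p0, hp0, hfj⟩ := hB.exists_firstJump hM0 hℓ hℓ3
    refine ⟨φ, hφ, fun x => M * stepFun (2 * H) p0 x, ⟨p0 / H - 1, ?_, fun x => ?_⟩, ?_⟩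
    · have h1 : 0 ≤ p0 / H := div_nonneg hp0.1 hH0.le
      have h2 : p0 / H ≤ 2 := by rw [div_le_iff₀ hH0]; exact hp0.2
      constructor <;> linarith
    · have e : ((x - H * (p0 / H - 1)) / H + 1) / 2 = (x - p0) / (2 * H) + 1 := by
        field_simp; ring
      simp only [canStair, stairS, stepFun]
      rw [e, Int.floor_add_one, hV]
      push_cast
      ring
    · have hB' := hB.comp hφ.tendsto_atTop
      refine (hB'.locStrict hM0 hℓ hℓ3 hfj).congr ?_
      filter_upwards [(hnk.comp hφ.tendsto_atTop).eventually_ge_atTop 2] with n hn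
      exact hgrid _ hn

end PeronaMalik
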